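/- arXiv:2203.03848 — 3 statements merged into one kernel-verified Lean document; each statement's English description precedes it below -/
import Mathlib

section
/- Let k be a field with char(k) ≠ 2 and let m ≥ 1. Let K be the fraction field of the polynomial ring k[x₁,…,x_m]. For every anisotropic quadratic form f on a finite-dimensional k-vector space, the quadratic form f_K ⊗ ⟨1,-x₁⟩ ⊗ ⟨1,-x₂⟩ ⊗ ⋯ ⊗ ⟨1,-x_m⟩ over K (the product of the base change f_K with the m-fold Pfister form ⟨⟨x₁,…,x_m⟩⟩) is anisotropic over K. -/
/-!
STATEMENT 1: Let `k` be a field with `char k ≠ 2` and `m ≥ 1`.  Let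
`K = Frac(k[x₁,…,x_m])`.  For every anisotropic quadratic form `f` over `k` on a
finite-dimensional vector space, the form `f_K ⊗ ⟨1,-x₁⟩ ⊗ ⋯ ⊗ ⟨1,-x_m⟩` (the product of
`f_K` with the m-fold Pfister form `⟨⟨x₁,…,x_m⟩⟩`) is anisotropic over `K`.

The `m`-fold Pfister form `⟨1,-x₁⟩ ⊗ ⋯ ⊗ ⟨1,-x_m⟩` is formalized, via its standard
diagonalization, as the diagonal quadratic form of dimension `2^m` indexed by subsets
`S : Fin m → Bool` whose `S`-th entry is `∏_{i ∈ S} (-xᵢ)`.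
-/

open scoped TensorProduct

/-- In any field extension of a field in which `2 ≠ 0`, we have `2 ≠ 0`. -/
theorem two_ne_zero_extension {k K : Type*} [Field k] [Field K] [Algebra k K]
    (h2 : (2 : k) ≠ 0) : (2 : K) ≠ 0 := fun hK =>
  h2 <| (algebraMap k K).injective <| by rw [map_ofNat, map_zero, hK]

/-- The base change of a quadratic form along a field extension, in the presence of the
hypothesis `2 ≠ 0` (char ≠ 2) rather than an `Invertible (2 : k)` instance. -/
noncomputable def qfBaseChange {k : Type*} (K : Type*) [Field k] [Field K] [Algebra k K]
    {V : Type*} [AddCommGroup V] [Module k V] (h2 : (2 : k) ≠ 0)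
    (f : QuadraticForm k V) : QuadraticForm K (K ⊗[k] V) :=
  letI : Invertible (2 : k) := invertibleOfNonzero h2
  QuadraticForm.baseChange K f

/-- The tensor product of two quadratic forms over a field `K` with `2 ≠ 0` (char ≠ 2);
it satisfies `(Q₁ ⊗ Q₂)(v ⊗ w) = Q₁ v · Q₂ w`. -/
noncomputable def qfTensor {K : Type*} [Field K] {V W : Type*} [AddCommGroup V] [Module K V]
    [AddCommGroup W] [Module K W] (h2 : (2 : K) ≠ 0)
    (Q₁ : QuadraticForm K V) (Q₂ : QuadraticForm K W) : QuadraticForm K (V ⊗[K] W) :=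
  letI : Invertible (2 : K) := invertibleOfNonzero h2
  Q₁.tmul Q₂

/-!
Fix a monomial order on `A = k[x₁, …, x_m]`. If `u ∈ A ⊗ V` is nonzero with leading term
`x^d ⊗ v`, then `f_A(u)` has leading term `f(v) x^(2d)`, since `f(v) ≠ 0` by anisotropy. A vector
of the tensor product with the Pfister form is a family `(u_S)`, and its value is
`∑_S ±x^S f_A(u_S)`. The nonzero summands have degrees `S + 2d_S`, which are pairwise distinct
because `S` is the reduction of the degree modulo 2; hence they cannot cancel. A common
denominator reduces the case of `K ⊗ V` to that of `A ⊗ V`.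
-/

open QuadraticMap (associated weightedSumSquares)

section PfisterForm

variable {ι R : Type*} [Fintype ι] [CommRing R]

/-- The diagonal entry `∏_{i ∈ S} (-xᵢ)` of the Pfister form `⟨⟨x₁, …, x_m⟩⟩`, the subset `S` being
encoded by its indicator function. -/
def pfisterCoeff (x : ι → R) (S : ι → Bool) : R := ∏ i, if S i then -x i else 1

/-- The Pfister form `⟨⟨x₁, …, x_m⟩⟩`, diagonalized in the basis indexed by the subsets of `ι`. -/
def pfisterForm [DecidableEq ι] (x : ι → R) : QuadraticForm R ((ι → Bool) → R) :=
  weightedSumSquares R (pfisterCoeff x)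

theorem map_pfisterCoeff {R' : Type*} [CommRing R'] (φ : R →+* R') (x : ι → R) (S : ι → Bool) :
    φ (pfisterCoeff x S) = pfisterCoeff (fun i ↦ φ (x i)) S := by
  simp only [pfisterCoeff, map_prod, apply_ite φ, map_neg, map_one]

end PfisterForm

section TensorProduct

open TensorProduct

variable {R M : Type*} [CommRing R] [AddCommGroup M] [Module R M]

theorem isLocalizedModule_rTensor_algebraMap {A B : Type*} [CommRing A] [CommRing B] [Algebra R A]
    [Algebra R B] [Algebra A B] [IsScalarTower R A B] (S : Submonoid A) [IsLocalization S B] :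
    IsLocalizedModule S (AlgebraTensorModule.rTensor R M (Algebra.linearMap A B)) := by
  rw [isLocalizedModule_iff_isBaseChange S B]
  refine IsBaseChange.of_comp (TensorProduct.isBaseChange R M A) ?_
  convert TensorProduct.isBaseChange R M B
  ext
  simp

variable [Invertible (2 : R)] (Q : QuadraticForm R M)

theorem tmul_weightedSumSquares_apply {ι : Type*} [Fintype ι] [DecidableEq ι] (c : ι → R)
    (z : M ⊗[R] (ι → R)) :
    QuadraticForm.tmul (R := R) (A := R) Q (weightedSumSquares R c) z =
      ∑ i, c i * Q (piScalarRight R R M ι z i) := by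
  have weightedSumSquares_eq_pi :
      weightedSumSquares R c = QuadraticMap.pi fun i ↦ c i • QuadraticMap.sq := by
    ext x
    simp
  suffices h : QuadraticForm.tmul (R := R) (A := R) Q (weightedSumSquares R c) =
      (QuadraticMap.pi fun i ↦ c i • Q).comp (piScalarRight R R M ι).toLinearMap by
    simp [h, QuadraticMap.pi_apply]
  apply (QuadraticMap.associated_rightInverse R).injective
  rw [QuadraticForm.associated_tmul, QuadraticMap.associated_comp, QuadraticMap.Ring.associated_pi,
    weightedSumSquares_eq_pi, QuadraticMap.Ring.associated_pi]
  ext x i y j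
  have summand_eq (l : ι) : c l * associated (R := R) Q (if l = i then x else 0)
      (if l = j then y else 0) =
        if l = i then if i = j then c i * associated (R := R) Q x y else 0 else 0 := by
    split_ifs <;> simp_all
  simp +contextual [LinearMap.BilinForm.tmul, Pi.single_apply, summand_eq, eq_comm (a := j)]

theorem baseChange_sum_tmul {ι A : Type*} [CommRing A] [Algebra R A] (s : Finset ι) (t : ι → A)
    (v : ι → M) :
    QuadraticForm.baseChange A Q (∑ i ∈ s, t i ⊗ₜ v i) =
      ∑ i ∈ s, ∑ j ∈ s, associated (R := R) Q (v i) (v j) • (t i * t j) := by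
  let : Invertible (2 : A) := (Invertible.map (algebraMap R A) 2).copy 2 (map_ofNat _ _).symm
  rw [← QuadraticMap.associated_eq_self_apply A, QuadraticForm.associated_baseChange]
  simp only [map_sum, LinearMap.sum_apply, LinearMap.BilinForm.baseChange_tmul]
  rw [Finset.sum_comm]

theorem baseChange_rTensor_algebraMap {A B : Type*} [CommRing A] [CommRing B] [Algebra R A]
    [Algebra R B] [Algebra A B] [IsScalarTower R A B] (u : A ⊗[R] M) :
    QuadraticForm.baseChange B Q (AlgebraTensorModule.rTensor R M (Algebra.linearMap A B) u) =
      algebraMap A B (QuadraticForm.baseChange A Q u) := by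
  suffices h : ((QuadraticForm.baseChange B Q).restrictScalars (S := A)).comp
      (AlgebraTensorModule.rTensor R M (Algebra.linearMap A B)) =
      (Algebra.linearMap A B).compQuadraticMap (QuadraticForm.baseChange A Q) from
    DFunLike.congr_fun h u
  refine baseChange_ext fun x ↦ ?_
  simp [Algebra.algebraMap_eq_smul_one]

theorem eq_zero_of_sum_mul_baseChange_fractionRing_eq_zero {ι A K : Type*} [Fintype ι] [CommRing A]
    [CommRing K] [Algebra R A] [Algebra R K] [Algebra A K] [IsScalarTower R A K]
    [IsFractionRing A K] {c : ι → A}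
    (hc : ∀ u : ι → A ⊗[R] M, ∑ i, c i * QuadraticForm.baseChange A Q (u i) = 0 → u = 0)
    {w : ι → K ⊗[R] M}
    (hw : ∑ i, algebraMap A K (c i) * QuadraticForm.baseChange K Q (w i) = 0) : w = 0 := by
  let φ : A ⊗[R] M →ₗ[A] K ⊗[R] M := AlgebraTensorModule.rTensor R M (Algebra.linearMap A K)
  have : IsLocalizedModule (nonZeroDivisors A) φ := isLocalizedModule_rTensor_algebraMap _
  obtain ⟨b, hb⟩ := IsLocalizedModule.exist_integer_multiples_of_finite (nonZeroDivisors A) φ w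
  choose u hu using hb
  have algebraMap_baseChange (i : ι) : algebraMap A K (QuadraticForm.baseChange A Q (u i)) =
      algebraMap A K (b * b) * QuadraticForm.baseChange K Q (w i) := by
    rw [← baseChange_rTensor_algebraMap, ← Algebra.smul_def, ← QuadraticMap.map_smul_of_tower]
    exact congrArg _ (hu i)
  have hu_zero : u = 0 := by
    refine hc u (IsFractionRing.injective A K ?_)
    simp only [map_sum, map_mul _ (c _), algebraMap_baseChange,
      mul_left_comm _ (algebraMap A K (b * b)), ← Finset.mul_sum, hw, mul_zero, map_zero]
  funext i
  have hbw : algebraMap A K b • w i = 0 := by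
    rw [algebraMap_smul, ← hu i, hu_zero, Pi.zero_apply, map_zero]
  exact (IsLocalization.map_units K b).smul_eq_zero.1 hbw

end TensorProduct

section Degree

open MvPolynomial

theorem nonempty_monomialOrder.{u} (σ : Type u) [Finite σ] : Nonempty (MonomialOrder.{u, u} σ) := by
  classical
  let : LinearOrder σ := linearOrderOfSTO WellOrderingRel
  exact ⟨MonomialOrder.lex⟩

variable {σ R : Type*} (m : MonomialOrder σ)

theorem eq_zero_of_sum_eq_zero_of_injOn_degree [CommSemiring R] {ι : Type*} {s : Finset ι}
    {p : ι → MvPolynomial σ R} (hinj : Set.InjOn (fun i ↦ m.degree (p i)) {i ∈ s | p i ≠ 0})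
    (hsum : ∑ i ∈ s, p i = 0) : ∀ i ∈ s, p i = 0 := by
  classical
  by_contra! ⟨i, hi, hpi⟩
  obtain ⟨j, hj, hmax⟩ := {i ∈ s | p i ≠ 0}.exists_max_image (fun i ↦ m.toSyn (m.degree (p i)))
    ⟨i, Finset.mem_filter.2 ⟨hi, hpi⟩⟩
  obtain ⟨hjs, hpj⟩ := Finset.mem_filter.1 hj
  have coeff_eq_zero : ∀ l ∈ s, l ≠ j → coeff (m.degree (p j)) (p l) = 0 := by
    intro l hl hlj
    by_cases hpl : p l = 0
    · rw [hpl, coeff_zero]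
    · refine m.coeff_eq_zero_of_lt (lt_of_le_of_ne (hmax l (Finset.mem_filter.2 ⟨hl, hpl⟩)) ?_)
      exact fun h ↦ hlj (hinj ⟨hl, hpl⟩ ⟨hjs, hpj⟩ (m.toSyn.injective h))
  apply m.leadingCoeff_ne_zero_iff.2 hpj
  rw [MonomialOrder.leadingCoeff, ← Finset.sum_eq_single_of_mem j hjs coeff_eq_zero, ← coeff_sum,
    hsum, coeff_zero]

theorem degree_pfisterCoeff_X_apply [CommRing R] [IsDomain R] [Fintype σ] (S : σ → Bool) (i : σ) :
    m.degree (pfisterCoeff (X : σ → MvPolynomial σ R) S) i = if S i then 1 else 0 := by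
  classical
  have degree_factor (j : σ) : m.degree (if S j then -X j else 1 : MvPolynomial σ R) i =
      if i = j then if S j then 1 else 0 else 0 := by
    by_cases hij : i = j <;> by_cases hj : S j <;> simp [m.degree_neg, m.degree_X, hij, hj]
  rw [pfisterCoeff, m.degree_prod fun j _ ↦ by split_ifs <;> simp, Finsupp.finsetSum_apply]
  simp only [degree_factor, Finset.sum_ite_eq, Finset.mem_univ, if_true]

section LeadingTerm

variable {M : Type*} [CommRing R] [Invertible (2 : R)] [AddCommGroup M] [Module R M]
  (Q : QuadraticForm R M)

theorem coeff_baseChange_sum_monomial [DecidableEq σ] (v : (σ →₀ ℕ) →₀ M) (e : σ →₀ ℕ) :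
    coeff e (QuadraticForm.baseChange (MvPolynomial σ R) Q (v.sum fun a x ↦ monomial a 1 ⊗ₜ x)) =
      ∑ a ∈ v.support, ∑ b ∈ v.support,
        if a + b = e then associated (R := R) Q (v a) (v b) else 0 := by
  simp [Finsupp.sum, baseChange_sum_tmul, coeff_sum, coeff_monomial]

variable {v : (σ →₀ ℕ) →₀ M} {d : σ →₀ ℕ}

theorem coeff_add_self_baseChange_sum_monomial (hd : ∀ a ∈ v.support, m.toSyn a ≤ m.toSyn d) :
    coeff (d + d) (QuadraticForm.baseChange (MvPolynomial σ R) Q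
      (v.sum fun a x ↦ monomial a 1 ⊗ₜ x)) = Q (v d) := by
  classical
  have add_eq_iff : ∀ a ∈ v.support, ∀ b ∈ v.support, a + b = d + d ↔ a = d ∧ b = d := by
    intro a ha b hb
    simpa only [← map_add, m.toSyn.injective.eq_iff] using
      add_eq_add_iff_eq_and_eq (hd a ha) (hd b hb)
  rw [coeff_baseChange_sum_monomial, Finset.sum_congr rfl fun a ha ↦ Finset.sum_congr rfl
    fun b hb ↦ if_congr (add_eq_iff a ha b hb) rfl rfl]
  by_cases hvd : v d = 0 <;> simp [ite_and, hvd, QuadraticMap.associated_eq_self_apply]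

theorem degree_baseChange_sum_monomial_le (hd : ∀ a ∈ v.support, m.toSyn a ≤ m.toSyn d) :
    m.toSyn (m.degree (QuadraticForm.baseChange (MvPolynomial σ R) Q
      (v.sum fun a x ↦ monomial a 1 ⊗ₜ x))) ≤ m.toSyn (d + d) := by
  classical
  refine m.degree_le_iff.2 fun e he ↦ ?_
  rw [mem_support_iff, coeff_baseChange_sum_monomial] at he
  obtain ⟨a, ha, hae⟩ := Finset.exists_ne_zero_of_sum_ne_zero he
  obtain ⟨b, hb, habe⟩ := Finset.exists_ne_zero_of_sum_ne_zero hae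
  obtain rfl : a + b = e := (ite_ne_right_iff.1 habe).1
  simpa only [map_add] using add_le_add (hd a ha) (hd b hb)

variable {Q}

theorem baseChange_mvPolynomial_ne_zero_and_even_degree (hQ : Q.Anisotropic)
    {u : MvPolynomial σ R ⊗[R] M} (hu : u ≠ 0) :
    QuadraticForm.baseChange (MvPolynomial σ R) Q u ≠ 0 ∧
      Even (m.degree (QuadraticForm.baseChange (MvPolynomial σ R) Q u)) := by
  classical
  obtain ⟨v, rfl⟩ := (TensorProduct.equivFinsuppOfBasisLeft (basisMonomials σ R)).symm.surjective u
  have hv : v ≠ 0 := by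
    rintro rfl
    exact hu (map_zero _)
  obtain ⟨d, hdv, hd⟩ := v.support.exists_max_image m.toSyn (Finsupp.support_nonempty_iff.2 hv)
  simp only [TensorProduct.equivFinsuppOfBasisLeft_symm_apply, coe_basisMonomials]
  have coeff_ne_zero := (coeff_add_self_baseChange_sum_monomial m Q hd).trans_ne
    fun h ↦ Finsupp.mem_support_iff.1 hdv (hQ _ h)
  refine ⟨ne_zero_iff.2 ⟨_, coeff_ne_zero⟩, d, m.toSyn.injective (le_antisymm ?_ ?_)⟩
  · exact degree_baseChange_sum_monomial_le m Q hd
  · exact m.le_degree (mem_support_iff.2 coeff_ne_zero)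

theorem degree_pfisterCoeff_mul_baseChange_mod_two [IsDomain R] [Fintype σ] (hQ : Q.Anisotropic)
    {S : σ → Bool} {u : MvPolynomial σ R ⊗[R] M}
    (hSu : pfisterCoeff X S * QuadraticForm.baseChange (MvPolynomial σ R) Q u ≠ 0) (i : σ) :
    m.degree (pfisterCoeff X S * QuadraticForm.baseChange (MvPolynomial σ R) Q u) i % 2 =
      if S i then 1 else 0 := by
  have hu : u ≠ 0 := fun h ↦ hSu (by rw [h, QuadraticMap.map_zero, mul_zero])
  obtain ⟨d, hd⟩ := (baseChange_mvPolynomial_ne_zero_and_even_degree m hQ hu).2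
  rw [m.degree_mul' hSu, hd, Finsupp.add_apply, degree_pfisterCoeff_X_apply, Finsupp.add_apply]
  split_ifs <;> lia

theorem eq_zero_of_sum_pfisterCoeff_mul_baseChange_eq_zero [IsDomain R] [Fintype σ] [DecidableEq σ]
    (hQ : Q.Anisotropic) {u : (σ → Bool) → MvPolynomial σ R ⊗[R] M}
    (hu : ∑ S, pfisterCoeff X S * QuadraticForm.baseChange (MvPolynomial σ R) Q (u S) = 0) :
    u = 0 := by
  obtain ⟨m⟩ := nonempty_monomialOrder σ
  let p : (σ → Bool) → MvPolynomial σ R := fun S ↦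
    pfisterCoeff X S * QuadraticForm.baseChange (MvPolynomial σ R) Q (u S)
  have degree_injOn : Set.InjOn (fun S ↦ m.degree (p S)) {S | S ∈ Finset.univ ∧ p S ≠ 0} := by
    rintro S ⟨-, hS⟩ T ⟨-, hT⟩ hST
    funext i
    have hi : (if S i then 1 else 0) = if T i then 1 else 0 := by
      rw [← degree_pfisterCoeff_mul_baseChange_mod_two m hQ hS i,
        ← degree_pfisterCoeff_mul_baseChange_mod_two m hQ hT i]
      exact congrArg (fun d ↦ d i % 2) hST
    cases hSi : S i <;> cases hTi : T i <;> simp_all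
  funext S
  by_contra huS
  refine mul_ne_zero ?_ (baseChange_mvPolynomial_ne_zero_and_even_degree m hQ huS).1
    (eq_zero_of_sum_eq_zero_of_injOn_degree m degree_injOn hu S (Finset.mem_univ S))
  exact Finset.prod_ne_zero_iff.2 fun i _ ↦ by split_ifs <;> simp

end LeadingTerm

end Degree

theorem statement1_general {k σ K V : Type*} [Field k] (h2 : (2 : k) ≠ 0) [Fintype σ]
    [DecidableEq σ] [Field K] [Algebra k K] [Algebra (MvPolynomial σ k) K]
    [IsScalarTower k (MvPolynomial σ k) K] [IsFractionRing (MvPolynomial σ k) K]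
    [AddCommGroup V] [Module k V] (f : QuadraticForm k V) (hf : f.Anisotropic) :
    (qfTensor (two_ne_zero_extension h2) (qfBaseChange K h2 f)
      (pfisterForm fun i : σ ↦
        algebraMap (MvPolynomial σ k) K (MvPolynomial.X i))).Anisotropic := by
  let : Invertible (2 : k) := invertibleOfNonzero h2
  let : Invertible (2 : K) := invertibleOfNonzero (two_ne_zero_extension h2)
  intro z hz
  apply (TensorProduct.piScalarRight K K (K ⊗[k] V) (σ → Bool)).map_eq_zero_iff.1
  apply eq_zero_of_sum_mul_baseChange_fractionRing_eq_zero f fun _ ↦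
    eq_zero_of_sum_pfisterCoeff_mul_baseChange_eq_zero hf
  simp only [map_pfisterCoeff]
  exact (tmul_weightedSumSquares_apply _ _ z).symm.trans hz

theorem statement1 {k : Type*} [Field k] (h2 : (2 : k) ≠ 0) (m : ℕ) (hm : 1 ≤ m) :
    -- `K = k(x₁, …, x_m)`
    let K := FractionRing (MvPolynomial (Fin m) k)
    let x : Fin m → K := fun i => algebraMap (MvPolynomial (Fin m) k) K (MvPolynomial.X i)
    -- the `m`-fold Pfister form `⟨⟨x₁,…,x_m⟩⟩ = ⟨1,-x₁⟩ ⊗ ⋯ ⊗ ⟨1,-x_m⟩`, written as the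
    -- `2^m`-dimensional diagonal form whose entry at `S : Fin m → Bool` is `∏_{i ∈ S} (-xᵢ)`
    let pfister : QuadraticForm K ((Fin m → Bool) → K) :=
      QuadraticMap.weightedSumSquares K
        (fun S : Fin m → Bool => ∏ i, if S i then -x i else 1)
    -- for every anisotropic form `f` over `k`, `f_K ⊗ ⟨⟨x₁,…,x_m⟩⟩` is anisotropic over `K`
    ∀ (V : Type) [AddCommGroup V] [Module k V] [FiniteDimensional k V]
      (f : QuadraticForm k V), f.Anisotropic →
        (qfTensor (two_ne_zero_extension h2) (qfBaseChange K h2 f) pfister).Anisotropic :=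
  fun _ _ _ _ ↦ statement1_general h2
end

section
/- Let k be a field with char(k) ≠ 2 and let A be a finite-dimensional central simple k-algebra of exponent two which is not split: that is, A ⊗_k A is isomorphic to a matrix algebra over k, but A itself is not isomorphic to any matrix algebra over k. Write dim_k A = d² (so d = deg A, which is necessarily even). Then there exists a field extension k ⊆ K and a K-linear involution τ on A_K = A ⊗_k K (i.e., a K-linear map with τ(xy) = τ(y)τ(x) and τ∘τ = id) which is symplectic — meaning the K-subspace {x ∈ A_K : τ(x) = x} of τ-symmetric elements has dimension d(d-1)/2 — and anisotropic: τ(x)·x = 0 implies x = 0. -/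
/-!
STATEMENT 3: Let `k` be a field with `char k ≠ 2` and let `A` be a finite-dimensional
central simple `k`-algebra of exponent two (`A ⊗[k] A` is a matrix algebra over `k`)
which is not split (`A` is not a matrix algebra over `k`), with `dim_k A = d²`.  Then
there is a field extension `k ⊆ K` and a `K`-linear involution `τ` on `A_K = K ⊗[k] A`
which is symplectic (its space of symmetric elements has dimension `d(d-1)/2`) and
anisotropic (`τ(x)·x = 0 → x = 0`).
-/

open scoped TensorProduct

universe u

/-
Write `A ⊗ A ≃ End V`. By the Skolem–Noether theorem the flip of `A ⊗ A` is conjugation by some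
`g : V → V`, and `g²` is a scalar. Over the algebraic closure `g` is a multiple of the transposition
of `d × d` matrices, so its two eigenspaces have the different dimensions `d (d + 1) / 2` and
`d (d - 1) / 2`; hence its eigenvalues lie in `k`. Write `A ≃ Mₙ(D)` with `D` a division algebra of
degree `e`. The corner of `V` cut out by a diagonal matrix unit is a line over `D` on which the
eigenspace of dimension `d (d - 1) / 2` has dimension `e (e - 1) / 2`. As `A` is not split, `e > 1`
and there is a nonzero vector in it, which provides a symplectic involution `σ` of `D`.

Now let `K = k((Γ))` with `Γ = ℤⁿ` ordered lexicographically, and let `tᵢ` be the monomial whose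
exponent is the `i`-th standard basis vector of `Γ`. The adjoint involution of the Hermitian form
`⟨t₁, …, tₙ⟩` over `(D, σ)_K` is symplectic because `σ` is. It is anisotropic because the values of
the nonzero terms of `∑ tᵢ σ(yᵢ) yᵢ` are pairwise incongruent modulo `2 Γ`, so these terms cannot
cancel.
-/

section Eigenspaces

open Module Polynomial

lemma finrank_eigenspace_eq_of_semiconj {R V W : Type*} [CommRing R] [AddCommGroup V] [Module R V]
    [AddCommGroup W] [Module R W] {f : End R V} {g : End R W} (e : V ≃ₗ[R] W)
    (h : ∀ v, e (f v) = g (e v)) (μ : R) :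
    finrank R (f.eigenspace μ) = finrank R (g.eigenspace μ) := by
  have hmap : (f.eigenspace μ).map (e : V →ₗ[R] W) = g.eigenspace μ := by
    ext w
    obtain ⟨v, rfl⟩ := e.surjective w
    simp [← h, ← map_smul]
  rw [← hmap]
  exact (e.finrank_map_eq _).symm

variable {k L V : Type*} [Field k] [AddCommGroup V] [Module k V]

lemma finrank_eigenspace_baseChange [CommRing L] [Nontrivial L] [Algebra k L] (g : End k V)
    (μ : k) :
    finrank L (End.eigenspace (g.baseChange L) (algebraMap k L μ)) =
      finrank k (g.eigenspace μ) := by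
  have hsub : g.baseChange L - algebraMap k L μ • 1 = (g - μ • 1).baseChange L := by
    ext
    simp
  rw [End.eigenspace_def, hsub, End.eigenspace_def,
    ← finrank_baseChange (R := L) (M' := LinearMap.ker (g - μ • 1))]
  exact (LinearMap.tensorKerEquiv L L (g - μ • 1)).finrank_eq.symm

lemma finrank_eigenspace_eq_rootMultiplicity [FiniteDimensional k V] {g : End k V} {a : k}
    (h2 : (2 : k) ≠ 0) (ha : a ≠ 0) (hg : ∀ v, g (g v) = a • v) (μ : k) :
    finrank k (g.eigenspace μ) = g.charpoly.rootMultiplicity μ := by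
  have hsep : (X ^ 2 - C a : k[X]).Separable := separable_X_pow_sub_C a (mod_cast h2) ha
  have hsemisimple : g.IsSemisimple :=
    End.isSemisimple_of_squarefree_aeval_eq_zero hsep.squarefree
      (by ext v; simp [hg, pow_two])
  rw [← LinearMap.finrank_maxGenEigenspace_eq,
    hsemisimple.isFinitelySemisimple.maxGenEigenspace_eq_eigenspace]

variable [Field L] [Algebra k L]

lemma rootMultiplicity_map_eq_of_isConjRoot [Normal k L] (p : k[X]) {x y : L}
    (h : IsConjRoot k x y) :
    (p.map (algebraMap k L)).rootMultiplicity x = (p.map (algebraMap k L)).rootMultiplicity y := by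
  obtain ⟨s, rfl⟩ := h.exists_algEquiv
  rw [eq_rootMultiplicity_map (f := (s : L →+* L)) s.injective y, map_map]
  congr
  exact (s : L →ₐ[k] L).comp_algebraMap.symm

lemma isConjRoot_neg_of_sq_eq_algebraMap {a : k} {c : L} (hc : c ^ 2 = algebraMap k L a)
    (hnot : c ∉ Set.range (algebraMap k L)) : IsConjRoot k c (-c) := by
  have hirr : Irreducible (X ^ 2 - C a) := by
    rw [X_pow_sub_C_irreducible_iff_of_prime Nat.prime_two]
    rintro b rfl
    rw [map_pow, sq_eq_sq_iff_eq_or_eq_neg] at hc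
    rcases hc with h | h
    · exact hnot ⟨b, h.symm⟩
    · exact hnot ⟨-b, by rw [map_neg, h]⟩
  have hmonic : (X ^ 2 - C a).Monic := monic_X_pow_sub_C a two_ne_zero
  rw [isConjRoot_def, ← minpoly.eq_of_irreducible_of_monic hirr (by simp [hc]) hmonic,
    ← minpoly.eq_of_irreducible_of_monic hirr (by simp [hc]) hmonic]

lemma mem_range_algebraMap_of_finrank_eigenspace_ne [Normal k L] [FiniteDimensional k V]
    {g : End k V} {a : k} {c : L} (h2 : (2 : k) ≠ 0) (ha : a ≠ 0) (hg : ∀ v, g (g v) = a • v)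
    (hc : c ^ 2 = algebraMap k L a)
    (hne : finrank L (End.eigenspace (g.baseChange L) c) ≠
      finrank L (End.eigenspace (g.baseChange L) (-c))) :
    c ∈ Set.range (algebraMap k L) := by
  by_contra hnot
  have hgL (v : L ⊗[k] V) : g.baseChange L (g.baseChange L v) = algebraMap k L a • v := by
    induction v with
    | zero => simp
    | tmul l w => simp [hg]
    | add v w hv hw => rw [map_add, map_add, hv, hw, smul_add]
  have hroot := finrank_eigenspace_eq_rootMultiplicity
    (by simpa only [map_ofNat, map_zero] using (algebraMap k L).injective.ne h2)
    (by simpa using ha) hgL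
  apply hne
  rw [hroot, hroot, LinearMap.charpoly_baseChange]
  exact rootMultiplicity_map_eq_of_isConjRoot _ (isConjRoot_neg_of_sq_eq_algebraMap hc hnot)

end Eigenspaces

section Transpose

open Module

variable {K E ι : Type*} [Field K] [AddCommGroup E] [Module K E]

/-- The transpose of a matrix of vectors, with `γ` applied to every entry. For a scalar or an
involution `γ`, its eigenspaces consist of symmetric, alternating or Hermitian matrices. -/
def transposeMap (ι : Type*) (γ : End K E) : End K (Matrix ι ι E) :=
  (Matrix.transposeLinearEquiv ι ι K E).toLinearMap ∘ₗ LinearMap.mapMatrix γ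

@[simp]
lemma transposeMap_apply (γ : End K E) (X : Matrix ι ι E) (i j : ι) :
    transposeMap ι γ X i j = γ (X j i) := rfl

lemma mem_eigenspace_transposeMap {γ : End K E} {μ : K} {X : Matrix ι ι E} :
    X ∈ (transposeMap ι γ).eigenspace μ ↔ ∀ i j, γ (X j i) = μ • X i j := by
  rw [End.mem_eigenspace_iff, ← Matrix.ext_iff]
  rfl

lemma card_sigma_Ioi (n : ℕ) : Fintype.card ((i : Fin n) × Set.Ioi i) = n.choose 2 := by
  simp [Fin.sum_univ_eq_sum_range (fun i => n - 1 - i) n,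
    Finset.sum_range_reflect (fun i => i) n, Finset.sum_range_id, Nat.choose_two_right]

/-- An eigenvector of `transposeMap` is determined by its entries on and above the diagonal. -/
def eigenspaceTransposeMapEquiv [LinearOrder ι] (γ : End K E) {μ : K} (hμ : μ ≠ 0)
    (hγ : ∀ x, γ (γ x) = μ ^ 2 • x) :
    (transposeMap ι γ).eigenspace μ ≃ₗ[K]
      (ι → γ.eigenspace μ) × ((i : ι) × Set.Ioi i → E) where
  toFun X := (fun i => ⟨X.1 i i, End.mem_eigenspace_iff.2
    (mem_eigenspace_transposeMap.1 X.2 i i)⟩, fun p => X.1 p.1 p.2)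
  map_add' X Y := rfl
  map_smul' c X := rfl
  invFun Y := ⟨Matrix.of fun i j =>
      if h : i < j then Y.2 ⟨i, j, h⟩ else if h : j < i then μ⁻¹ • γ (Y.2 ⟨j, i, h⟩) else Y.1 i,
    by
      refine mem_eigenspace_transposeMap.2 fun i j => ?_
      rcases lt_trichotomy i j with h | rfl | h
      · simp [h, h.not_gt, hγ, pow_two, smul_smul, hμ]
      · simpa using End.mem_eigenspace_iff.1 (Y.1 i).2
      · simp [h, h.not_gt, smul_smul, hμ]⟩
  left_inv X := by
    have hX := mem_eigenspace_transposeMap.1 X.2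
    refine Subtype.ext (Matrix.ext fun i j => ?_)
    rcases lt_trichotomy i j with h | rfl | h
    · simp [h]
    · simp
    · simp [h, h.not_gt, hX, smul_smul, hμ]
  right_inv Y := by
    ext i
    · simp
    · exact dif_pos i.2.2

lemma finrank_eigenspace_transposeMap [FiniteDimensional K E] (n : ℕ) (γ : End K E) {μ : K}
    (hμ : μ ≠ 0) (hγ : ∀ x, γ (γ x) = μ ^ 2 • x) :
    finrank K ((transposeMap (Fin n) γ).eigenspace μ) =
      n * finrank K (γ.eigenspace μ) + n.choose 2 * finrank K E := by
  rw [(eigenspaceTransposeMapEquiv γ hμ hγ).finrank_eq]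
  simp [finrank_prod, finrank_pi_fintype, ← card_sigma_Ioi]

end Transpose

section SwappedActions

open Module TensorProduct

/-- Two commuting actions of an algebra `B` on a space `V`, with an endomorphism `swap` of `V` that
interchanges them and whose square is a nonzero scalar. They arise from an isomorphism
`B ⊗ B ≃ End V`, under which conjugation by `swap` is the flip of `B ⊗ B`, in a form that passes to
the corners of a matrix algebra. -/
structure SwappedActions (k B V : Type*) [Field k] [Ring B] [Algebra k B] [AddCommGroup V]
    [Module k V] where
  left : B →ₐ[k] End k V
  right : B →ₐ[k] End k V
  swap : End k V
  scale : k
  left_right (a b : B) (v : V) : left a (right b v) = right b (left a v)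
  swap_left (a : B) (v : V) : swap (left a v) = right a (swap v)
  swap_swap (v : V) : swap (swap v) = scale • v
  scale_ne_zero : scale ≠ 0

namespace SwappedActions

section Basic

variable {k B B' V : Type*} [Field k] [Ring B] [Algebra k B] [Ring B'] [Algebra k B']
  [AddCommGroup V] [Module k V]

lemma swap_right (S : SwappedActions k B V) (a : B) (v : V) :
    S.swap (S.right a v) = S.left a (S.swap v) := by
  have hv : v = S.scale⁻¹ • S.swap (S.swap v) := by
    rw [S.swap_swap, inv_smul_smul₀ S.scale_ne_zero]
  conv_lhs => rw [hv]
  rw [map_smul, ← S.swap_left, map_smul, S.swap_swap, inv_smul_smul₀ S.scale_ne_zero]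

/-- Pull back the two actions along a homomorphism of algebras. -/
def comp (S : SwappedActions k B V) (f : B' →ₐ[k] B) : SwappedActions k B' V where
  left := S.left.comp f
  right := S.right.comp f
  swap := S.swap
  scale := S.scale
  left_right _ _ := S.left_right _ _
  swap_left _ := S.swap_left _
  swap_swap := S.swap_swap
  scale_ne_zero := S.scale_ne_zero

/-- The action of `L ⊗ B` on `L ⊗ V` extending an action of `B` on `V`. -/
noncomputable def baseChangeAction (L : Type*) [Field L] [Algebra k L] (ρ : B →ₐ[k] End k V) :
    L ⊗[k] B →ₐ[L] End L (L ⊗[k] V) :=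
  (LinearMap.tensorProductEnd k L V).comp (Algebra.TensorProduct.map (AlgHom.id L L) ρ)

@[simp]
lemma baseChangeAction_tmul_tmul {L : Type*} [Field L] [Algebra k L] (ρ : B →ₐ[k] End k V)
    (l m : L) (a : B) (v : V) :
    baseChangeAction L ρ (l ⊗ₜ a) (m ⊗ₜ v) = (l * m) ⊗ₜ ρ a v := by
  change (l • (ρ a).baseChange L) (m ⊗ₜ v) = _
  simp [smul_tmul']

/-- Extension of scalars of both actions and of `swap`. -/
noncomputable def baseChange (S : SwappedActions k B V) (L : Type*) [Field L] [Algebra k L] :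
    SwappedActions L (L ⊗[k] B) (L ⊗[k] V) where
  left := baseChangeAction L S.left
  right := baseChangeAction L S.right
  swap := S.swap.baseChange L
  scale := algebraMap k L S.scale
  left_right a b v := by
    induction a with
    | zero => simp
    | add x y hx hy => simp only [map_add, LinearMap.add_apply, hx, hy]
    | tmul l a =>
      induction b with
      | zero => simp
      | add x y hx hy => simp only [map_add, LinearMap.add_apply, hx, hy]
      | tmul l' b =>
        induction v with
        | zero => simp
        | add x y hx hy => simp only [map_add, hx, hy]
        | tmul m v => simp [S.left_right, mul_left_comm]
  swap_left a v := by
    induction a with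
    | zero => simp
    | add x y hx hy => simp only [map_add, LinearMap.add_apply, hx, hy]
    | tmul l a =>
      induction v with
      | zero => simp
      | add x y hx hy => simp only [map_add, hx, hy]
      | tmul m v => simp [S.swap_left]
  swap_swap v := by
    induction v with
    | zero => simp
    | add x y hx hy => simp only [map_add, smul_add, hx, hy]
    | tmul m v => simp [S.swap_swap]
  scale_ne_zero := by simpa using S.scale_ne_zero

/-- By the Skolem–Noether theorem the flip of `B ⊗ B ≃ End V` is inner. -/
lemma nonempty_of_algEquiv_end [Nontrivial V] (Ψ : B ⊗[k] B ≃ₐ[k] End k V) :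
    Nonempty (SwappedActions k B V) := by
  let flip := Algebra.TensorProduct.comm k B B
  obtain ⟨T, hT⟩ := ((Ψ.symm.trans flip).trans Ψ).eq_linearEquivConjAlgEquiv
  have hswap (x : B ⊗[k] B) (v : V) : T (Ψ x v) = Ψ (flip x) (T v) := by
    simpa [LinearEquiv.conjAlgEquiv_apply] using congr($hT (Ψ x) (T v)).symm
  have hcenter : T.toLinearMap * T.toLinearMap ∈ Subalgebra.center k (End k V) := by
    refine Subalgebra.mem_center_iff.2 fun f => ?_
    obtain ⟨x, rfl⟩ := Ψ.surjective f
    ext v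
    have hflip : flip (flip x) = x := flip.symm_apply_apply x
    simp [hswap, hflip]
  obtain ⟨c, hc⟩ := (Algebra.IsCentral.mem_center_iff k).1 hcenter
  have hTT (v : V) : T (T v) = c • v := by simpa using congr($hc v)
  exact ⟨{
    left := Ψ.toAlgHom.comp Algebra.TensorProduct.includeLeft
    right := Ψ.toAlgHom.comp Algebra.TensorProduct.includeRight
    swap := T
    scale := c
    left_right a b v := by simp [← Module.End.mul_apply, ← map_mul]
    swap_left a v := hswap _ v
    swap_swap := hTT
    scale_ne_zero := by
      rintro rfl
      obtain ⟨v, hv⟩ := exists_ne (0 : V)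
      exact hv (by simpa using hTT v) }⟩

end Basic

section Corner

variable {k B V ι : Type*} [Field k] [Ring B] [Algebra k B] [AddCommGroup V] [Module k V]
  [Fintype ι] [DecidableEq ι] (S : SwappedActions k (Matrix ι ι B) V)

open Matrix

/-- The action on `V` of a pair of elements, the first on the left and the second on the right. -/
def act (a b : Matrix ι ι B) : End k V := S.left a * S.right b

@[simp]
lemma act_zero_left (b : Matrix ι ι B) : S.act 0 b = 0 := by simp [act]

@[simp]
lemma act_zero_right (a : Matrix ι ι B) : S.act a 0 = 0 := by simp [act]

lemma act_act (a b a' b' : Matrix ι ι B) (v : V) :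
    S.act a b (S.act a' b' v) = S.act (a * a') (b * b') v := by
  simp [act, S.left_right]

lemma swap_act (a b : Matrix ι ι B) (v : V) : S.swap (S.act a b v) = S.act b a (S.swap v) := by
  simp [act, S.swap_left, S.swap_right, S.left_right]

/-- The image of `V` under the idempotent `e ⊗ e`, where `e` is the diagonal matrix unit at `z`. -/
def corner (z : ι) : Submodule k V := (S.act (single z z 1) (single z z 1)).eigenspace 1

variable {S} in
lemma mem_corner {z : ι} {v : V} :
    v ∈ S.corner z ↔ S.act (single z z 1) (single z z 1) v = v := by
  rw [corner, End.mem_eigenspace_iff, one_smul]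

lemma act_single_mem_corner (z i j : ι) (a b : B) (v : V) :
    S.act (single z i a) (single z j b) v ∈ S.corner z := by
  simp [mem_corner, act_act]

lemma swap_mem_corner {z : ι} {v : V} (hv : v ∈ S.corner z) : S.swap v ∈ S.corner z := by
  rw [mem_corner, ← swap_act, mem_corner.1 hv]

/-- The actions of `B` on the corner at `z`, which arise from the identification of `B` with the
matrices supported at the diagonal entry `z`. -/
def cornerActions (z : ι) : SwappedActions k B (S.corner z) where
  left := AlgHom.ofLinearMap
    { toFun a := (S.act (single z z a) (single z z 1)).restrict fun _ _ =>
        S.act_single_mem_corner z z z _ _ _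
      map_add' a b := by ext; simp [single_add, act]
      map_smul' c a := by ext; simp [← smul_single, act] }
    (by ext v; exact mem_corner.1 v.2)
    (fun a b => by ext; simp [act_act])
  right := AlgHom.ofLinearMap
    { toFun a := (S.act (single z z 1) (single z z a)).restrict fun _ _ =>
        S.act_single_mem_corner z z z _ _ _
      map_add' a b := by ext; simp [single_add, act]
      map_smul' c a := by ext; simp [← smul_single, act] }
    (by ext v; exact mem_corner.1 v.2)
    (fun a b => by ext; simp [act_act])
  swap := S.swap.restrict fun _ => S.swap_mem_corner
  scale := S.scale
  left_right a b v := by ext; simp [act_act]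
  swap_left a v := by ext; simp [swap_act]
  swap_swap v := by ext; simp [S.swap_swap]
  scale_ne_zero := S.scale_ne_zero

lemma sum_act_single_single (v : V) :
    ∑ i, ∑ j, S.act (single i i 1) (single j j 1) v = v := by
  simp only [act, Module.End.mul_apply, ← map_sum, ← LinearMap.sum_apply, sum_single_one, map_one,
    Module.End.one_apply]

/-- `V` consists of the square matrices with entries in a corner. -/
def cornerEquiv (z : ι) : V ≃ₗ[k] Matrix ι ι (S.corner z) where
  toFun v := Matrix.of fun i j =>
    ⟨S.act (single z i 1) (single z j 1) v, S.act_single_mem_corner z i j _ _ v⟩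
  map_add' v w := by ext; simp
  map_smul' c v := by ext; simp
  invFun X := ∑ i, ∑ j, S.act (single i z 1) (single j z 1) (X i j)
  left_inv v := by simp [act_act, sum_act_single_single]
  right_inv X := by
    ext a b
    have hentry (i j : ι) :
        S.act (single z a 1) (single z b 1) (S.act (single i z 1) (single j z 1) (X i j)) =
          if a = i ∧ b = j then (X i j : V) else 0 := by
      by_cases hi : a = i
      · by_cases hj : b = j
        · simpa [act_act, hi, hj] using mem_corner.1 (X i j).2
        · simp [act_act, hj]
      · simp [act_act, hi]
    simp [hentry, ite_and]

lemma cornerEquiv_swap (z : ι) (v : V) :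
    S.cornerEquiv z (S.swap v) = transposeMap ι (S.cornerActions z).swap (S.cornerEquiv z v) := by
  ext i j
  simp [cornerEquiv, cornerActions, swap_act]

lemma finrank_corner (z : ι) :
    finrank k V = Fintype.card ι ^ 2 * finrank k (S.corner z) := by
  rw [(S.cornerEquiv z).finrank_eq, finrank_matrix]
  ring

end Corner

variable {k B V : Type*} [Field k] [Ring B] [Algebra k B] [AddCommGroup V] [Module k V]

lemma finrank_eigenspace_swap [FiniteDimensional k V] {n : ℕ}
    (S : SwappedActions k (Matrix (Fin n) (Fin n) B) V) (z : Fin n) {μ : k} (hμ : μ ^ 2 = S.scale) :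
    finrank k (S.swap.eigenspace μ) =
      n * finrank k ((S.cornerActions z).swap.eigenspace μ) +
        n.choose 2 * finrank k (S.corner z) := by
  have hμ0 : μ ≠ 0 := by
    rintro rfl
    exact S.scale_ne_zero (by simp [← hμ])
  rw [finrank_eigenspace_eq_of_semiconj (S.cornerEquiv z) (S.cornerEquiv_swap z),
    finrank_eigenspace_transposeMap n _ hμ0]
  rw [hμ]
  exact (S.cornerActions z).swap_swap

end SwappedActions

end SwappedActions

section Simplicity

open TensorProduct

variable (k L A B C : Type*) [Field k] [Ring A] [Algebra k A] [Ring B] [Algebra k B] [Ring C]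
  [Algebra k C] [Field L] [Algebra k L]

/-- A proper ideal `I` of `B` yields the proper ideal `I ⊗ C` of `B ⊗ C`. -/
lemma isSimpleRing_of_tensorProduct_left [IsSimpleRing (B ⊗[k] C)] : IsSimpleRing B := by
  have : Nontrivial B :=
    (Algebra.TensorProduct.includeLeft : B →ₐ[k] B ⊗[k] C).toRingHom.domain_nontrivial
  have : Nontrivial C :=
    (Algebra.TensorProduct.includeRight : C →ₐ[k] B ⊗[k] C).toRingHom.domain_nontrivial
  refine IsSimpleRing.of_eq_bot_or_eq_top fun I => or_iff_not_imp_right.2 fun hI => ?_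
  let π : B →ₐ[k] I.ringCon.Quotient := I.ringCon.mkₐ k
  have hker : TwoSidedIdeal.ker I.ringCon.mk' = I := I.ker_ringCon_mk'
  have : Nontrivial I.ringCon.Quotient := by
    refine nontrivial_of_ne (π 1) 0 fun h => hI (I.one_mem_iff.1 ?_)
    rw [← hker]
    exact (TwoSidedIdeal.mem_ker _).2 h
  have hmap : Function.Injective (Algebra.TensorProduct.map π (AlgHom.id k C)) :=
    RingHom.injective (Algebra.TensorProduct.map π (AlgHom.id k C)).toRingHom
  have hincl : Function.Injective (fun b : B => b ⊗ₜ[k] (1 : C)) :=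
    Algebra.TensorProduct.includeLeft_injective (S := k) (algebraMap k C).injective
  have hπ : Function.Injective π :=
    .of_comp (f := fun b => b ⊗ₜ[k] (1 : C)) (hmap.comp hincl)
  rw [← hker, TwoSidedIdeal.ker_eq_bot]
  exact hπ

variable {k A}

lemma isSimpleRing_baseChange_of_algEquiv_matrix {ι : Type*} [Fintype ι] [DecidableEq ι]
    [Nonempty ι] (ψ : A ⊗[k] A ≃ₐ[k] Matrix ι ι k) : IsSimpleRing (L ⊗[k] A) := by
  let e : (L ⊗[k] A) ⊗[k] A ≃ₐ[k] Matrix ι ι L :=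
    (Algebra.TensorProduct.assoc k k k L A A).trans
      ((Algebra.TensorProduct.congr AlgEquiv.refl ψ).trans (matrixEquivTensor ι k L).symm)
  have : IsSimpleRing ((L ⊗[k] A) ⊗[k] A) := .of_ringEquiv e.symm.toRingEquiv inferInstance
  exact isSimpleRing_of_tensorProduct_left k (L ⊗[k] A) A

end Simplicity

section SwapEigenvalue

open Module TensorProduct

namespace SwappedActions

variable {k A V : Type*} [Field k] [Ring A] [Algebra k A] [AddCommGroup V] [Module k V]

lemma exists_swap_eq_smul (S : SwappedActions k A V) (hV : finrank k V = 1) :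
    ∃ c : k, c ^ 2 = S.scale ∧ S.swap = c • LinearMap.id := by
  obtain ⟨c, hc, -⟩ := S.swap.existsUnique_eq_smul_id_of_finrank_eq_one hV
  have : Nontrivial V := nontrivial_of_finrank_eq_succ hV
  obtain ⟨v, hv⟩ := exists_ne (0 : V)
  refine ⟨c, smul_left_injective k hv ?_, hc⟩
  simpa [hc, smul_smul, pow_two] using S.swap_swap v

lemma exists_finrank_eigenspace_swap_of_matrix [FiniteDimensional k V] {d : ℕ} [NeZero d]
    (S : SwappedActions k (Matrix (Fin d) (Fin d) k) V) (h2 : (2 : k) ≠ 0)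
    (hV : finrank k V = d ^ 2) :
    ∃ c : k, c ^ 2 = S.scale ∧ finrank k (S.swap.eigenspace c) = d + d.choose 2 ∧
      finrank k (S.swap.eigenspace (-c)) = d.choose 2 := by
  have hcorner : finrank k (S.corner 0) = 1 := by
    have h := S.finrank_corner 0
    rw [hV, Fintype.card_fin] at h
    exact Nat.eq_of_mul_eq_mul_left (pow_pos (Nat.pos_of_neZero d) 2) (by rw [← h, mul_one])
  obtain ⟨c, hc, hswap⟩ := (S.cornerActions 0).exists_swap_eq_smul hcorner
  replace hc : c ^ 2 = S.scale := hc
  have hc0 : c ≠ 0 := by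
    rintro rfl
    exact S.scale_ne_zero (by simp [← hc])
  have hneg : c ≠ -c := by
    rw [Ne, eq_neg_iff_add_eq_zero, ← two_mul]
    exact mul_ne_zero h2 hc0
  have mem_eigenspace (μ : k) (v : S.corner 0) :
      v ∈ (S.cornerActions 0).swap.eigenspace μ ↔ c = μ ∨ v = 0 := by
    rw [End.mem_eigenspace_iff, hswap, LinearMap.smul_apply, LinearMap.id_apply, ← sub_eq_zero,
      ← sub_smul, smul_eq_zero, sub_eq_zero]
  have htop : (S.cornerActions 0).swap.eigenspace c = ⊤ := by ext; simp [mem_eigenspace]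
  have hbot : (S.cornerActions 0).swap.eigenspace (-c) = ⊥ := by
    ext
    simp [mem_eigenspace, hneg]
  refine ⟨c, hc, ?_, ?_⟩
  · rw [S.finrank_eigenspace_swap 0 hc, htop, finrank_top, hcorner, mul_one, mul_one]
  · rw [S.finrank_eigenspace_swap 0 (by rw [neg_sq, hc]), hbot, finrank_bot, hcorner, mul_zero,
      mul_one, zero_add]

/-- Over the algebraic closure the two eigenspaces of `swap` have different dimensions. So the
eigenvalues are not conjugate, hence lie in `k`. -/
lemma exists_finrank_eigenspace_swap [FiniteDimensional k A] [FiniteDimensional k V]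
    [IsSimpleRing (AlgebraicClosure k ⊗[k] A)] (S : SwappedActions k A V) (h2 : (2 : k) ≠ 0)
    {d : ℕ} (hA : finrank k A = d ^ 2) (hV : finrank k V = d ^ 2) :
    ∃ μ : k, μ ^ 2 = S.scale ∧ finrank k (S.swap.eigenspace μ) = d.choose 2 := by
  let L := AlgebraicClosure k
  obtain ⟨e, he, ⟨f⟩⟩ := IsSimpleRing.exists_algEquiv_matrix_of_isAlgClosed L (L ⊗[k] A)
  obtain rfl : d = e := by
    have h := f.toLinearEquiv.finrank_eq
    rw [finrank_baseChange, finrank_matrix, hA, finrank_self, mul_one, Fintype.card_fin,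
      ← pow_two] at h
    exact Nat.pow_left_injective two_ne_zero h
  have h2L : (2 : L) ≠ 0 := by
    simpa only [map_ofNat, map_zero] using (algebraMap k L).injective.ne h2
  obtain ⟨c, hc, hpos, hneg⟩ := ((S.baseChange L).comp
    f.symm.toAlgHom).exists_finrank_eigenspace_swap_of_matrix h2L (by rw [finrank_baseChange, hV])
  have hne : d + d.choose 2 ≠ d.choose 2 := by simp [he.ne]
  obtain ⟨b, rfl⟩ := mem_range_algebraMap_of_finrank_eigenspace_ne h2 S.scale_ne_zero S.swap_swap hc
    (by rwa [← hpos, ← hneg] at hne)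
  have hb : b ^ 2 = S.scale := (algebraMap k L).injective (by rw [map_pow]; exact hc)
  refine ⟨-b, by rw [neg_sq, hb], ?_⟩
  rw [← finrank_eigenspace_baseChange (L := L), map_neg, ← hneg]
  rfl

end SwappedActions

end SwapEigenvalue

section Involutions

open Module TensorProduct

variable {K B C : Type*} [Field K] [Ring B] [Algebra K B] [Ring C] [Algebra K C]

/-- Involutions of the first kind: linear anti-automorphisms of order at most two. -/
structure IsInvolution (τ : B →ₗ[K] B) : Prop where
  map_mul (x y : B) : τ (x * y) = τ y * τ x
  apply_apply (x : B) : τ (τ x) = x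

/-- Anisotropy of an involution, stated for an arbitrary linear map. -/
def IsAnisotropic (τ : B →ₗ[K] B) : Prop :=
  ∀ x, τ x * x = 0 → x = 0

namespace IsInvolution

lemma conj {τ : B →ₗ[K] B} (hτ : IsInvolution τ) (e : B ≃ₐ[K] C) :
    IsInvolution (e.toLinearEquiv.conj τ) where
  map_mul x y := by simp [LinearEquiv.conj_apply, hτ.map_mul]
  apply_apply x := by simp [LinearEquiv.conj_apply, hτ.apply_apply]

lemma baseChange {τ : B →ₗ[K] B} (hτ : IsInvolution τ) (L : Type*) [Field L] [Algebra K L] :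
    IsInvolution (τ.baseChange L) where
  map_mul x y := by
    induction x with
    | zero => simp
    | add x x' hx hx' => rw [add_mul, map_add, map_add, mul_add, hx, hx']
    | tmul a b =>
      induction y with
      | zero => simp
      | add y y' hy hy' => rw [mul_add, map_add, map_add, add_mul, hy, hy']
      | tmul a' b' => simp [hτ.map_mul, mul_comm]
  apply_apply x := by
    induction x with
    | zero => simp
    | add x y hx hy => rw [map_add, map_add, hx, hy]
    | tmul a b => simp [hτ.apply_apply]

end IsInvolution

lemma IsAnisotropic.conj {τ : B →ₗ[K] B} (hτ : IsAnisotropic τ) (e : B ≃ₐ[K] C) :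
    IsAnisotropic (e.toLinearEquiv.conj τ) := by
  intro x hx
  refine e.symm.map_eq_zero_iff.1 (hτ _ (e.map_eq_zero_iff.1 ?_))
  simpa [LinearEquiv.conj_apply] using hx

section DiagonalAdjoint

variable {ι : Type*}

/-- The adjoint involution of the diagonal Hermitian form `∑ i, t i • s (y i) * y i`. -/
noncomputable def diagonalAdjoint (t : ι → K) (s : B →ₗ[K] B) :
    Matrix ι ι B →ₗ[K] Matrix ι ι B where
  toFun X := Matrix.of fun i j => ((t i)⁻¹ * t j) • s (X j i)
  map_add' X Y := by ext; simp
  map_smul' c X := by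
    ext
    simp [smul_comm c]

@[simp]
lemma diagonalAdjoint_apply (t : ι → K) (s : B →ₗ[K] B) (X : Matrix ι ι B) (i j : ι) :
    diagonalAdjoint t s X i j = ((t i)⁻¹ * t j) • s (X j i) := rfl

lemma IsInvolution.diagonalAdjoint [Fintype ι] [DecidableEq ι] {s : B →ₗ[K] B}
    (hs : IsInvolution s) {t : ι → K} (ht : ∀ i, t i ≠ 0) : IsInvolution (diagonalAdjoint t s) where
  map_mul X Y := by
    ext i j
    simp only [diagonalAdjoint_apply, Matrix.mul_apply, map_sum, Finset.smul_sum, hs.map_mul,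
      smul_mul_smul_comm]
    refine Finset.sum_congr rfl fun l _ => ?_
    rw [mul_assoc, mul_inv_cancel_left₀ (ht l)]
  apply_apply X := by
    ext i j
    simp only [diagonalAdjoint_apply, map_smul, hs.apply_apply, smul_smul]
    rw [mul_assoc, mul_inv_cancel_left₀ (ht j), inv_mul_cancel₀ (ht i), one_smul]

lemma isAnisotropic_diagonalAdjoint [Fintype ι] [DecidableEq ι] {t : ι → K} {s : B →ₗ[K] B}
    (ht : ∀ i, t i ≠ 0) (h : ∀ y : ι → B, ∑ i, t i • (s (y i) * y i) = 0 → y = 0) :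
    IsAnisotropic (diagonalAdjoint t s) := by
  intro X hX
  have hcol (j : ι) : (fun i => X i j) = 0 := by
    refine h _ ?_
    simpa [Matrix.mul_apply, Finset.smul_sum, smul_smul, ht] using congr(t j • $hX j j)
  ext i j
  exact congrFun (hcol j) i

/-- Scale the rows of a square matrix. -/
def rowScale (t : ι → Kˣ) : Matrix ι ι B ≃ₗ[K] Matrix ι ι B :=
  LinearEquiv.piCongrRight fun i => LinearEquiv.smulOfUnit (t i)

@[simp]
lemma rowScale_apply (t : ι → Kˣ) (X : Matrix ι ι B) (i j : ι) :
    rowScale t X i j = (t i : K) • X i j := rfl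

lemma finrank_eigenspace_diagonalAdjoint [FiniteDimensional K B] {n : ℕ} {s : B →ₗ[K] B}
    (hs : IsInvolution s) {t : Fin n → K} (ht : ∀ i, t i ≠ 0) :
    finrank K (End.eigenspace (diagonalAdjoint t s) 1) =
      n * finrank K (End.eigenspace s 1) + n.choose 2 * finrank K B := by
  let e : Matrix (Fin n) (Fin n) B ≃ₗ[K] Matrix (Fin n) (Fin n) B :=
    rowScale fun i => Units.mk0 (t i) (ht i)
  have he (X : Matrix (Fin n) (Fin n) B) :
      e (diagonalAdjoint t s X) = transposeMap (Fin n) s (e X) := by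
    ext i j
    simp [e, smul_smul, ht]
  rw [finrank_eigenspace_eq_of_semiconj e he,
    finrank_eigenspace_transposeMap n s one_ne_zero (by simp [hs.apply_apply])]

end DiagonalAdjoint

end Involutions

section DivisionAlgebra

open Module

namespace SwappedActions

variable {k D W : Type*} [Field k] [DivisionRing D] [Algebra k D] [AddCommGroup W] [Module k W]

/-- If `swap` scales a vector `w`, then `W` is the left `D`-vector space spanned by `w`, and
`left (σ d) w = right d w` defines the involution. -/
lemma exists_isInvolution [FiniteDimensional k W]
    (S : SwappedActions k D W) (hW : finrank k W = finrank k D) {μ : k} (hμ : μ ≠ 0)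
    (hne : S.swap.eigenspace μ ≠ ⊥) :
    ∃ σ : D →ₗ[k] D, IsInvolution σ ∧
      finrank k (End.eigenspace σ 1) = finrank k (S.swap.eigenspace μ) := by
  obtain ⟨w, hw, hw0⟩ := Submodule.exists_mem_ne_zero_of_ne_bot hne
  rw [End.mem_eigenspace_iff] at hw
  have hinj : Function.Injective ((LinearMap.applyₗ w).comp S.left.toLinearMap) := by
    refine (injective_iff_map_eq_zero _).2 fun d hd => ?_
    by_contra hd0
    apply hw0
    calc w = S.left (d⁻¹ * d) w := by simp [inv_mul_cancel₀ hd0]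
      _ = S.left d⁻¹ (S.left d w) := by rw [map_mul, Module.End.mul_apply]
      _ = 0 := by rw [show S.left d w = 0 from hd, map_zero]
  let Θ : D ≃ₗ[k] W := LinearEquiv.ofInjectiveOfFinrankEq _ hinj hW.symm
  let σ : D →ₗ[k] D := Θ.symm.toLinearMap ∘ₗ (LinearMap.applyₗ w).comp S.right.toLinearMap
  have hΘ (d : D) : Θ d = S.left d w := rfl
  have hσ (d : D) : S.left (σ d) w = S.right d w := Θ.apply_symm_apply _
  have hswap (d : D) : S.swap (Θ d) = μ • Θ (σ d) := by
    rw [hΘ, hΘ, S.swap_left, hw, map_smul, hσ]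
  refine ⟨σ, ⟨fun x y => Θ.injective ?_, fun x => Θ.injective ?_⟩, ?_⟩
  · rw [hΘ, hΘ, hσ, map_mul, map_mul, Module.End.mul_apply, Module.End.mul_apply, hσ,
      S.left_right, hσ]
  · refine smul_right_injective W hμ ?_
    change μ • Θ (σ (σ x)) = μ • Θ x
    rw [← hswap, hΘ, hσ, S.swap_right, hw, map_smul, hΘ]
  · have hmap : (End.eigenspace σ 1).map (Θ : D →ₗ[k] W) = S.swap.eigenspace μ := by
      ext v
      obtain ⟨d, rfl⟩ := Θ.surjective v
      simp [hswap, hμ]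
    rw [← hmap]
    exact (Θ.finrank_map_eq _).symm

end SwappedActions

lemma mul_choose_two_add (n e : ℕ) :
    n * e.choose 2 + n.choose 2 * e ^ 2 = (n * e).choose 2 := by
  apply Nat.cast_injective (R := ℚ)
  push_cast [Nat.cast_choose_two]
  ring

variable {k A D : Type*} [Field k] [Ring A] [Algebra k A] [DivisionRing D] [Algebra k D]

lemma exists_finrank_eq_sq_of_algEquiv_matrix {d n : ℕ} [NeZero n] (hA : finrank k A = d ^ 2)
    (f : A ≃ₐ[k] Matrix (Fin n) (Fin n) D) : ∃ e, d = n * e ∧ finrank k D = e ^ 2 := by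
  have hd : d ^ 2 = n ^ 2 * finrank k D := by
    rw [← hA, f.toLinearEquiv.finrank_eq, finrank_matrix, Fintype.card_fin, pow_two]
  obtain ⟨e, rfl⟩ : n ∣ d := (Nat.pow_dvd_pow_iff two_ne_zero).1 ⟨_, hd⟩
  rw [mul_pow] at hd
  exact ⟨e, rfl, (Nat.eq_of_mul_eq_mul_left (pow_pos (Nat.pos_of_neZero n) 2) hd).symm⟩

lemma exists_isInvolution_of_algEquiv_matrix [FiniteDimensional k A] [FiniteDimensional k D]
    (h2 : (2 : k) ≠ 0) {m n e : ℕ} [NeZero m] [NeZero n]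
    (ψ : A ⊗[k] A ≃ₐ[k] Matrix (Fin m) (Fin m) k) (f : A ≃ₐ[k] Matrix (Fin n) (Fin n) D)
    (hD : finrank k D = e ^ 2) (he : 2 ≤ e) :
    ∃ σ : D →ₗ[k] D, IsInvolution σ ∧ finrank k (End.eigenspace σ 1) = e.choose 2 := by
  have := isSimpleRing_baseChange_of_algEquiv_matrix (AlgebraicClosure k) ψ
  have hA : finrank k A = (n * e) ^ 2 := by
    rw [f.toLinearEquiv.finrank_eq, finrank_matrix, Fintype.card_fin, hD]
    ring
  have hV : finrank k (Fin m → k) = (n * e) ^ 2 := by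
    have h := ψ.toLinearEquiv.finrank_eq
    rw [finrank_tensorProduct, finrank_matrix, finrank_self, mul_one, Fintype.card_fin] at h
    rw [finrank_fin_fun, ← hA, Nat.mul_self_inj.1 h]
  obtain ⟨S⟩ := SwappedActions.nonempty_of_algEquiv_end (ψ.trans Matrix.toLinAlgEquiv')
  obtain ⟨μ, hμ, heig⟩ := S.exists_finrank_eigenspace_swap h2 hA hV
  let T := S.comp f.symm.toAlgHom
  have hcorner : finrank k (T.corner 0) = e ^ 2 := by
    have h := (T.finrank_corner 0).symm.trans (hV.trans (mul_pow n e 2))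
    rw [Fintype.card_fin] at h
    exact Nat.eq_of_mul_eq_mul_left (pow_pos (Nat.pos_of_neZero n) 2) h
  have hcornerEig : finrank k ((T.cornerActions 0).swap.eigenspace μ) = e.choose 2 := by
    have h := (T.finrank_eigenspace_swap 0 hμ).symm.trans heig
    rw [hcorner, ← mul_choose_two_add] at h
    exact Nat.eq_of_mul_eq_mul_left (Nat.pos_of_neZero n) (Nat.add_right_cancel h)
  rw [← hcornerEig]
  refine (T.cornerActions 0).exists_isInvolution (hcorner.trans hD.symm) ?_ ?_
  · rintro rfl
    exact S.scale_ne_zero (by simp [← hμ])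
  · intro hbot
    rw [hbot, finrank_bot] at hcornerEig
    exact (Nat.choose_pos he).ne hcornerEig

end DivisionAlgebra

section HahnSeries

open TensorProduct HahnSeries

section OrderTop

variable {Γ R S ι : Type*} [LinearOrder Γ]

lemma orderTop_map_of_injective [Zero R] [Zero S] {F : Type*} [FunLike F R S] [ZeroHomClass F R S]
    {f : F} (hf : Function.Injective f) (x : HahnSeries Γ R) :
    (x.map f).orderTop = x.orderTop := by
  have hsupp : (x.map f).support = x.support := by
    ext g
    simp [map_eq_zero_iff f hf]
  have hzero : x.map f = 0 ↔ x = 0 := by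
    rw [← support_eq_empty_iff, hsupp, support_eq_empty_iff]
  by_cases hx : x = 0
  · rw [hzero.2 hx, hx, orderTop_zero, orderTop_zero]
  · rw [orderTop_of_ne_zero hx, orderTop_of_ne_zero (hzero.not.2 hx)]
    simp only [hsupp]

lemma eq_zero_of_sum_eq_zero_of_orderTop_injOn [AddCommMonoid R] [Fintype ι]
    {x : ι → HahnSeries Γ R} (hinj : Set.InjOn (fun i => (x i).orderTop) {i | x i ≠ 0})
    (hx : ∑ i, x i = 0) : x = 0 := by
  by_contra hne
  obtain ⟨i₀, hi₀⟩ := Function.ne_iff.1 hne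
  have : Nonempty ι := ⟨i₀⟩
  obtain ⟨i, hi⟩ := Finite.exists_min fun i => (x i).orderTop
  have hi0 : x i ≠ 0 := orderTop_lt_top.1 ((hi i₀).trans_lt (orderTop_lt_top.2 hi₀))
  obtain ⟨g, hg⟩ := WithTop.ne_top_iff_exists.1 (orderTop_ne_top.2 hi0)
  have hcoeff : (∑ j, x j).coeff g = (x i).coeff g := by
    rw [coeff_sum]
    refine Fintype.sum_eq_single i fun j hj => coeff_eq_zero_of_lt_orderTop ?_
    rw [hg]
    refine (hi j).lt_of_ne fun h => hj (hinj ?_ hi0 h.symm)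
    exact orderTop_ne_top.1 (h ▸ orderTop_ne_top.2 hi0)
  rw [hx, coeff_zero] at hcoeff
  exact coeff_orderTop_ne hg.symm hcoeff.symm

end OrderTop

variable {Γ k D : Type*} [Field k] [Ring D] [Algebra k D] [AddCommMonoid Γ] [LinearOrder Γ]
  [IsOrderedCancelAddMonoid Γ]

variable (Γ k D) in
/-- The comparison of Hahn series over `k`, after scalar extension to `D`, with Hahn series
over `D`. -/
noncomputable def hahnTensorMap : HahnSeries Γ k ⊗[k] D →ₐ[k] HahnSeries Γ D :=
  Algebra.TensorProduct.lift
    { toFun x := x.map (algebraMap k D)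
      map_one' := by ext; simp [coeff_one]
      map_mul' x y := HahnSeries.map_mul (algebraMap k D : k →ₙ+* D)
      map_zero' := by ext; simp
      map_add' x y := by ext; simp
      commutes' r := by
        rw [HahnSeries.algebraMap_apply, HahnSeries.algebraMap_apply]
        ext g
        by_cases hg : g = 0
        · simp [hg]
        · simp [hg] }
    { toRingHom := C
      commutes' r := by rw [HahnSeries.algebraMap_apply]; rfl }
    fun x d => by
      ext g
      change (x.map _ * single 0 d).coeff g = (single 0 d * x.map _).coeff g
      rw [coeff_mul_single_zero, coeff_single_zero_mul]
      exact Algebra.commutes _ _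

@[simp]
lemma coeff_hahnTensorMap_tmul (f : HahnSeries Γ k) (a : D) (g : Γ) :
    (hahnTensorMap Γ k D (f ⊗ₜ a)).coeff g = f.coeff g • a := by
  change (f.map _ * single 0 a).coeff g = _
  rw [coeff_mul_single_zero, Algebra.smul_def]
  rfl

/-- In coordinates with respect to a basis of `D`, the map is the identity. -/
lemma hahnTensorMap_injective : Function.Injective (hahnTensorMap Γ k D) := by
  classical
  let b := Module.Basis.ofVectorSpace k D
  let e := TensorProduct.equivFinsuppOfBasisRight (M := HahnSeries Γ k) b
  have hcoord (x : HahnSeries Γ k ⊗[k] D) (i) (g : Γ) :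
      (e x i).coeff g = b.repr ((hahnTensorMap Γ k D x).coeff g) i := by
    induction x with
    | zero => rw [LinearEquiv.map_zero]; simp
    | tmul f a => simp [e, mul_comm]
    | add x y hx hy => rw [LinearEquiv.map_add]; simp [hx, hy]
  intro x y h
  refine e.injective (Finsupp.ext fun i => HahnSeries.ext (funext fun g => ?_))
  rw [hcoord, hcoord, h]

lemma hahnTensorMap_baseChange (σ : D →ₗ[k] D) (x : HahnSeries Γ k ⊗[k] D) :
    hahnTensorMap Γ k D (σ.baseChange _ x) = (hahnTensorMap Γ k D x).map σ := by
  ext g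
  induction x with
  | zero => simp
  | tmul f a => simp
  | add x y hx hy => simp_all

lemma hahnTensorMap_single_smul (γ : Γ) (x : HahnSeries Γ k ⊗[k] D) :
    hahnTensorMap Γ k D (single γ (1 : k) • x) = single γ 1 * hahnTensorMap Γ k D x := by
  have hsingle : hahnTensorMap Γ k D (single γ (1 : k) ⊗ₜ 1) = single γ 1 := by
    ext g
    by_cases hg : g = γ <;> simp [hg]
  rw [← hsingle, ← map_mul]
  exact congrArg _ (Algebra.smul_def _ x)

/-- The value of the `i`-th summand is congruent to `γ i` modulo `2 Γ`, so the values of the nonzero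
summands are distinct. -/
lemma eq_zero_of_sum_single_smul_baseChange_mul_eq_zero [NoZeroDivisors D] {ι : Type*} [Fintype ι]
    {γ : ι → Γ} (hγ : ∀ i j a b, γ i + (a + a) = γ j + (b + b) → i = j)
    {σ : D →ₗ[k] D} (hσ : Function.Injective σ) {y : ι → HahnSeries Γ k ⊗[k] D}
    (hy : ∑ i, single (γ i) (1 : k) • (σ.baseChange _ (y i) * y i) = 0) : y = 0 := by
  nontriviality D
  let z i := hahnTensorMap Γ k D (y i)
  let T i : HahnSeries Γ D := single (γ i) 1 * ((z i).map σ * z i)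
  have horder (i) : (T i).orderTop = γ i + ((z i).orderTop + (z i).orderTop) := by
    rw [orderTop_mul, orderTop_mul, orderTop_map_of_injective hσ, orderTop_single one_ne_zero]
  have hinj : Set.InjOn (fun i => (T i).orderTop) {i | T i ≠ 0} := by
    have hz {i} (hi : T i ≠ 0) : ∃ a : Γ, a = (z i).orderTop :=
      WithTop.ne_top_iff_exists.1
        (orderTop_ne_top.2 (right_ne_zero_of_mul (right_ne_zero_of_mul hi)))
    intro i hi j hj hij
    obtain ⟨a, ha⟩ := hz hi
    obtain ⟨b, hb⟩ := hz hj
    simp only [horder, ← ha, ← hb] at hij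
    exact hγ i j a b (by exact_mod_cast hij)
  have hsum : ∑ i, T i = 0 := by
    simpa [T, z, hahnTensorMap_single_smul, hahnTensorMap_baseChange]
      using congr(hahnTensorMap Γ k D $hy)
  have hT := eq_zero_of_sum_eq_zero_of_orderTop_injOn hinj hsum
  ext i
  have hzi : z i = 0 := by
    simpa using (horder i).symm.trans (orderTop_eq_top.2 (congrFun hT i))
  exact hahnTensorMap_injective (hzi.trans (map_zero _).symm)

end HahnSeries

section MatrixBaseChange

open TensorProduct

/-- Matrices commute with extension of scalars. -/
noncomputable def baseChangeMatrixEquiv (n k K D : Type*) [Fintype n] [DecidableEq n] [Field k]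
    [Field K] [Algebra k K] [Ring D] [Algebra k D] :
    K ⊗[k] Matrix n n D ≃ₐ[K] Matrix n n (K ⊗[k] D) :=
  (Algebra.TensorProduct.congr (Matrix.uniqueAlgEquiv (m := Unit)).symm .refl).trans
    ((Matrix.kroneckerTMulAlgEquiv Unit n k K K D).trans
      (Matrix.reindexAlgEquiv K (K ⊗[k] D) (Equiv.punitProd n)))

end MatrixBaseChange

section SymplecticInvolution

open Module TensorProduct

lemma eq_of_toLex_single_add_add_eq {n : ℕ} (i j : Fin n) (a b : Lex (Fin n → ℤ))
    (h : toLex (Pi.single i 1) + (a + a) = toLex (Pi.single j 1) + (b + b)) : i = j := by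
  by_contra hij
  have hi := congr(ofLex $h i)
  simp only [ofLex_add, ofLex_toLex, Pi.add_apply, Pi.single_eq_same, Pi.single_eq_of_ne hij] at hi
  omega

variable {k A D : Type*} [Field k] [Ring A] [Algebra k A] [DivisionRing D] [Algebra k D]

lemma exists_isInvolution_isAnisotropic_baseChange [FiniteDimensional k D] {n : ℕ}
    (f : A ≃ₐ[k] Matrix (Fin n) (Fin n) D) {σ : D →ₗ[k] D}
    (hσ : IsInvolution σ) :
    let K := HahnSeries (Lex (Fin n → ℤ)) k
    ∃ τ : K ⊗[k] A →ₗ[K] K ⊗[k] A, IsInvolution τ ∧ IsAnisotropic τ ∧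
      finrank K (End.eigenspace τ 1) =
        n * finrank k (End.eigenspace σ 1) + n.choose 2 * finrank k D := by
  intro K
  let t (i : Fin n) : K := HahnSeries.single (toLex (Pi.single i 1)) 1
  have ht (i : Fin n) : t i ≠ 0 := HahnSeries.single_ne_zero one_ne_zero
  let e : Matrix (Fin n) (Fin n) (K ⊗[k] D) ≃ₐ[K] K ⊗[k] A :=
    ((Algebra.TensorProduct.congr .refl f).trans (baseChangeMatrixEquiv (Fin n) k K D)).symm
  have hs := hσ.baseChange K
  let τ := diagonalAdjoint t (σ.baseChange K)
  have hτ : IsAnisotropic τ := isAnisotropic_diagonalAdjoint ht fun y hy =>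
    eq_zero_of_sum_single_smul_baseChange_mul_eq_zero eq_of_toLex_single_add_add_eq
      (Function.LeftInverse.injective hσ.apply_apply) hy
  refine ⟨e.toLinearEquiv.conj τ, (hs.diagonalAdjoint ht).conj e, hτ.conj e, ?_⟩
  rw [← finrank_eigenspace_eq_of_semiconj (f := τ) e.toLinearEquiv
      (by simp [LinearEquiv.conj_apply]),
    finrank_eigenspace_diagonalAdjoint hs ht, finrank_baseChange,
    ← map_one (algebraMap k K), finrank_eigenspace_baseChange]

lemma two_le_of_finrank_eq_sq_of_not_algEquiv [FiniteDimensional k D] {n e : ℕ}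
    (f : A ≃ₐ[k] Matrix (Fin n) (Fin n) D)
    (h : ¬ Nonempty (A ≃ₐ[k] Matrix (Fin n) (Fin n) k)) (he : finrank k D = e ^ 2) : 2 ≤ e := by
  have he0 : e ≠ 0 := by
    rintro rfl
    exact finrank_pos.ne' he
  have he1 : e ≠ 1 := by
    rintro rfl
    obtain ⟨g⟩ := nonempty_algEquiv_iff_finrank_eq_one.mpr he
    exact h ⟨f.trans g.mapMatrix.symm⟩
  omega

end SymplecticInvolution

theorem statement3 {k : Type u} [Field k] (h2 : (2 : k) ≠ 0)
    (A : Type u) [Ring A] [Algebra k A] [FiniteDimensional k A]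
    -- `A` is central simple over `k`
    [Algebra.IsCentral k A] [IsSimpleRing A]
    (d : ℕ) (hd : Module.finrank k A = d ^ 2)
    -- `A` has exponent two: `A ⊗[k] A` is isomorphic to a matrix algebra over `k`
    (hexp : ∃ m : ℕ, 0 < m ∧ Nonempty ((A ⊗[k] A) ≃ₐ[k] Matrix (Fin m) (Fin m) k))
    -- `A` is not split: `A` is not isomorphic to any matrix algebra over `k`
    (hnonsplit : ∀ m : ℕ, ¬ Nonempty (A ≃ₐ[k] Matrix (Fin m) (Fin m) k)) :
    ∃ (K : Type u) (_ : Field K) (_ : Algebra k K)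
      -- a `K`-linear map `τ` on `A_K = K ⊗[k] A` ...
      (τ : (K ⊗[k] A) →ₗ[K] (K ⊗[k] A)),
      -- ... which is an anti-automorphism ...
      (∀ x y : K ⊗[k] A, τ (x * y) = τ y * τ x) ∧
      -- ... with `τ ∘ τ = id` (an involution) ...
      (∀ x : K ⊗[k] A, τ (τ x) = x) ∧
      -- ... of symplectic type: the fixed space `{x | τ x = x}` has dimension `d(d-1)/2` ...
      Module.finrank K ↥(LinearMap.ker (τ - LinearMap.id)) = d * (d - 1) / 2 ∧
      -- ... and anisotropic
      (∀ x : K ⊗[k] A, τ x * x = 0 → x = 0) := by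
  have : IsArtinianRing A := IsArtinianRing.of_finite k A
  obtain ⟨n, _, D, _, _, _, ⟨f⟩⟩ := IsSimpleRing.exists_algEquiv_matrix_divisionRing_finite k A
  obtain ⟨m, hm, ⟨ψ⟩⟩ := hexp
  have : NeZero m := ⟨hm.ne'⟩
  obtain ⟨e, rfl, he⟩ := exists_finrank_eq_sq_of_algEquiv_matrix hd f
  have he2 : 2 ≤ e := two_le_of_finrank_eq_sq_of_not_algEquiv f (hnonsplit n) he
  obtain ⟨σ, hσ, hσ1⟩ := exists_isInvolution_of_algEquiv_matrix h2 ψ f he he2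
  obtain ⟨τ, hτ, hanis, hdim⟩ := exists_isInvolution_isAnisotropic_baseChange f hσ
  refine ⟨_, inferInstance, inferInstance, τ, hτ.map_mul, hτ.apply_apply, ?_, hanis⟩
  rw [hσ1, he, mul_choose_two_add, Nat.choose_two_right, Module.End.eigenspace_def,
    one_smul] at hdim
  exact hdim
end

section
/- Let k be a field with char(k) ≠ 2 and let q be a nondegenerate quadratic form of dimension ten over k. Suppose the even Clifford algebra C₀(q) is not split, i.e., C₀(q) is not isomorphic over its center Z (which is a 2-dimensional étale k-algebra) to the 16×16 matrix algebra M₁₆(Z). Then there exist a field extension k ⊆ K and an anisotropic nondegenerate quadratic form q' of dimension ten over K such that q' has the same discriminant as q_K (that is, det(q')·det(q) is a square in K) and the same Witt invariant as q_K: the full Clifford algebras C(q') and C(q_K) are Brauer equivalent, i.e., M_r(C(q')) ≅ M_s(C(q_K)) as K-algebras for some r, s ≥ 1. -/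
/-!
STATEMENT 5: Let `k` be a field with `char k ≠ 2` and `q` a nondegenerate quadratic form
of dimension ten over `k` whose even Clifford algebra `C₀(q)` is not split over its
center `Z` (not `Z`-isomorphic to `M₁₆(Z)`).  Then there is a field extension `k ⊆ K` and
an anisotropic nondegenerate ten-dimensional quadratic form `q'` over `K` with the same
discriminant and the same Witt invariant (Brauer class of the full Clifford algebra) as
`q_K`.

Quadratic forms of dimension ten are formalized as quadratic forms on `Fin 10 → K`; the
Gram matrix of such a form is `(polar q eᵢ eⱼ)/2`, nondegeneracy is the nonvanishing of
its determinant, and "same discriminant" means the product of the determinants is a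
square.
-/

open scoped TensorProduct

set_option synthInstance.maxHeartbeats 1000000
set_option maxHeartbeats 1000000

universe u

/-- The Gram matrix of a quadratic form on `Fin n → K`: the matrix of the associated
symmetric bilinear form `(x, y) ↦ polar q x y / 2` in the standard basis. -/
noncomputable def gramMatrix {K : Type*} [Field K] {n : ℕ}
    (q : QuadraticForm K (Fin n → K)) : Matrix (Fin n) (Fin n) K :=
  Matrix.of fun i j => QuadraticMap.polar q (Pi.single i 1) (Pi.single j 1) / 2

/-!
Diagonalize `q` as `⟨w⟩`. Over its center, `C₀(q)` is the base change of the Clifford algebra of the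
eight-dimensional form `evenCore w`, so adjoining the square root of the signed discriminant when
necessary produces a field over which the discriminant is trivial while `C(q)` is still not split.
Adjoining square roots of coefficients one at a time eventually splits `C(q)`; over the field just
before that happens, `C(q)` is split by a quadratic extension, hence Brauer equivalent to a
quaternion division algebra `(a, b)`. After adjoining three indeterminates `x`, `y`, `t`, the form
`⟨x, y, -xy⟩ ⊥ -⟨a, b, -ab⟩ ⊥ t⟨1, -x, -y, xy⟩` has trivial discriminant and Clifford algebra
Brauer equivalent to `(x, y) ⊗ (x, y) ⊗ (a, b)`, that is, to `(a, b)`. It is anisotropic by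
Springer's theorem applied to `t`, `y` and `x` in turn, since `-⟨a, b, -ab⟩` is the pure part of the
norm form of a division algebra.
-/

noncomputable section

open scoped Quaternion
open Module

/-- A family `e` in a `K`-algebra satisfying the Clifford relations of the diagonal form with
coefficients `w`: `e i` squares to the scalar `w i`, and distinct members anticommute. -/
structure IsCliffordFamily {K A ι : Type*} [CommRing K] [Ring A] [Algebra K A]
    (w : ι → K) (e : ι → A) : Prop where
  mul_self (i : ι) : e i * e i = algebraMap K A (w i)
  anticomm {i j : ι} (hij : i ≠ j) : e i * e j = -(e j * e i)

namespace IsCliffordFamily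

variable {K A ι κ : Type*} [CommRing K] [Ring A] [Algebra K A] {w : ι → K} {e : ι → A}

theorem comp (he : IsCliffordFamily w e) {σ : κ → ι} (hσ : σ.Injective) :
    IsCliffordFamily (w ∘ σ) (e ∘ σ) where
  mul_self i := he.mul_self (σ i)
  anticomm hij := he.anticomm (hσ.ne hij)

theorem inl {v : κ → K} {e : ι ⊕ κ → A} (he : IsCliffordFamily (Sum.elim w v) e) :
    IsCliffordFamily w (e ∘ Sum.inl) :=
  he.comp Sum.inl_injective

theorem smul (he : IsCliffordFamily w e) (s : ι → K) :
    IsCliffordFamily (fun i => s i ^ 2 * w i) fun i => s i • e i where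
  mul_self i := by
    rw [smul_mul_smul_comm, he.mul_self, map_mul, ← Algebra.smul_def, sq]
  anticomm {i j} hij := by
    rw [smul_mul_smul_comm, smul_mul_smul_comm, he.anticomm hij, smul_neg, mul_comm (s i)]

theorem sum_smul_mul_self [Fintype ι] (he : IsCliffordFamily w e) (v : ι → K) :
    (∑ i, v i • e i) * ∑ i, v i • e i =
      algebraMap K A (QuadraticMap.weightedSumSquares K w v) := by
  classical
  suffices H : ∀ s : Finset ι, (∑ i ∈ s, v i • e i) * ∑ i ∈ s, v i • e i =
      algebraMap K A (∑ i ∈ s, w i * (v i * v i)) by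
    simpa only [QuadraticMap.weightedSumSquares_apply, smul_eq_mul] using H Finset.univ
  intro s
  induction s using Finset.induction_on with
  | empty => simp
  | insert a s ha ih =>
    have cross : v a • e a * ∑ i ∈ s, v i • e i = -((∑ i ∈ s, v i • e i) * v a • e a) := by
      rw [Finset.mul_sum, Finset.sum_mul, ← Finset.sum_neg_distrib]
      refine Finset.sum_congr rfl fun i hi => ?_
      rw [smul_mul_smul_comm, smul_mul_smul_comm, he.anticomm (ne_of_mem_of_not_mem hi ha).symm,
        smul_neg, mul_comm (v a)]
    have square : v a • e a * v a • e a = algebraMap K A (w a * (v a * v a)) := by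
      rw [smul_mul_smul_comm, he.mul_self, Algebra.smul_def, ← map_mul, mul_comm]
    rw [Finset.sum_insert ha, Finset.sum_insert ha, map_add, ← square, ← ih, add_mul, mul_add,
      mul_add, cross]
    abel

theorem pair {a b : K} {x y : A} (hx : x * x = algebraMap K A a) (hy : y * y = algebraMap K A b)
    (hxy : x * y = -(y * x)) : IsCliffordFamily ![a, b] ![x, y] where
  mul_self := Fin.forall_fin_two.2 ⟨hx, hy⟩
  anticomm {i j} hij := by
    fin_cases i <;> fin_cases j <;> simp_all

end IsCliffordFamily

/-- The Clifford algebra of the diagonal quadratic form `∑ w i * x i ^ 2`. -/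
abbrev DiagClifford {K ι : Type*} [CommRing K] [Fintype ι] (w : ι → K) : Type _ :=
  CliffordAlgebra (QuadraticMap.weightedSumSquares K w)

namespace DiagClifford

variable {K A ι : Type*} [CommRing K] [Ring A] [Algebra K A] [Fintype ι] {w : ι → K}

/-- The algebra homomorphism out of a diagonal Clifford algebra determined by a Clifford family. -/
def lift {e : ι → A} (he : IsCliffordFamily w e) : DiagClifford w →ₐ[K] A :=
  CliffordAlgebra.lift _ ⟨Fintype.linearCombination K e, fun v => by
    rw [Fintype.linearCombination_apply, he.sum_smul_mul_self]⟩

section gen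

variable [DecidableEq ι]

/-- The image in the Clifford algebra of the `i`-th standard basis vector. -/
def gen (w : ι → K) (i : ι) : DiagClifford w :=
  CliffordAlgebra.ι _ (Pi.single i 1)

theorem isCliffordFamily_gen (w : ι → K) : IsCliffordFamily w (gen w) where
  mul_self i := by
    rw [gen, CliffordAlgebra.ι_sq_scalar, QuadraticMap.weightedSumSquares_apply,
      Finset.sum_eq_single i (fun j _ hj => by simp [hj]) (by simp)]
    simp
  anticomm {i j} hij := by
    refine eq_neg_of_add_eq_zero_left ((CliffordAlgebra.ι_mul_ι_add_swap _ _).trans ?_)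
    have hpolar : QuadraticMap.polar (QuadraticMap.weightedSumSquares K w)
        (Pi.single i 1) (Pi.single j 1) = 0 := by
      simp only [QuadraticMap.polar, QuadraticMap.weightedSumSquares_apply,
        ← Finset.sum_sub_distrib]
      refine Finset.sum_eq_zero fun l _ => ?_
      rcases eq_or_ne l i with rfl | hli
      · simp [hij]
      · simp [hli]
    rw [hpolar, map_zero]

@[simp]
theorem lift_gen {e : ι → A} (he : IsCliffordFamily w e) (i : ι) : lift he (gen w i) = e i := by
  rw [lift, gen, CliffordAlgebra.lift_ι_apply, Fintype.linearCombination_apply_single, one_smul]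

theorem algHom_ext {f g : DiagClifford w →ₐ[K] A} (h : ∀ i, f (gen w i) = g (gen w i)) : f = g := by
  refine CliffordAlgebra.hom_ext (LinearMap.pi_ext' fun i => LinearMap.ext_ring ?_)
  exact h i

end gen

theorem lift_mem {e : ι → A} (he : IsCliffordFamily w e) {S : Subalgebra K A}
    (hS : ∀ i, e i ∈ S) (x : DiagClifford w) : lift he x ∈ S := by
  classical
  have he' : IsCliffordFamily w fun i => (⟨e i, hS i⟩ : S) :=
    ⟨fun i => Subtype.ext (he.mul_self i), fun hij => Subtype.ext (he.anticomm hij)⟩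
  have h : lift he = S.val.comp (lift he') := algHom_ext fun i => by simp
  rw [h]
  exact (lift he' x).2

theorem commute_lift {e : ι → A} (he : IsCliffordFamily w e) {y : A}
    (hy : ∀ i, Commute y (e i)) (x : DiagClifford w) : Commute y (lift he x) :=
  Subalgebra.mem_centralizer_iff K |>.1
    (lift_mem he (S := Subalgebra.centralizer K {y})
      (fun i => Subalgebra.mem_centralizer_iff K |>.2 fun _ hz => hz ▸ hy i) x) y rfl

end DiagClifford

namespace DiagClifford

variable {K ι κ : Type*} [Field K] [Fintype ι] [DecidableEq ι] [Fintype κ] [DecidableEq κ]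
  {w : ι → K} {v : κ → K}

/-- Permuting the coefficients of a diagonal form, or changing them by nonzero squares, does not
change its Clifford algebra. -/
def equivOfSquares (σ : ι ≃ κ) {s : ι → K} (hs : ∀ i, s i ≠ 0)
    (h : ∀ i, w i = s i ^ 2 * v (σ i)) : DiagClifford w ≃ₐ[K] DiagClifford v :=
  have hw : IsCliffordFamily w fun i => s i • gen v (σ i) :=
    (funext h : w = _) ▸ ((isCliffordFamily_gen v).comp σ.injective).smul s
  have hv : IsCliffordFamily v fun j => (s (σ.symm j))⁻¹ • gen w (σ.symm j) := by
    have hvw : v = fun j => (s (σ.symm j))⁻¹ ^ 2 * (w ∘ σ.symm) j := by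
      ext j
      simp [h, hs]
    exact hvw ▸ ((isCliffordFamily_gen w).comp σ.symm.injective).smul fun j => (s (σ.symm j))⁻¹
  AlgEquiv.ofAlgHom (lift hw) (lift hv) (algHom_ext fun j => by simp [hs])
    (algHom_ext fun i => by simp [hs])

end DiagClifford

/-- The signed discriminant `(-1) ^ (n choose 2) * ∏ w i`, the square of the product of the
generators of the Clifford algebra. -/
def signedDisc {K : Type*} [CommRing K] {n : ℕ} (w : Fin n → K) : K :=
  (-1) ^ n.choose 2 * ∏ i, w i

theorem signedDisc_ne_zero {K : Type*} [Field K] {n : ℕ} {w : Fin n → K} (hw : ∀ i, w i ≠ 0) :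
    signedDisc w ≠ 0 :=
  mul_ne_zero (pow_ne_zero _ (neg_ne_zero.2 one_ne_zero))
    (Finset.prod_ne_zero_iff.2 fun i _ => hw i)

/-- The ordered product `e 0 * e 1 * ⋯`. -/
def orderedProd {A : Type*} [Monoid A] {n : ℕ} (e : Fin n → A) : A :=
  (List.ofFn e).prod

section OrderedProd

variable {K A B : Type*} [CommRing K] [Ring A] [Algebra K A] [Ring B] [Algebra K B] {n : ℕ}

theorem orderedProd_succ (e : Fin (n + 1) → A) :
    orderedProd e = e 0 * orderedProd fun i => e i.succ := by
  rw [orderedProd, List.ofFn_succ, List.prod_cons, orderedProd]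

theorem map_orderedProd (f : A →ₐ[K] B) (e : Fin n → A) :
    f (orderedProd e) = orderedProd fun i => f (e i) := by
  rw [orderedProd, map_list_prod, List.map_ofFn, orderedProd]
  rfl

theorem orderedProd_mul_of_anticomm {e : Fin n → A} {y : A} (hy : ∀ i, e i * y = -(y * e i)) :
    orderedProd e * y = (-1) ^ n * (y * orderedProd e) := by
  induction n with
  | zero => simp [orderedProd]
  | succ n ih =>
    rw [orderedProd_succ, mul_assoc, ih fun i => hy i.succ, ← mul_assoc (e 0),
      ((Commute.neg_one_right (e 0)).pow_right n).eq, mul_assoc, ← mul_assoc (e 0), hy 0, pow_succ]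
    simp only [mul_assoc, neg_mul, one_mul]

namespace IsCliffordFamily

variable {w : Fin n → K} {e : Fin n → A}

theorem orderedProd_mul_self (he : IsCliffordFamily w e) :
    orderedProd e * orderedProd e = algebraMap K A (signedDisc w) := by
  induction n with
  | zero => simp [orderedProd, signedDisc]
  | succ n ih =>
    set V := orderedProd fun i => e i.succ
    have hV : V * e 0 = (-1) ^ n * (e 0 * V) :=
      orderedProd_mul_of_anticomm fun i => he.anticomm (Fin.succ_ne_zero i)
    have hVV : V * V = algebraMap K A (signedDisc fun i => w i.succ) :=
      ih (he.comp (Fin.succ_injective n))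
    calc orderedProd e * orderedProd e = e 0 * (V * e 0) * V := by
          rw [orderedProd_succ]; simp only [mul_assoc, V]
      _ = (-1) ^ n * (e 0 * e 0 * (V * V)) := by
          rw [hV, ← mul_assoc (e 0), ((Commute.neg_one_right (e 0)).pow_right n).eq]
          simp only [mul_assoc]
      _ = algebraMap K A (signedDisc w) := by
          rw [he.mul_self, hVV, signedDisc, signedDisc, Fin.prod_univ_succ, Nat.choose_succ_succ',
            Nat.choose_one_right, pow_add]
          simp only [map_mul, map_pow, map_neg, map_one, mul_assoc]
          rw [← mul_assoc (algebraMap K A (w 0)), Algebra.commutes, mul_assoc]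

theorem mul_orderedProd (he : IsCliffordFamily w e) (i : Fin n) :
    e i * orderedProd e = (-1) ^ (n + 1) * (orderedProd e * e i) := by
  induction n with
  | zero => exact i.elim0
  | succ n ih =>
    rw [orderedProd_succ]
    set V := orderedProd fun i => e i.succ
    have sign (x : A) : e 0 * ((-1) ^ n * x) = (-1) ^ n * (e 0 * x) := by
      rw [← mul_assoc, ((Commute.neg_one_right (e 0)).pow_right n).eq, mul_assoc]
    induction i using Fin.cases with
    | zero =>
      have hV : V * e 0 = (-1) ^ n * (e 0 * V) :=
        orderedProd_mul_of_anticomm fun i => he.anticomm (Fin.succ_ne_zero i)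
      rw [mul_assoc (e 0) V, hV, sign, ← mul_assoc (_ ^ _), ← pow_add,
        Even.neg_one_pow ⟨n + 1, by ring⟩, one_mul]
    | succ i =>
      have hV : e i.succ * V = (-1) ^ (n + 1) * (V * e i.succ) :=
        ih (he.comp (Fin.succ_injective n)) i
      rw [← mul_assoc, he.anticomm (Fin.succ_ne_zero i), neg_mul, mul_assoc, hV, pow_succ (-1) n,
        mul_assoc, sign, pow_succ, pow_succ]
      simp only [mul_assoc, neg_mul, one_mul, mul_neg, neg_neg]

theorem anticomm_orderedProd (he : IsCliffordFamily w e) (hn : Even n) (i : Fin n) :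
    e i * orderedProd e = -(orderedProd e * e i) := by
  rw [he.mul_orderedProd i, hn.add_one.neg_one_pow, neg_one_mul]

end IsCliffordFamily

end OrderedProd

namespace IsCliffordFamily

variable {K A B κ : Type*} [CommRing K] [Ring A] [Algebra K A] [Ring B] [Algebra K B]

theorem orderedProd_mul_inr {n : ℕ} {w : Fin n → K} {v : κ → K} {e : Fin n ⊕ κ → A}
    (he : IsCliffordFamily (Sum.elim w v) e) (hn : Even n) :
    IsCliffordFamily (fun j => signedDisc w * v j)
      fun j => orderedProd (e ∘ Sum.inl) * e (Sum.inr j) := by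
  set z := orderedProd (e ∘ Sum.inl)
  have hz (j : κ) : e (Sum.inr j) * z = z * e (Sum.inr j) := by
    have hanti (i : Fin n) :
        (e ∘ Sum.inl) i * e (Sum.inr j) = -(e (Sum.inr j) * (e ∘ Sum.inl) i) :=
      he.anticomm Sum.inl_ne_inr
    rw [orderedProd_mul_of_anticomm hanti, hn.neg_one_pow, one_mul]
  have hzz (i j : κ) : z * e (Sum.inr i) * (z * e (Sum.inr j)) =
      algebraMap K A (signedDisc w) * (e (Sum.inr i) * e (Sum.inr j)) := by
    rw [← he.inl.orderedProd_mul_self, mul_assoc z, ← mul_assoc (e _), hz, mul_assoc, mul_assoc]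
  exact ⟨fun i => by rw [hzz, he.mul_self, map_mul, Sum.elim_inr], fun {i j} hij => by
    rw [hzz, hzz, he.anticomm (Sum.inr_injective.ne hij), mul_neg]⟩

theorem tensorProduct {ι : Type*} {w : ι → K} {v : κ → K} {e : ι → A} {f : κ → B}
    (he : IsCliffordFamily w e) (hf : IsCliffordFamily v f) {z : A} {c : K}
    (hz : z * z = algebraMap K A c) (hez : ∀ i, e i * z = -(z * e i)) :
    IsCliffordFamily (Sum.elim w fun j => c * v j)
      (Sum.elim (fun i => e i ⊗ₜ[K] (1 : B)) fun j => z ⊗ₜ f j) where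
  mul_self := by
    rintro (i | j)
    · simp [he.mul_self, Algebra.TensorProduct.algebraMap_apply]
    · simp [hz, hf.mul_self, Algebra.algebraMap_eq_smul_one, TensorProduct.smul_tmul, smul_smul,
        mul_comm, Algebra.TensorProduct.one_def]
  anticomm := by
    rintro (i | i) (j | j) hij
    · simp [he.anticomm (mt (congrArg Sum.inl) hij), TensorProduct.neg_tmul]
    · simp [hez, TensorProduct.neg_tmul]
    · simp [hez, TensorProduct.neg_tmul]
    · simp [hf.anticomm (mt (congrArg Sum.inr) hij), TensorProduct.tmul_neg]

end IsCliffordFamily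

namespace DiagClifford

variable {K κ : Type*} [Field K] [Fintype κ] {n : ℕ} {w : Fin n → K}

theorem isCliffordFamily_tmul [DecidableEq κ] (hn : Even n) (hw : ∀ i, w i ≠ 0) (v : κ → K) :
    IsCliffordFamily (Sum.elim w v)
      (Sum.elim (fun i => gen w i ⊗ₜ[K] (1 : DiagClifford fun j => signedDisc w * v j))
        fun j => ((signedDisc w)⁻¹ • orderedProd (gen w)) ⊗ₜ gen _ j) := by
  have hδ : signedDisc w ≠ 0 := signedDisc_ne_zero hw
  have hgen := isCliffordFamily_gen w
  convert hgen.tensorProduct (isCliffordFamily_gen fun j => signedDisc w * v j)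
    (z := (signedDisc w)⁻¹ • orderedProd (gen w)) (c := (signedDisc w)⁻¹) ?_ ?_ using 2
  · simp [hδ]
  · rw [smul_mul_smul_comm, hgen.orderedProd_mul_self, Algebra.smul_def, ← map_mul, mul_assoc,
      inv_mul_cancel₀ hδ, mul_one]
  · intro i
    rw [mul_smul_comm, hgen.anticomm_orderedProd hn, smul_neg, smul_mul_assoc]

theorem commute_lift_inl_lift_inr (hn : Even n) {v : κ → K}
    {A : Type*} [Ring A] [Algebra K A] {e : Fin n ⊕ κ → A} (he : IsCliffordFamily (Sum.elim w v) e)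
    (x : DiagClifford w) (y : DiagClifford fun j => signedDisc w * v j) :
    Commute (lift he.inl x) (lift (he.orderedProd_mul_inr hn) y) := by
  refine commute_lift _ (fun j => (commute_lift he.inl (fun i => ?_) x).symm) y
  change _ * _ * e (Sum.inl i) = e (Sum.inl i) * (_ * _)
  have hz := he.inl.anticomm_orderedProd hn i
  rw [Function.comp_apply] at hz
  rw [mul_assoc, he.anticomm Sum.inr_ne_inl, mul_neg, ← mul_assoc, ← mul_assoc, hz, neg_mul]

/-- The homomorphism out of the tensor product induced by a Clifford family for `w ⊥ v`. -/
def tensorLift (hn : Even n) {v : κ → K} {A : Type*} [Ring A] [Algebra K A] {e : Fin n ⊕ κ → A}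
    (he : IsCliffordFamily (Sum.elim w v) e) :
    DiagClifford w ⊗[K] DiagClifford (fun j => signedDisc w * v j) →ₐ[K] A :=
  Algebra.TensorProduct.lift (lift he.inl) (lift (he.orderedProd_mul_inr hn))
    (commute_lift_inl_lift_inr hn he)

section tensorLift

variable {v : κ → K} {A : Type*} [Ring A] [Algebra K A] {e : Fin n ⊕ κ → A} (hn : Even n)
  (he : IsCliffordFamily (Sum.elim w v) e)

theorem tensorLift_gen_tmul_one (i : Fin n) :
    tensorLift hn he (gen w i ⊗ₜ 1) = e (Sum.inl i) := by
  refine (Algebra.TensorProduct.lift_tmul _ _ _ _ _).trans ?_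
  rw [map_one, mul_one, lift_gen, Function.comp_apply]

theorem tensorLift_orderedProd_tmul_gen [DecidableEq κ] (j : κ) :
    tensorLift hn he (orderedProd (gen w) ⊗ₜ gen _ j) = signedDisc w • e (Sum.inr j) := by
  refine (Algebra.TensorProduct.lift_tmul _ _ _ _ _).trans ?_
  rw [map_orderedProd]
  simp only [lift_gen]
  rw [← mul_assoc, he.inl.orderedProd_mul_self, Algebra.smul_def]

theorem tensorLift_one_tmul_gen [DecidableEq κ] (j : κ) :
    tensorLift hn he (1 ⊗ₜ gen _ j) = orderedProd (e ∘ Sum.inl) * e (Sum.inr j) := by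
  refine (Algebra.TensorProduct.lift_tmul _ _ _ _ _).trans ?_
  rw [map_one, one_mul, lift_gen]

end tensorLift

/-- Splitting off an even-dimensional summand `w`: multiplied by the ordered product of the
generators of `w`, the generators of the complement commute with those of `w`. -/
def sumEquiv [DecidableEq κ] (hn : Even n) (hw : ∀ i, w i ≠ 0) (v : κ → K) :
    DiagClifford (Sum.elim w v) ≃ₐ[K]
      DiagClifford w ⊗[K] DiagClifford fun j => signedDisc w * v j :=
  have he := isCliffordFamily_gen (Sum.elim w v)
  have hδ : signedDisc w ≠ 0 := signedDisc_ne_zero hw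
  AlgEquiv.ofAlgHom (lift (isCliffordFamily_tmul hn hw v)) (tensorLift hn he)
    (Algebra.TensorProduct.ext
      (algHom_ext fun i => by
        change lift (isCliffordFamily_tmul hn hw v) (tensorLift hn he (gen w i ⊗ₜ 1)) = gen w i ⊗ₜ 1
        rw [tensorLift_gen_tmul_one, lift_gen, Sum.elim_inl])
      (algHom_ext fun j => by
        change lift (isCliffordFamily_tmul hn hw v) (tensorLift hn he (1 ⊗ₜ gen _ j)) = 1 ⊗ₜ gen _ j
        have hz : orderedProd (fun i => gen w i ⊗ₜ[K]
            (1 : DiagClifford fun j => signedDisc w * v j)) = orderedProd (gen w) ⊗ₜ 1 :=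
          (map_orderedProd (Algebra.TensorProduct.includeLeft : DiagClifford w →ₐ[K]
            DiagClifford w ⊗[K] DiagClifford fun j => signedDisc w * v j) (gen w)).symm
        rw [tensorLift_one_tmul_gen, map_mul, map_orderedProd]
        simp only [Function.comp_apply, lift_gen, Sum.elim_inl, Sum.elim_inr]
        rw [hz, Algebra.TensorProduct.tmul_mul_tmul, mul_smul_comm,
          (isCliffordFamily_gen w).orderedProd_mul_self, Algebra.smul_def, ← map_mul,
          inv_mul_cancel₀ hδ, map_one, one_mul]))
    (algHom_ext <| by
      rintro (i | j)
      · change tensorLift hn he (lift (isCliffordFamily_tmul hn hw v) (gen _ (Sum.inl i))) =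
          gen _ (Sum.inl i)
        rw [lift_gen, Sum.elim_inl, tensorLift_gen_tmul_one]
      · change tensorLift hn he (lift (isCliffordFamily_tmul hn hw v) (gen _ (Sum.inr j))) =
          gen _ (Sum.inr j)
        rw [lift_gen, Sum.elim_inr, ← TensorProduct.smul_tmul', map_smul,
          tensorLift_orderedProd_tmul_gen, smul_smul, inv_mul_cancel₀ hδ, one_smul])

/-- A binary diagonal form has a quaternion algebra as its Clifford algebra. -/
def quaternionEquiv {R : Type*} [CommRing R] (a b : R) : DiagClifford ![a, b] ≃ₐ[R] ℍ[R,a,0,b] :=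
  have hgen := isCliffordFamily_gen ![a, b]
  let basis : QuaternionAlgebra.Basis (DiagClifford ![a, b]) a 0 b :=
    { i := gen _ 0
      j := gen _ 1
      k := gen _ 0 * gen _ 1
      i_mul_i := by rw [hgen.mul_self, Algebra.algebraMap_eq_smul_one]; simp
      j_mul_j := by rw [hgen.mul_self, Algebra.algebraMap_eq_smul_one]; simp
      i_mul_j := rfl
      j_mul_i := by rw [hgen.anticomm (zero_ne_one' (Fin 2))]; simp }
  have hquat : IsCliffordFamily ![a, b] ![(⟨0, 1, 0, 0⟩ : ℍ[R,a,0,b]), ⟨0, 0, 1, 0⟩] :=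
    .pair (by ext <;> simp) (by ext <;> simp) (by ext <;> simp)
  AlgEquiv.ofAlgHom (lift hquat) basis.liftHom
    (QuaternionAlgebra.hom_ext (by simp [basis, QuaternionAlgebra.Basis.lift])
      (by simp [basis, QuaternionAlgebra.Basis.lift]))
    (algHom_ext <| Fin.forall_fin_two.2 ⟨by simp [basis, QuaternionAlgebra.Basis.lift],
      by simp [basis, QuaternionAlgebra.Basis.lift]⟩)

/-- A unary form has a quadratic algebra as its Clifford algebra. -/
def quadraticEquiv {R ι : Type*} [CommRing R] [Fintype ι] [DecidableEq ι] [Unique ι] (w : ι → R) :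
    DiagClifford w ≃ₐ[R] QuadraticAlgebra R (w default) 0 :=
  have hω : IsCliffordFamily w
      fun _ => (QuadraticAlgebra.omega : QuadraticAlgebra R (w default) 0) :=
    ⟨fun i => by
      rw [QuadraticAlgebra.omega_mul_omega_eq_add, zero_smul, add_zero, Unique.eq_default i,
        Algebra.algebraMap_eq_smul_one], fun hij => absurd (Subsingleton.elim _ _) hij⟩
  AlgEquiv.ofAlgHom (lift hω)
    (QuadraticAlgebra.lift ⟨gen w default, by
      rw [(isCliffordFamily_gen w).mul_self, zero_smul, add_zero, Algebra.algebraMap_eq_smul_one]⟩)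
    (QuadraticAlgebra.algHom_ext (by simp))
    (algHom_ext fun i => by simp [Unique.eq_default i])

/-- The Clifford algebra of the zero-dimensional form. -/
def emptyEquiv {R ι : Type*} [CommRing R] [Fintype ι] [DecidableEq ι] [IsEmpty ι] (w : ι → R) :
    DiagClifford w ≃ₐ[R] R :=
  AlgEquiv.ofAlgHom (lift (e := isEmptyElim) ⟨isEmptyElim, fun {i} => isEmptyElim i⟩)
    (Algebra.ofId R _) (Subsingleton.elim _ _) (algHom_ext isEmptyElim)

end DiagClifford

theorem isSimpleRing_of_one_mem {A : Type*} [Ring A] [Nontrivial A]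
    (h : ∀ (I : TwoSidedIdeal A) (x : A), x ∈ I → x ≠ 0 → (1 : A) ∈ I) : IsSimpleRing A where
  simple :=
    { eq_bot_or_eq_top := fun I => by
        by_cases hI : ∃ x ∈ I, x ≠ 0
        · obtain ⟨x, hxI, hx⟩ := hI
          exact .inr (I.one_mem_iff.1 (h I x hxI hx))
        · push Not at hI
          exact .inl (bot_unique fun x hx => (TwoSidedIdeal.mem_bot A).2 (hI x hx)) }

section mulLeftRight

open MulOpposite

variable {K A : Type*} [Field K] [Ring A] [Algebra K A]

variable (K) in
theorem mulLeftRight_range_smul (a b x : A) :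
    (⟨_, a ⊗ₜ op b, rfl⟩ : (AlgHom.mulLeftRight K A).range) • x = a * x * b :=
  AlgHom.mulLeftRight_apply K A a (op b) x

instance isSimpleModule_mulLeftRight_range [IsSimpleRing A] :
    IsSimpleModule (AlgHom.mulLeftRight K A).range A := by
  rw [isSimpleModule_iff]
  refine { eq_bot_or_eq_top := fun N => ?_ }
  have left_mem {a x : A} (hx : x ∈ N) : a * x ∈ N := by
    simpa only [mulLeftRight_range_smul K, mul_one] using N.smul_mem ⟨_, a ⊗ₜ op 1, rfl⟩ hx
  have right_mem {x b : A} (hx : x ∈ N) : x * b ∈ N := by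
    simpa only [mulLeftRight_range_smul K, one_mul] using N.smul_mem ⟨_, 1 ⊗ₜ op b, rfl⟩ hx
  let I : TwoSidedIdeal A := .mk' N N.zero_mem N.add_mem
    (fun {x} hx => by simpa using left_mem (a := -1) hx) left_mem right_mem
  have hI (x : A) : x ∈ I ↔ x ∈ N := TwoSidedIdeal.mem_mk' ..
  refine (eq_bot_or_eq_top I).imp (fun h => ?_) fun h => ?_
  · exact bot_unique fun x hx => (TwoSidedIdeal.mem_bot A).1 (h ▸ (hI x).2 hx)
  · exact top_unique fun x _ => (hI x).1 (h ▸ TwoSidedIdeal.mem_top A)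

theorem exists_forall_eq_smul_of_mulLeftRight_range [Algebra.IsCentral K A]
    (g : Module.End (AlgHom.mulLeftRight K A).range A) : ∃ c : K, ∀ x, g x = c • x := by
  have h (a b x : A) : g (a * x * b) = a * g x * b := by
    rw [← mulLeftRight_range_smul K, map_smul, mulLeftRight_range_smul]
  have hleft (x : A) : g x = x * g 1 := by
    simpa only [mul_one] using h x 1 1
  have hright (x : A) : g x = g 1 * x := by
    simpa only [mul_one, one_mul] using h 1 x 1
  have hcentral : g 1 ∈ Subalgebra.center K A :=
    Subalgebra.mem_center_iff.2 fun x => (hleft x).symm.trans (hright x)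
  obtain ⟨c, hc⟩ := (Algebra.IsCentral.mem_center_iff K).1 hcentral
  exact ⟨c, fun x => by rw [hright, hc, Algebra.smul_def]⟩

theorem exists_mulLeftRight_eqOn [Algebra.IsCentral K A] [IsSimpleRing A] (f : Module.End K A)
    (s : Finset A) : ∃ r : A ⊗[K] Aᵐᵒᵖ, ∀ x ∈ s, f x = AlgHom.mulLeftRight K A r x := by
  let f' : Module.End (Module.End (AlgHom.mulLeftRight K A).range A) A :=
    { toFun := f
      map_add' := f.map_add
      map_smul' := fun g x => by
        obtain ⟨c, hc⟩ := exists_forall_eq_smul_of_mulLeftRight_range g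
        simp [hc] }
  obtain ⟨⟨_, r, rfl⟩, hr⟩ := jacobson_density (R := (AlgHom.mulLeftRight K A).range) f' s
  exact ⟨r, hr⟩

end mulLeftRight

open MulOpposite in
theorem rTensor_mulLeftRight_mem {K A B : Type*} [Field K] [Ring A] [Algebra K A] [Ring B]
    [Algebra K B] {I : TwoSidedIdeal (A ⊗[K] B)} (r : A ⊗[K] Aᵐᵒᵖ) {y : A ⊗[K] B} (hy : y ∈ I) :
    (AlgHom.mulLeftRight K A r).rTensor B y ∈ I := by
  induction r with
  | zero => simp
  | add r r' h h' =>
    rw [map_add, LinearMap.rTensor_add, LinearMap.add_apply]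
    exact I.add_mem h h'
  | tmul a b =>
    have h : (AlgHom.mulLeftRight K A (a ⊗ₜ b)).rTensor B y = a ⊗ₜ 1 * y * unop b ⊗ₜ 1 := by
      clear hy
      induction y using TensorProduct.induction_on with
      | zero => simp
      | add y y' h h' => rw [map_add, h, h', mul_add, add_mul]
      | tmul x z => simp
    rw [h]
    exact I.mul_mem_right _ _ (I.mul_mem_left _ _ hy)

/-- By the density theorem, multiplications on the left factor turn any nonzero tensor into
one of the form `1 ⊗ b` with `b ≠ 0`. -/
theorem isSimpleRing_tensorProduct (K A B : Type*) [Field K] [Ring A] [Algebra K A] [Ring B]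
    [Algebra K B] [Algebra.IsCentral K A] [IsSimpleRing A] [IsSimpleRing B] :
    IsSimpleRing (A ⊗[K] B) := by
  classical
  refine isSimpleRing_of_one_mem fun I x hxI hx => ?_
  let 𝒜 := Basis.ofVectorSpace K A
  obtain ⟨c, rfl⟩ := TensorProduct.eq_repr_basis_left 𝒜 x
  obtain ⟨i, hi⟩ : ∃ i, c i ≠ 0 := by
    by_contra! h
    exact hx (by rw [Finsupp.ext (g := 0) h, Finsupp.sum_zero_index])
  obtain ⟨r, hr⟩ := exists_mulLeftRight_eqOn ((𝒜.coord i).smulRight (1 : A)) (c.support.image 𝒜)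
  have hb : (1 : A) ⊗ₜ[K] c i ∈ I := by
    convert rTensor_mulLeftRight_mem r hxI using 1
    have hterm (j) (hj : j ∈ c.support) : (AlgHom.mulLeftRight K A r).rTensor B (𝒜 j ⊗ₜ c j) =
        (if i = j then 1 else 0 : K) • (1 : A) ⊗ₜ c j := by
      rw [LinearMap.rTensor_tmul, ← hr _ (Finset.mem_image_of_mem 𝒜 hj)]
      rcases eq_or_ne i j with rfl | hij
      · simp
      · simp [hij]
    rw [Finsupp.sum, map_sum, Finset.sum_congr rfl hterm]
    simp [hi]
  exact Algebra.TensorProduct.one_def (R := K) (A := A) (B := B) ▸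
    (TwoSidedIdeal.mem_comap (Algebra.TensorProduct.includeRight : B →ₐ[K] A ⊗[K] B)).1
      (IsSimpleRing.one_mem_of_ne_zero_mem _ hi ((TwoSidedIdeal.mem_comap _).2 hb))

theorem isCentral_tensorProduct (K A B : Type*) [Field K] [Ring A] [Algebra K A] [Ring B]
    [Algebra K B] [Algebra.IsCentral K A] [Algebra.IsCentral K B] [Nontrivial A] :
    Algebra.IsCentral K (A ⊗[K] B) where
  out x hx := by
    have hx' :
        x ∈ (Algebra.TensorProduct.map (Subalgebra.center K A).val (AlgHom.id K B)).range := by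
      rw [← Subalgebra.centralizer_coe_range_includeLeft_eq_center_tensorProduct,
        Subalgebra.mem_centralizer_iff]
      exact fun y _ => Subalgebra.mem_center_iff.1 hx y
    obtain ⟨b, rfl⟩ : x ∈ (Algebra.TensorProduct.includeRight : B →ₐ[K] A ⊗[K] B).range := by
      obtain ⟨y, rfl⟩ := hx'
      clear hx
      rw [AlgHom.toRingHom_eq_coe, RingHom.coe_coe]
      induction y using TensorProduct.induction_on with
      | zero => rw [map_zero]; exact zero_mem _
      | add y y' h h' => rw [map_add]; exact add_mem h h'
      | tmul a b =>
        obtain ⟨c, hc⟩ := (Algebra.IsCentral.mem_center_iff K).1 a.2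
        exact ⟨c • b, by simp [hc, Algebra.algebraMap_eq_smul_one, TensorProduct.smul_tmul]⟩
    have hb : b ∈ Subalgebra.center K B := Subalgebra.mem_center_iff.2 fun c => by
      refine Algebra.TensorProduct.includeRight_injective (A := A) (R := K)
        (FaithfulSMul.algebraMap_injective K A) ?_
      rw [map_mul, map_mul]
      exact Subalgebra.mem_center_iff.1 hx (Algebra.TensorProduct.includeRight c)
    obtain ⟨c, rfl⟩ := (Algebra.IsCentral.mem_center_iff K).1 hb
    exact ⟨c, by simp [Algebra.algebraMap_eq_smul_one, Algebra.TensorProduct.one_def]⟩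

/-- `A` is a finite-dimensional central simple algebra over `K`. -/
structure IsCentralSimple (K A : Type*) [Field K] [Ring A] [Algebra K A] : Prop where
  isCentral : Algebra.IsCentral K A
  isSimpleRing : IsSimpleRing A
  finiteDimensional : FiniteDimensional K A

namespace IsCentralSimple

section

variable {K A B : Type*} [Field K] [Ring A] [Algebra K A] [Ring B] [Algebra K B]

protected theorem self (K : Type*) [Field K] : IsCentralSimple K K :=
  ⟨inferInstance, inferInstance, inferInstance⟩

theorem of_algEquiv (hA : IsCentralSimple K A) (f : A ≃ₐ[K] B) : IsCentralSimple K B :=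
  have := hA.isSimpleRing
  have := hA.finiteDimensional
  have central (x : B) (hx : x ∈ Subalgebra.center K B) : x ∈ (⊥ : Subalgebra K B) := by
    have hx' : f.symm x ∈ Subalgebra.center K A :=
      MulEquivClass.apply_mem_center f.symm hx
    obtain ⟨c, hc⟩ := hA.isCentral.out hx'
    exact ⟨c, (f.commutes c).symm.trans (f.eq_symm_apply.1 hc)⟩
  ⟨⟨central⟩, .of_ringEquiv f.toRingEquiv inferInstance, .equiv f.toLinearEquiv⟩

theorem nonempty_algEquiv (hA : IsCentralSimple K A) [Nontrivial B] [FiniteDimensional K B]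
    (h : finrank K A = finrank K B) (f : A →ₐ[K] B) : Nonempty (A ≃ₐ[K] B) :=
  have := hA.isSimpleRing
  have := hA.finiteDimensional
  have hf : Function.Injective f := RingHom.injective (f : A →+* B)
  ⟨.ofBijective f ⟨hf,
    (LinearMap.injective_iff_surjective_of_finrank_eq_finrank h (f := f.toLinearMap)).1 hf⟩⟩

theorem tensorProduct (hA : IsCentralSimple K A) (hB : IsCentralSimple K B) :
    IsCentralSimple K (A ⊗[K] B) :=
  have := hA.isCentral
  have := hA.isSimpleRing
  have := hA.finiteDimensional
  have := hB.isCentral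
  have := hB.isSimpleRing
  have := hB.finiteDimensional
  ⟨isCentral_tensorProduct K A B, isSimpleRing_tensorProduct K A B, inferInstance⟩

end

variable {K : Type*} [Field K] {a b : K}

theorem quaternionAlgebra (h2 : (2 : K) ≠ 0) (ha : a ≠ 0) (hb : b ≠ 0) :
    IsCentralSimple K ℍ[K,a,0,b] where
  isCentral.out x hx := by
    rw [Subalgebra.mem_center_iff] at hx
    have hi := congrArg QuaternionAlgebra.imK (hx ⟨0, 0, 1, 0⟩)
    have hj := congrArg QuaternionAlgebra.imK (hx ⟨0, 1, 0, 0⟩)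
    have hk := congrArg QuaternionAlgebra.imJ (hx ⟨0, 1, 0, 0⟩)
    simp only [QuaternionAlgebra.imK_mul, QuaternionAlgebra.imJ_mul] at hi hj hk
    have hi' : x.imI = 0 := mul_left_cancel₀ h2 (by linear_combination -hi)
    have hj' : x.imJ = 0 := mul_left_cancel₀ h2 (by linear_combination hj)
    have hk' : x.imK = 0 := mul_left_cancel₀ (mul_ne_zero h2 ha) (by linear_combination hk)
    have hx' : x = algebraMap K _ x.re := QuaternionAlgebra.ext rfl hi' hj' hk'
    exact ⟨x.re, hx'.symm⟩
  isSimpleRing := isSimpleRing_of_one_mem fun I x hxI hx => by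
    -- Averaging over conjugation by the standard basis recovers the scalar part.
    have re_mem {y : ℍ[K,a,0,b]} (hy : y ∈ I) : algebraMap K ℍ[K,a,0,b] (4 * y.re) ∈ I := by
      have h (u v : ℍ[K,a,0,b]) : u * y * v ∈ I := I.mul_mem_right _ _ (I.mul_mem_left _ _ hy)
      convert I.add_mem (I.add_mem (h 1 1) (h ⟨0, a⁻¹, 0, 0⟩ ⟨0, 1, 0, 0⟩))
        (I.add_mem (h ⟨0, 0, b⁻¹, 0⟩ ⟨0, 0, 1, 0⟩) (h ⟨0, 0, 0, -(a * b)⁻¹⟩ ⟨0, 0, 0, 1⟩)) using 1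
      ext <;> simp [QuaternionAlgebra.algebraMap_eq] <;> field_simp <;> ring
    have one_mem {y : ℍ[K,a,0,b]} (hy : y ∈ I) (hre : y.re ≠ 0) : 1 ∈ I := by
      have h4 : (4 : K) * y.re ≠ 0 :=
        mul_ne_zero (by rw [← two_add_two_eq_four, ← two_mul]; exact mul_ne_zero h2 h2) hre
      have := I.mul_mem_left (algebraMap K _ (4 * y.re)⁻¹) _ (re_mem hy)
      rwa [← map_mul, inv_mul_cancel₀ h4, map_one] at this
    by_contra hI
    have re_eq_zero {y : ℍ[K,a,0,b]} (hy : y ∈ I) : y.re = 0 := by_contra fun h => hI (one_mem hy h)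
    have hi : x.imI = 0 := by simpa [ha] using re_eq_zero (I.mul_mem_left ⟨0, 1, 0, 0⟩ x hxI)
    have hj : x.imJ = 0 := by simpa [hb] using re_eq_zero (I.mul_mem_left ⟨0, 0, 1, 0⟩ x hxI)
    have hk : x.imK = 0 := by simpa [ha, hb] using re_eq_zero (I.mul_mem_left ⟨0, 0, 0, 1⟩ x hxI)
    exact hx (QuaternionAlgebra.ext (re_eq_zero hxI) hi hj hk)
  finiteDimensional := inferInstance

end IsCentralSimple

namespace DiagClifford

variable {K : Type*} [Field K]

/-- Splitting off a binary summand of a diagonal form as a quaternion algebra. -/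
def quaternionTensorEquiv {n : ℕ} (w : Fin (n + 2) → K) (h0 : w 0 ≠ 0) (h1 : w 1 ≠ 0) :
    DiagClifford w ≃ₐ[K]
      ℍ[K,w 0,0,w 1] ⊗[K] DiagClifford fun i : Fin n => -(w 0 * w 1) * w i.succ.succ :=
  have hsplit (i : Fin 2 ⊕ Fin n) : Sum.elim ![w 0, w 1] (fun i => w i.succ.succ) i =
      1 ^ 2 * w ((finSumFinEquiv.trans (finCongr (Nat.add_comm 2 n))) i) := by
    rcases i with i | i
    · fin_cases i <;> simp <;> rfl
    · simp only [Sum.elim_inr, one_pow, one_mul, Equiv.trans_apply, finSumFinEquiv_apply_right,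
        finCongr_apply, Fin.cast_natAdd]
      rfl
  have hdisc : signedDisc ![w 0, w 1] = -(w 0 * w 1) := by
    simp [signedDisc]
  (equivOfSquares _ (fun _ => one_ne_zero) hsplit).symm.trans <|
    (sumEquiv even_two (Fin.forall_fin_two.2 ⟨h0, h1⟩) _).trans <|
      Algebra.TensorProduct.congr (quaternionEquiv _ _) (hdisc ▸ AlgEquiv.refl)

theorem isCentralSimple (h2 : (2 : K) ≠ 0) {m : ℕ} {w : Fin (2 * m) → K} (hw : ∀ i, w i ≠ 0) :
    IsCentralSimple K (DiagClifford w) := by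
  induction m with
  | zero =>
    have : IsEmpty (Fin (2 * 0)) := Fin.isEmpty'
    exact (IsCentralSimple.self K).of_algEquiv (emptyEquiv w).symm
  | succ m ih =>
    refine .of_algEquiv (.tensorProduct (.quaternionAlgebra h2 (hw 0) (hw 1)) (ih fun i => ?_))
      (quaternionTensorEquiv (n := 2 * m) w (hw 0) (hw 1)).symm
    exact mul_ne_zero (neg_ne_zero.2 (mul_ne_zero (hw 0) (hw 1))) (hw _)

theorem finrank_eq {m : ℕ} {w : Fin (2 * m) → K} (hw : ∀ i, w i ≠ 0) :
    finrank K (DiagClifford w) = 4 ^ m := by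
  induction m with
  | zero =>
    have : IsEmpty (Fin (2 * 0)) := Fin.isEmpty'
    rw [(emptyEquiv w).toLinearEquiv.finrank_eq, finrank_self, pow_zero]
  | succ m ih =>
    rw [(quaternionTensorEquiv (n := 2 * m) w (hw 0) (hw 1)).toLinearEquiv.finrank_eq,
      finrank_tensorProduct, QuaternionAlgebra.finrank_eq_four, ih fun i =>
        mul_ne_zero (neg_ne_zero.2 (mul_ne_zero (hw 0) (hw 1))) (hw _), pow_succ, mul_comm]

end DiagClifford

/-- `A` is a matrix algebra over the ground field `K`. -/
def IsSplit (K A : Type*) [Field K] [Ring A] [Algebra K A] : Prop :=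
  ∃ n : ℕ, Nonempty (A ≃ₐ[K] Matrix (Fin n) (Fin n) K)

namespace IsSplit

variable {K A B : Type*} [Field K] [Ring A] [Algebra K A] [Ring B] [Algebra K B]

theorem of_algEquiv (f : A ≃ₐ[K] B) : IsSplit K B → IsSplit K A
  | ⟨n, ⟨g⟩⟩ => ⟨n, ⟨f.trans g⟩⟩

theorem of_algEquiv_matrix {ι : Type*} [Fintype ι] [DecidableEq ι] (f : A ≃ₐ[K] Matrix ι ι K) :
    IsSplit K A :=
  ⟨Fintype.card ι, ⟨f.trans (Matrix.reindexAlgEquiv K K (Fintype.equivFin ι))⟩⟩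

protected theorem self (K : Type*) [Field K] : IsSplit K K :=
  of_algEquiv_matrix (ι := Unit) (Matrix.uniqueAlgEquiv.symm)

theorem tensorProduct : IsSplit K A → IsSplit K B → IsSplit K (A ⊗[K] B)
  | ⟨m, ⟨f⟩⟩, ⟨n, ⟨g⟩⟩ =>
    of_algEquiv_matrix <|
      (Algebra.TensorProduct.congr f g).trans (Matrix.kroneckerAlgEquiv (Fin m) (Fin n) K)

theorem nonempty_algEquiv {n : ℕ} (hA : IsSplit K A) (hn : finrank K A = n ^ 2) :
    Nonempty (A ≃ₐ[K] Matrix (Fin n) (Fin n) K) := by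
  obtain ⟨m, ⟨f⟩⟩ := hA
  have hm : m ^ 2 = n ^ 2 := by
    rw [← hn, f.toLinearEquiv.finrank_eq, finrank_matrix, Fintype.card_fin, finrank_self, mul_one,
      sq]
  obtain rfl := Nat.pow_left_injective two_ne_zero hm
  exact ⟨f⟩

end IsSplit

theorem isSplit_tensorProduct_mulOpposite {K A : Type*} [Field K] [Ring A] [Algebra K A]
    (hA : IsCentralSimple K A) : IsSplit K (A ⊗[K] Aᵐᵒᵖ) := by
  have := hA.isCentral
  have := hA.isSimpleRing
  have := hA.finiteDimensional
  have hAop : IsCentralSimple K Aᵐᵒᵖ := ⟨inferInstance, inferInstance, inferInstance⟩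
  obtain ⟨f⟩ := (hA.tensorProduct hAop).nonempty_algEquiv (B := End K A)
    (by rw [finrank_tensorProduct, finrank_linearMap, (MulOpposite.opLinearEquiv K).finrank_eq])
    (AlgHom.mulLeftRight K A)
  exact .of_algEquiv_matrix (f.trans (algEquivMatrix (finBasis K A)))

theorem isSplit_quaternionAlgebra_tensorProduct_self {K : Type*} [Field K] (h2 : (2 : K) ≠ 0)
    {a b : K} (ha : a ≠ 0) (hb : b ≠ 0) : IsSplit K (ℍ[K,a,0,b] ⊗[K] ℍ[K,a,0,b]) :=
  .of_algEquiv (Algebra.TensorProduct.congr .refl QuaternionAlgebra.starAe)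
    (isSplit_tensorProduct_mulOpposite (.quaternionAlgebra h2 ha hb))

theorem isSplit_quaternionAlgebra_of_isSquare {K : Type*} [Field K] (h2 : (2 : K) ≠ 0)
    {a b : K} (ha : a ≠ 0) (hb : b ≠ 0) (hsq : IsSquare b) : IsSplit K ℍ[K,a,0,b] := by
  obtain ⟨s, rfl⟩ := hsq
  let basis : QuaternionAlgebra.Basis (Matrix (Fin 2) (Fin 2) K) a 0 (s * s) :=
    { i := !![0, a; 1, 0]
      j := !![s, 0; 0, -s]
      k := !![0, a; 1, 0] * !![s, 0; 0, -s]
      i_mul_i := by ext i j; fin_cases i <;> fin_cases j <;> simp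
      j_mul_j := by ext i j; fin_cases i <;> fin_cases j <;> simp
      i_mul_j := rfl
      j_mul_i := by ext i j; fin_cases i <;> fin_cases j <;> simp [mul_comm] }
  obtain ⟨f⟩ := (IsCentralSimple.quaternionAlgebra h2 ha hb).nonempty_algEquiv
    (by rw [QuaternionAlgebra.finrank_eq_four, finrank_matrix, Fintype.card_fin, finrank_self])
    basis.liftHom
  exact ⟨2, ⟨f⟩⟩

/-- Brauer equivalence, for algebras which are not bundled with a proof that they are central
simple. -/
def BrauerEquivalent (K A B : Type*) [Field K] [Ring A] [Algebra K A] [Ring B] [Algebra K B] :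
    Prop :=
  ∃ r s : ℕ, 0 < r ∧ 0 < s ∧
    Nonempty (Matrix (Fin r) (Fin r) A ≃ₐ[K] Matrix (Fin s) (Fin s) B)

namespace BrauerEquivalent

variable {K A B C D : Type*} [Field K] [Ring A] [Algebra K A] [Ring B] [Algebra K B]
  [Ring C] [Algebra K C] [Ring D] [Algebra K D]

theorem of_matrix {ι κ : Type*} [Fintype ι] [DecidableEq ι] [Nonempty ι] [Fintype κ]
    [DecidableEq κ] [Nonempty κ] (f : Matrix ι ι A ≃ₐ[K] Matrix κ κ B) : BrauerEquivalent K A B :=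
  ⟨Fintype.card ι, Fintype.card κ, Fintype.card_pos, Fintype.card_pos,
    ⟨((Matrix.reindexAlgEquiv K A (Fintype.equivFin ι)).symm.trans f).trans
      (Matrix.reindexAlgEquiv K B (Fintype.equivFin κ))⟩⟩

theorem of_algEquiv (f : A ≃ₐ[K] B) : BrauerEquivalent K A B :=
  ⟨1, 1, one_pos, one_pos, ⟨f.mapMatrix⟩⟩

theorem symm : BrauerEquivalent K A B → BrauerEquivalent K B A
  | ⟨r, s, hr, hs, ⟨f⟩⟩ => ⟨s, r, hs, hr, ⟨f.symm⟩⟩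

theorem trans : BrauerEquivalent K A B → BrauerEquivalent K B C → BrauerEquivalent K A C
  | ⟨m, n, hm, hn, ⟨f⟩⟩, ⟨p, q, hp, hq, ⟨g⟩⟩ =>
    have := Fin.pos_iff_nonempty.1 hm
    have := Fin.pos_iff_nonempty.1 hn
    have := Fin.pos_iff_nonempty.1 hp
    have := Fin.pos_iff_nonempty.1 hq
    of_matrix <| (Matrix.compAlgEquiv (Fin p) (Fin m) A K).symm.trans <|
      f.mapMatrix.trans <| (Matrix.compAlgEquiv (Fin p) (Fin n) B K).trans <|
      (Matrix.reindexAlgEquiv K B (.prodComm _ _)).trans <|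
      (Matrix.compAlgEquiv (Fin n) (Fin p) B K).symm.trans <|
      g.mapMatrix.trans <| Matrix.compAlgEquiv (Fin n) (Fin q) C K

theorem tensorProduct :
    BrauerEquivalent K A B → BrauerEquivalent K C D → BrauerEquivalent K (A ⊗[K] C) (B ⊗[K] D)
  | ⟨m, n, hm, hn, ⟨f⟩⟩, ⟨p, q, hp, hq, ⟨g⟩⟩ =>
    have := Fin.pos_iff_nonempty.1 hm
    have := Fin.pos_iff_nonempty.1 hn
    have := Fin.pos_iff_nonempty.1 hp
    have := Fin.pos_iff_nonempty.1 hq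
    of_matrix <| (Matrix.kroneckerTMulAlgEquiv (Fin m) (Fin p) K K A C).symm.trans <|
      (Algebra.TensorProduct.congr f g).trans <|
      Matrix.kroneckerTMulAlgEquiv (Fin n) (Fin q) K K B D

theorem of_isSplit [Nontrivial A] : IsSplit K A → BrauerEquivalent K A K
  | ⟨n, ⟨f⟩⟩ =>
    have : Nonempty (Fin n) := by
      by_contra h
      rw [not_nonempty_iff] at h
      exact not_subsingleton A f.toEquiv.subsingleton
    of_matrix (ι := Unit) (Matrix.uniqueAlgEquiv.trans f)

theorem tensorProduct_of_isSplit (hA : IsSplit K A) [Nontrivial A] :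
    BrauerEquivalent K (A ⊗[K] B) B :=
  ((of_isSplit hA).tensorProduct (of_algEquiv .refl)).trans
    (of_algEquiv (Algebra.TensorProduct.lid K B))

theorem baseChange (L : Type*) [Field L] [Algebra K L] :
    BrauerEquivalent K A B → BrauerEquivalent L (L ⊗[K] A) (L ⊗[K] B)
  | ⟨m, n, hm, hn, ⟨f⟩⟩ =>
    have := Fin.pos_iff_nonempty.1 hm
    have := Fin.pos_iff_nonempty.1 hn
    of_matrix <| (Matrix.kroneckerTMulAlgEquiv Unit (Fin m) K L L A).symm.trans <|
      (Algebra.TensorProduct.congr .refl f).trans <|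
      Matrix.kroneckerTMulAlgEquiv Unit (Fin n) K L L B

end BrauerEquivalent

namespace DiagClifford

section baseChange

variable {K : Type*} (L : Type*) [CommRing K] [CommRing L] [Algebra K L] {ι : Type*} [Fintype ι]
  [DecidableEq ι]

theorem isCliffordFamily_gen_algebraMap (w : ι → K) :
    IsCliffordFamily w (gen (algebraMap K L ∘ w)) :=
  have hgen := isCliffordFamily_gen (algebraMap K L ∘ w)
  ⟨fun i => (hgen.mul_self i).trans (IsScalarTower.algebraMap_apply K L _ _).symm, hgen.anticomm⟩

theorem isCliffordFamily_one_tmul_gen (w : ι → K) :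
    IsCliffordFamily (algebraMap K L ∘ w) fun i => (1 : L) ⊗ₜ[K] gen w i where
  mul_self i := by
    rw [Algebra.TensorProduct.tmul_mul_tmul, (isCliffordFamily_gen w).mul_self, mul_one,
      Function.comp_apply, ← IsScalarTower.algebraMap_apply,
      ← Algebra.TensorProduct.includeRight_apply, AlgHom.commutes]
  anticomm hij := by
    simp only [Algebra.TensorProduct.tmul_mul_tmul, (isCliffordFamily_gen w).anticomm hij,
      TensorProduct.tmul_neg]

/-- The homomorphism underlying `baseChangeEquiv`. -/
def baseChangeHom (w : ι → K) : L ⊗[K] DiagClifford w →ₐ[L] DiagClifford (algebraMap K L ∘ w) :=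
  Algebra.TensorProduct.lift (Algebra.ofId L _) (lift (isCliffordFamily_gen_algebraMap L w))
    fun _ _ => Algebra.commutes _ _

theorem baseChangeHom_one_tmul_gen (w : ι → K) (i : ι) :
    baseChangeHom L w (1 ⊗ₜ gen w i) = gen _ i := by
  refine (Algebra.TensorProduct.lift_tmul _ _ _ _ _).trans ?_
  rw [map_one, one_mul, lift_gen]

/-- Diagonal Clifford algebras are compatible with extension of scalars. -/
def baseChangeEquiv (w : ι → K) : L ⊗[K] DiagClifford w ≃ₐ[L] DiagClifford (algebraMap K L ∘ w) :=
  AlgEquiv.ofAlgHom (baseChangeHom L w) (lift (isCliffordFamily_one_tmul_gen L w))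
    (algHom_ext fun i => by
      rw [AlgHom.comp_apply, lift_gen, baseChangeHom_one_tmul_gen, AlgHom.id_apply])
    (Algebra.TensorProduct.ext (Subsingleton.elim _ _) (algHom_ext fun i => by
      change lift (isCliffordFamily_one_tmul_gen L w) (baseChangeHom L w (1 ⊗ₜ gen w i)) =
        1 ⊗ₜ gen w i
      rw [baseChangeHom_one_tmul_gen, lift_gen]))

/-- Quaternion algebras are compatible with extension of scalars. -/
def quaternionBaseChangeEquiv (a b : K) :
    L ⊗[K] ℍ[K,a,0,b] ≃ₐ[L] ℍ[L,algebraMap K L a,0,algebraMap K L b] :=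
  have hab : algebraMap K L ∘ ![a, b] = ![algebraMap K L a, algebraMap K L b] :=
    funext (Fin.forall_fin_two.2 ⟨rfl, rfl⟩)
  ((Algebra.TensorProduct.congr .refl (quaternionEquiv a b).symm).trans
    (hab ▸ baseChangeEquiv L ![a, b])).trans (quaternionEquiv _ _)

end baseChange

end DiagClifford

section evenSimilitude

open CliffordAlgebra

variable {K M N : Type*} [CommRing K] [AddCommGroup M] [Module K M] [AddCommGroup N] [Module K N]
  {Q : QuadraticForm K M} {P : QuadraticForm K N}

/-- The homomorphism of even Clifford algebras induced by a linear map multiplying the quadratic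
forms by a unit. -/
def evenHomOfSimilitude (f : M →ₗ[K] N) (c : Kˣ) (h : ∀ m, P (f m) = c * Q m) :
    even Q →ₐ[K] even P :=
  even.lift Q
    { bilin := (↑c⁻¹ : K) • (even.ι P).bilin.compl₁₂ f f
      contract := fun m => by
        simp only [LinearMap.smul_apply, LinearMap.compl₁₂_apply, (even.ι P).contract, h]
        rw [map_mul, ← Algebra.smul_def, smul_smul, c.inv_mul, one_smul]
      contract_mid := fun m₁ m₂ m₃ => by
        simp only [LinearMap.smul_apply, LinearMap.compl₁₂_apply]
        rw [smul_mul_smul_comm, (even.ι P).contract_mid, h, smul_smul, smul_smul, mul_assoc,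
          c.inv_mul_cancel_left, mul_comm] }

theorem evenHomOfSimilitude_ι (f : M →ₗ[K] N) (c : Kˣ) (h : ∀ m, P (f m) = c * Q m) (a b : M) :
    evenHomOfSimilitude f c h ((even.ι Q).bilin a b) =
      (↑c⁻¹ : K) • (even.ι P).bilin (f a) (f b) := by
  rw [evenHomOfSimilitude, even.lift_ι]
  rfl

/-- Similar quadratic forms have isomorphic even Clifford algebras. -/
def evenEquivOfSimilitude (f : M ≃ₗ[K] N) (c : Kˣ) (h : ∀ m, P (f m) = c * Q m) :
    even Q ≃ₐ[K] even P :=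
  have h' (n : N) : Q (f.symm n) = ↑c⁻¹ * P n := by
    rw [c.eq_inv_mul_iff_mul_eq, ← h, f.apply_symm_apply]
  AlgEquiv.ofAlgHom (evenHomOfSimilitude f.toLinearMap c h)
    (evenHomOfSimilitude f.symm.toLinearMap c⁻¹ h')
    (even.algHom_ext _ <| by
      ext a b : 3
      simp [evenHomOfSimilitude_ι, smul_smul])
    (even.algHom_ext _ <| by
      ext a b : 3
      simp [evenHomOfSimilitude_ι, smul_smul])

end evenSimilitude

namespace DiagClifford

/-- The even Clifford algebra of a diagonal form is a Clifford algebra in one dimension less. -/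
def evenEquiv {K : Type*} [Field K] {n : ℕ} {w : Fin (n + 1) → K} (h0 : w 0 ≠ 0) :
    CliffordAlgebra.even (QuadraticMap.weightedSumSquares K w) ≃ₐ[K]
      DiagClifford fun i : Fin n => -w 0 * w i.succ :=
  let f : (Fin (n + 1) → K) ≃ₗ[K] (Fin n → K) × K :=
    (Fin.consLinearEquiv K fun _ => K).symm ≪≫ₗ LinearEquiv.prodComm K _ _ ≪≫ₗ
      LinearEquiv.prodCongr (.refl K _) (LinearEquiv.smulOfNeZero K K (w 0) h0)
  (evenEquivOfSimilitude (P := CliffordAlgebra.EquivEven.Q' _) f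
    (Units.mk0 (-w 0) (neg_ne_zero.2 h0)) fun v => by
      rw [CliffordAlgebra.EquivEven.Q'_apply, QuadraticMap.weightedSumSquares_apply,
        QuadraticMap.weightedSumSquares_apply, Fin.sum_univ_succ, mul_add, Finset.mul_sum]
      simp [f, Fin.tail, mul_assoc, mul_left_comm, add_comm, sub_eq_add_neg]).trans
    (CliffordAlgebra.equivEven _).symm

end DiagClifford

theorem IsCliffordFamily.update_orderedProd {K A : Type*} [CommRing K] [Ring A] [Algebra K A]
    {n : ℕ} {w : Fin n → K} {e : Fin n → A} (he : IsCliffordFamily w e) (hn : Even n) (j : Fin n) :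
    IsCliffordFamily (Function.update w j (signedDisc w))
      (Function.update e j (orderedProd e)) where
  mul_self i := by
    rcases eq_or_ne i j with rfl | hij
    · simp only [Function.update_self, he.orderedProd_mul_self]
    · simp only [Function.update_of_ne hij, he.mul_self]
  anticomm {i l} hil := by
    rcases eq_or_ne i j with rfl | hij
    · rw [Function.update_self, Function.update_of_ne hil.symm, he.anticomm_orderedProd hn, neg_neg]
    · rcases eq_or_ne l j with rfl | hlj
      · rw [Function.update_self, Function.update_of_ne hil, he.anticomm_orderedProd hn]
      · rw [Function.update_of_ne hij, Function.update_of_ne hlj, he.anticomm hil]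

/-- The coefficients of a form whose Clifford algebra is the part of the even Clifford algebra of
`w` complementary to its centre. -/
def evenCore {K : Type*} [CommRing K] {n : ℕ} (w : Fin (n + 2) → K) (i : Fin n) : K :=
  -w 0 * w i.succ.succ

theorem evenCore_ne_zero {K : Type*} [Field K] {n : ℕ} {w : Fin (n + 2) → K} (hw : ∀ i, w i ≠ 0)
    (i : Fin n) : evenCore w i ≠ 0 :=
  mul_ne_zero (neg_ne_zero.2 (hw 0)) (hw _)

theorem evenCore_map {K L : Type*} [CommRing K] [CommRing L] (f : K →+* L) {n : ℕ}
    (w : Fin (n + 2) → K) : evenCore (f ∘ w) = f ∘ evenCore w := by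
  ext i
  simp [evenCore]

theorem signedDisc_evenCore_mul {K : Type*} [CommRing K] {m : ℕ} (w : Fin (2 * m + 2) → K) :
    signedDisc (evenCore w) * (-w 0 * w 1) = (w 0 ^ m) ^ 2 * signedDisc w := by
  have hchoose : (2 * m + 2).choose 2 = (2 * m).choose 2 + 2 * (2 * m) + 1 := by
    simp [Nat.choose_succ_succ']
    ring
  simp only [signedDisc, evenCore, Finset.prod_mul_distrib, Finset.prod_const, Finset.card_univ,
    Fintype.card_fin, Fin.prod_univ_succ, hchoose, pow_add, pow_mul, neg_sq, one_pow]
  rw [Fin.succ_zero_eq_one]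
  ring

namespace DiagClifford

variable {K : Type*} [Field K]

/-- The even Clifford algebra of a form of even dimension, as a central simple algebra tensored with
its center. -/
def evenTensorEquiv {m : ℕ} {w : Fin (2 * m + 2) → K} (hw : ∀ i, w i ≠ 0) :
    CliffordAlgebra.even (QuadraticMap.weightedSumSquares K w) ≃ₐ[K]
      DiagClifford (evenCore w) ⊗[K] QuadraticAlgebra K ((w 0 ^ m) ^ 2 * signedDisc w) 0 :=
  have hσ (i : Fin (2 * m + 1)) : -w 0 * w i.succ = 1 ^ 2 *
      (Sum.elim (evenCore w) fun _ : PUnit.{1} => -w 0 * w 1)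
        (((finSuccEquiv _).trans (Equiv.optionEquivSumPUnit _)) i) := by
    cases i using Fin.cases <;> simp [evenCore]
  (evenEquiv (hw 0)).trans <| (equivOfSquares _ (fun _ => one_ne_zero) hσ).trans <|
    (sumEquiv (even_two_mul m) (evenCore_ne_zero hw) _).trans <|
      Algebra.TensorProduct.congr .refl (signedDisc_evenCore_mul w ▸ quadraticEquiv _)

theorem nonempty_equiv_update (h2 : (2 : K) ≠ 0) {m : ℕ} {w : Fin (2 * m) → K} (hw : ∀ i, w i ≠ 0)
    (j : Fin (2 * m)) :
    Nonempty (DiagClifford (Function.update w j (signedDisc w)) ≃ₐ[K] DiagClifford w) := by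
  have hw' : ∀ i, Function.update w j (signedDisc w) i ≠ 0 :=
    (Function.forall_update_iff w fun _ x => x ≠ 0).2 ⟨signedDisc_ne_zero hw, fun i _ => hw i⟩
  have hC := isCentralSimple h2 hw
  have := hC.isSimpleRing
  have := hC.finiteDimensional
  exact (isCentralSimple h2 hw').nonempty_algEquiv (by rw [finrank_eq hw', finrank_eq hw])
    (lift ((isCliffordFamily_gen w).update_orderedProd (even_two_mul m) j))

theorem brauerEquivalent_evenCore (h2 : (2 : K) ≠ 0) {m : ℕ} {w : Fin (2 * m + 2) → K}
    (hw : ∀ i, w i ≠ 0) (hsq : IsSquare (signedDisc w)) :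
    BrauerEquivalent K (DiagClifford w) (DiagClifford (evenCore w)) := by
  obtain ⟨f⟩ := nonempty_equiv_update h2 (m := m + 1) hw 1
  set v : Fin (2 * m + 2) → K := Function.update w 1 (signedDisc w) with hv
  have hv0 : v 0 = w 0 := Function.update_of_ne zero_ne_one _ _
  have hv1 : v 1 = signedDisc w := Function.update_self _ _ _
  have hδ : signedDisc w ≠ 0 := signedDisc_ne_zero hw
  have hsplit : IsSplit K ℍ[K,v 0,0,v 1] :=
    isSplit_quaternionAlgebra_of_isSquare h2 (hv0 ▸ hw 0) (hv1 ▸ hδ) (hv1 ▸ hsq)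
  obtain ⟨s, hs⟩ := hsq
  have hs0 : s ≠ 0 := by
    rintro rfl
    exact hδ (by simpa using hs)
  have htail (i : Fin (2 * m)) :
      -(v 0 * v 1) * v i.succ.succ = s ^ 2 * evenCore w (Equiv.refl _ i) := by
    rw [hv0, hv1, hv, Function.update_of_ne (Fin.succ_succ_ne_one i), hs, Equiv.refl_apply,
      evenCore]
    ring
  exact (BrauerEquivalent.of_algEquiv f.symm).trans <|
    (BrauerEquivalent.of_algEquiv (quaternionTensorEquiv v (hv0 ▸ hw 0) (hv1 ▸ hδ))).trans <|
      (BrauerEquivalent.tensorProduct_of_isSplit hsplit).trans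
        (BrauerEquivalent.of_algEquiv (equivOfSquares _ (fun _ => hs0) htail))

end DiagClifford

/-- The center of a matrix ring over a commutative ring is the ring of scalar matrices. -/
def scalarCenterEquiv (ι S : Type*) [CommRing S] [Fintype ι] [DecidableEq ι] [Nonempty ι] :
    S ≃+* Subring.center (Matrix ι ι S) :=
  .ofBijective ((Matrix.scalar ι).codRestrict (Subring.center _) fun s =>
      Subring.mem_center_iff.2 fun M => (Matrix.scalar_commute s (.all s) M).eq.symm)
    ⟨fun _ _ h => Matrix.scalar_inj.1 (congrArg Subtype.val h), fun ⟨M, hM⟩ => by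
      obtain ⟨s, hs⟩ := Matrix.mem_range_scalar_of_commute_single fun i j _ =>
        Subring.mem_center_iff.1 hM (Matrix.single i j 1)
      exact ⟨s, Subtype.ext hs⟩⟩

theorem nonempty_algEquiv_matrix_center {R S ι : Type*} [Ring R] [CommRing S] [Fintype ι]
    [DecidableEq ι] [Nonempty ι] (f : R ≃+* Matrix ι ι S) :
    Nonempty (R ≃ₐ[Subring.center R] Matrix ι ι (Subring.center R)) := by
  let σ : S ≃+* Subring.center R := (scalarCenterEquiv ι S).trans (Subring.centerCongr f.symm)
  refine ⟨AlgEquiv.ofRingEquiv (f := f.trans σ.mapMatrix) fun c => ?_⟩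
  obtain ⟨s, rfl⟩ := σ.surjective c
  have hs : f (algebraMap (Subring.center R) R (σ s)) = Matrix.scalar ι s := f.apply_symm_apply _
  rw [RingEquiv.trans_apply, hs]
  ext i j
  simp [Matrix.algebraMap_matrix_apply, Matrix.diagonal_apply, apply_ite σ]

section sqrt

theorem isSquare_algebraMap_quadraticAlgebra {K : Type*} [CommRing K] (d : K) :
    IsSquare (algebraMap K (QuadraticAlgebra K d 0) d) :=
  ⟨QuadraticAlgebra.omega, by
    rw [QuadraticAlgebra.omega_mul_omega_eq_mk]
    rfl⟩

theorem fact_sq_ne_of_not_isSquare {K : Type*} [CommRing K] {d : K} (hd : ¬IsSquare d) :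
    Fact (∀ r : K, r ^ 2 ≠ d + 0 * r) :=
  ⟨fun r h => hd ⟨r, by rw [← sq, h, zero_mul, add_zero]⟩⟩

theorem exists_finrank_le_two_isSquare {K : Type u} [Field K] (d : K) :
    ∃ (L : Type u) (_ : Field L) (_ : Algebra K L), Module.Finite K L ∧ finrank K L ≤ 2 ∧
      IsSquare (algebraMap K L d) := by
  by_cases hd : IsSquare d
  · exact ⟨K, inferInstance, inferInstance, inferInstance, by simp, hd⟩
  · have := fact_sq_ne_of_not_isSquare hd
    exact ⟨QuadraticAlgebra K d 0, inferInstance, inferInstance, inferInstance,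
      (QuadraticAlgebra.finrank_eq_two d 0).le, isSquare_algebraMap_quadraticAlgebra d⟩

theorem exists_isSquare_not_isSplit {K : Type u} [Field K] {A : Type*} [Ring A] [Algebra K A]
    {n : ℕ} (d : K) (hA : ¬Nonempty (A ⊗[K] QuadraticAlgebra K d 0 ≃+*
      Matrix (Fin n) (Fin n) (QuadraticAlgebra K d 0))) :
    ∃ (L : Type u) (_ : Field L) (_ : Algebra K L), IsSquare (algebraMap K L d) ∧
      ¬Nonempty (L ⊗[K] A ≃ₐ[L] Matrix (Fin n) (Fin n) L) := by
  by_cases hd : IsSquare d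
  · refine ⟨K, inferInstance, inferInstance, hd, fun ⟨f⟩ => hA ⟨?_⟩⟩
    exact ((Algebra.TensorProduct.comm K _ _).trans <| (Algebra.TensorProduct.congr .refl
      ((Algebra.TensorProduct.lid K A).symm.trans f)).trans
        (matrixEquivTensor (Fin n) K _).symm).toRingEquiv
  · have := fact_sq_ne_of_not_isSquare hd
    exact ⟨QuadraticAlgebra K d 0, inferInstance, inferInstance,
      isSquare_algebraMap_quadraticAlgebra d, fun ⟨f⟩ => hA
        ⟨(Algebra.TensorProduct.comm K _ _).toRingEquiv.trans f.toRingEquiv⟩⟩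

end sqrt

theorem algebraMap_comp_ne_zero {K L ι : Type*} [Field K] [Field L] [Algebra K L] {w : ι → K}
    (hw : ∀ i, w i ≠ 0) (i : ι) : (algebraMap K L ∘ w) i ≠ 0 :=
  (map_ne_zero (algebraMap K L)).2 (hw i)

theorem map_signedDisc {K L : Type*} [CommRing K] [CommRing L] (f : K →+* L) {n : ℕ}
    (w : Fin n → K) : f (signedDisc w) = signedDisc (f ∘ w) := by
  simp [signedDisc]

namespace DiagClifford

theorem exists_isSquare_not_isSplit_evenCore {K : Type u} [Field K] {M : Type*} [AddCommGroup M]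
    [Module K M] {q : QuadraticForm K M} {m : ℕ} {w : Fin (2 * m + 2) → K} (hw : ∀ i, w i ≠ 0)
    (e : q.IsometryEquiv (QuadraticMap.weightedSumSquares K w))
    (hq : ¬Nonempty (CliffordAlgebra.even q ≃ₐ[Subring.center (CliffordAlgebra.even q)]
      Matrix (Fin (2 ^ m)) (Fin (2 ^ m)) (Subring.center (CliffordAlgebra.even q)))) :
    ∃ (L : Type u) (_ : Field L) (_ : Algebra K L), IsSquare (signedDisc (algebraMap K L ∘ w)) ∧
      ¬IsSplit L (DiagClifford (evenCore (algebraMap K L ∘ w))) := by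
  have hm : Nonempty (Fin (2 ^ m)) := ⟨0⟩
  let f : CliffordAlgebra.even q ≃ₐ[K] _ :=
    (evenEquivOfSimilitude e.toLinearEquiv 1 fun v => by simp).trans (evenTensorEquiv hw)
  obtain ⟨L, _, _, hsq, hL⟩ := exists_isSquare_not_isSplit _ fun ⟨g⟩ =>
    hq (nonempty_algEquiv_matrix_center (f.toRingEquiv.trans g))
  refine ⟨L, inferInstance, inferInstance, ?_, fun hsplit => hL ?_⟩
  · have h0 : algebraMap K L (w 0 ^ m) ≠ 0 := by simp [hw 0]
    rw [← map_signedDisc]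
    simpa only [map_mul, map_pow _ _ 2, ← mul_assoc, ← mul_pow, inv_mul_cancel₀ h0, one_pow,
      one_mul] using (IsSquare.sq (algebraMap K L (w 0 ^ m))⁻¹).mul hsq
  · rw [evenCore_map] at hsplit
    obtain ⟨g⟩ := hsplit.nonempty_algEquiv (n := 2 ^ m) (by
      rw [finrank_eq (algebraMap_comp_ne_zero (evenCore_ne_zero hw)), pow_right_comm]
      norm_num)
    exact ⟨(baseChangeEquiv L _).trans g⟩

end DiagClifford

theorem two_ne_zero_of_algebra {K A : Type*} [Field K] [Ring A] [Nontrivial A] [Algebra K A]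
    (h2 : (2 : K) ≠ 0) : (2 : A) ≠ 0 := by
  rw [← map_ofNat (algebraMap K A)]
  exact (map_ne_zero _).2 h2

theorem anisotropic_neg_neg_mul_of_noZeroDivisors {K : Type*} [CommRing K] {a b : K}
    [NoZeroDivisors ℍ[K,a,0,b]] :
    (QuadraticMap.weightedSumSquares K ![-a, -b, a * b]).Anisotropic := by
  intro v hv
  rw [QuadraticMap.weightedSumSquares_apply, Fin.sum_univ_three] at hv
  simp only [Matrix.cons_val, smul_eq_mul] at hv
  let p : ℍ[K,a,0,b] := ⟨0, v 0, v 1, v 2⟩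
  have hpp : p * p = 0 := by
    ext <;> simp only [p, QuaternionAlgebra.re_mul, QuaternionAlgebra.imI_mul,
      QuaternionAlgebra.imJ_mul, QuaternionAlgebra.imK_mul, QuaternionAlgebra.re_zero,
      QuaternionAlgebra.imI_zero, QuaternionAlgebra.imJ_zero, QuaternionAlgebra.imK_zero]
    · linear_combination -hv
    all_goals ring
  have hp := QuaternionAlgebra.ext_iff.1 (mul_self_eq_zero.1 hpp)
  ext i
  fin_cases i
  exacts [hp.2.1, hp.2.2.1, hp.2.2.2]

section DivisionAlgebra

variable {K D : Type*} [Field K] [DivisionRing D] [Algebra K D] [FiniteDimensional K D]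

/-- Evaluation at `x`, as an embedding of the field `K[X] / minpoly K x`. -/
def adjoinRootMinpolyHom (x : D) : AdjoinRoot (minpoly K x) →ₐ[K] D :=
  Ideal.Quotient.liftₐ _ (Polynomial.aeval x) fun p hp => by
    obtain ⟨r, rfl⟩ := Ideal.mem_span_singleton.1 hp
    rw [map_mul, minpoly.aeval, zero_mul]

theorem finrank_adjoinRoot_minpoly (x : D) :
    finrank K (AdjoinRoot (minpoly K x)) = (minpoly K x).natDegree := by
  have hx : minpoly K x ≠ 0 := minpoly.ne_zero (Algebra.IsIntegral.isIntegral x)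
  rw [(AdjoinRoot.powerBasis hx).finrank, AdjoinRoot.powerBasis_dim]

variable (K) in
theorem natDegree_minpoly_dvd_finrank (x : D) : (minpoly K x).natDegree ∣ finrank K D := by
  have : Fact (Irreducible (minpoly K x)) :=
    ⟨minpoly.irreducible (Algebra.IsIntegral.isIntegral x)⟩
  let _ : Module (AdjoinRoot (minpoly K x)) D :=
    Module.compHom D (adjoinRootMinpolyHom x).toRingHom
  have : IsScalarTower K (AdjoinRoot (minpoly K x)) D := ⟨fun c p d => by
    change adjoinRootMinpolyHom x (c • p) * d = c • (adjoinRootMinpolyHom x p * d)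
    rw [map_smul, smul_mul_assoc]⟩
  rw [← finrank_adjoinRoot_minpoly]
  exact ⟨_, (finrank_mul_finrank K (AdjoinRoot (minpoly K x)) D).symm⟩

theorem mem_center_of_natDegree_minpoly_eq_finrank {x : D}
    (hx : (minpoly K x).natDegree = finrank K D) : x ∈ Subalgebra.center K D := by
  have hint : IsIntegral K x := Algebra.IsIntegral.isIntegral x
  have : Fact (Irreducible (minpoly K x)) := ⟨minpoly.irreducible hint⟩
  have := (minpoly.monic hint).finite_adjoinRoot
  have hsurj : Function.Surjective (adjoinRootMinpolyHom (K := K) x) :=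
    (LinearMap.injective_iff_surjective_of_finrank_eq_finrank
      (f := (adjoinRootMinpolyHom (K := K) x).toLinearMap)
      ((finrank_adjoinRoot_minpoly x).trans hx)).1
      (adjoinRootMinpolyHom (K := K) x).toRingHom.injective
  refine Subalgebra.mem_center_iff.2 fun y => ?_
  obtain ⟨r, rfl⟩ := hsurj y
  obtain ⟨p, hp⟩ := hsurj x
  have h := congrArg (adjoinRootMinpolyHom (K := K) x) (mul_comm r p)
  rwa [map_mul, map_mul, hp] at h

theorem natDegree_minpoly_eq_two [Algebra.IsCentral K D] (h4 : finrank K D = 4) {x : D}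
    (hx : x ∉ Subalgebra.center K D) : (minpoly K x).natDegree = 2 := by
  have hdvd : (minpoly K x).natDegree ∣ 2 ^ 2 := by
    simpa [h4] using natDegree_minpoly_dvd_finrank K x
  have h1 : (minpoly K x).natDegree ≠ 1 := fun h => hx <|
    Algebra.IsCentral.center_eq_bot K D ▸ Algebra.mem_bot.2 (minpoly.natDegree_eq_one_iff.1 h)
  have h4 : (minpoly K x).natDegree ≠ 4 := fun h =>
    hx (mem_center_of_natDegree_minpoly_eq_finrank (h.trans h4.symm))
  obtain ⟨i, hi, h⟩ := (Nat.dvd_prime_pow Nat.prime_two).1 hdvd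
  interval_cases i <;> omega

theorem exists_mul_self_eq_add {A : Type*} [Ring A] [Algebra K A] {x : A}
    (hx : (minpoly K x).natDegree = 2) :
    ∃ β γ : K, x * x = β • x + algebraMap K A γ := by
  have hint : IsIntegral K x := by
    by_contra h
    simp [minpoly.eq_zero h] at hx
  have hlead : (minpoly K x).coeff 2 = 1 := hx ▸ (minpoly.monic hint).coeff_natDegree
  have h := minpoly.aeval K x
  simp only [Polynomial.aeval_eq_sum_range, hx, Finset.sum_range_succ, Finset.sum_range_zero,
    hlead, pow_zero, pow_one, one_smul, zero_add, sq] at h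
  refine ⟨-(minpoly K x).coeff 1, -(minpoly K x).coeff 0, ?_⟩
  rw [Algebra.algebraMap_eq_smul_one, neg_smul, neg_smul, ← sub_eq_zero, ← h]
  abel

theorem exists_notMem_center_mul_self_eq [Algebra.IsCentral K D] (h2 : (2 : K) ≠ 0)
    (h4 : finrank K D = 4) :
    ∃ (x : D) (a : K), x ∉ Subalgebra.center K D ∧ x * x = algebraMap K D a := by
  obtain ⟨x, hx⟩ : ∃ x : D, x ∉ Subalgebra.center K D := by
    by_contra! h
    have := Subalgebra.bot_eq_top_iff_finrank_eq_one.1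
      ((Algebra.IsCentral.center_eq_bot K D).symm.trans (eq_top_iff.2 fun x _ => h x))
    omega
  obtain ⟨β, γ, hq⟩ := exists_mul_self_eq_add (natDegree_minpoly_eq_two h4 hx)
  refine ⟨x - algebraMap K D (β / 2), γ + (β / 2) ^ 2, fun h => hx ?_, ?_⟩
  · simpa using add_mem h (Subalgebra.algebraMap_mem _ (β / 2))
  · simp only [Algebra.algebraMap_eq_smul_one] at hq ⊢
    simp only [sub_mul, mul_sub, hq, smul_mul_assoc, mul_smul_comm, one_mul, mul_one]
    match_scalars <;> field_simp <;> ring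

theorem exists_isCliffordFamily_pair [Algebra.IsCentral K D] (h2 : (2 : K) ≠ 0)
    (h4 : finrank K D = 4) :
    ∃ (a b : K) (x y : D), x ≠ 0 ∧ y ≠ 0 ∧ IsCliffordFamily ![a, b] ![x, y] := by
  obtain ⟨x, a, hx, hxx⟩ := exists_notMem_center_mul_self_eq h2 h4 (D := D)
  obtain ⟨z, hz⟩ : ∃ z, z * x ≠ x * z := by
    by_contra! h
    exact hx (Subalgebra.mem_center_iff.2 h)
  -- When `x²` is central, `x * z - z * x` anticommutes with `x`.
  let y : D := x * z - z * x
  have hx0 : x ≠ 0 := fun h => hx (h ▸ zero_mem _)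
  have hy0 : y ≠ 0 := sub_ne_zero.2 hz.symm
  have hxy : x * y = -(y * x) := by
    simp only [y, sub_mul, mul_sub]
    rw [mul_assoc z x x, ← mul_assoc x x z, hxx, Algebra.commutes, ← mul_assoc]
    abel
  have h2D : (2 : D) ≠ 0 := two_ne_zero_of_algebra h2
  have hne : y * x ≠ -(y * x) := fun h =>
    mul_ne_zero h2D (mul_ne_zero hy0 hx0) (by rw [two_mul, ← eq_neg_iff_add_eq_zero, ← h])
  have hy : y ∉ Subalgebra.center K D := fun h =>
    hne ((Subalgebra.mem_center_iff.1 h x).symm.trans hxy)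
  obtain ⟨β, b, hyy⟩ := exists_mul_self_eq_add (natDegree_minpoly_eq_two h4 hy)
  have hcomm : x * (y * y) = y * y * x := by
    rw [← mul_assoc, hxy, neg_mul, mul_assoc, hxy, mul_neg, neg_neg, mul_assoc]
  have hβ : β = 0 := by
    by_contra hβ
    rw [hyy, add_mul, mul_add, Algebra.commutes b x, add_left_inj, smul_mul_assoc,
      mul_smul_comm, hxy] at hcomm
    exact hne (smul_right_injective D hβ hcomm).symm
  exact ⟨a, b, x, y, hx0, hy0, .pair hxx (by rw [hyy, hβ, zero_smul, zero_add]) hxy⟩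

theorem exists_algEquiv_quaternionAlgebra [Algebra.IsCentral K D] (h2 : (2 : K) ≠ 0)
    (h4 : finrank K D = 4) : ∃ a b : K, Nonempty (D ≃ₐ[K] ℍ[K,a,0,b]) := by
  obtain ⟨a, b, x, y, hx, hy, h⟩ := exists_isCliffordFamily_pair (D := D) h2 h4
  have ha : a ≠ 0 := by
    rintro rfl
    exact hx (mul_self_eq_zero.1 (by simpa using h.mul_self 0))
  have hb : b ≠ 0 := by
    rintro rfl
    exact hy (mul_self_eq_zero.1 (by simpa using h.mul_self 1))
  obtain ⟨f⟩ := (IsCentralSimple.quaternionAlgebra h2 ha hb).nonempty_algEquiv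
    (by rw [QuaternionAlgebra.finrank_eq_four, h4])
    ((DiagClifford.lift h).comp (DiagClifford.quaternionEquiv a b).symm.toAlgHom)
  exact ⟨a, b, ⟨f.symm⟩⟩

end DivisionAlgebra

section MatrixModule

variable {K D M : Type*} [Field K] [DivisionRing D] [Algebra K D] [AddCommGroup M] [Module K M]
  {n : ℕ} [NeZero n]

theorem exists_single_apply_ne_zero [Nontrivial M]
    (f : Matrix (Fin n) (Fin n) D →ₐ[K] Module.End K M) :
    ∃ m, f (Matrix.single 0 0 1) m ≠ 0 := by
  by_contra! h
  obtain ⟨m, hm⟩ := exists_ne (0 : M)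
  have hone : (1 : Matrix (Fin n) (Fin n) D) =
      ∑ i, Matrix.single i 0 1 * Matrix.single 0 0 1 * Matrix.single 0 i 1 := by
    simp only [Matrix.single_mul_single_same, mul_one]
    exact Matrix.sum_single_one.symm
  refine hm ?_
  rw [← Module.End.one_apply (R := K) m, ← map_one f, hone, map_sum, LinearMap.sum_apply]
  refine Finset.sum_eq_zero fun i _ => ?_
  rw [map_mul, map_mul, Module.End.mul_apply, Module.End.mul_apply, h, map_zero]

/-- The action on `m` of the matrices supported on the first column. -/
def firstColumnMap (f : Matrix (Fin n) (Fin n) D →ₐ[K] Module.End K M) (m : M) :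
    (Fin n → D) →ₗ[K] M where
  toFun v := f (∑ i, Matrix.single i 0 (v i)) m
  map_add' v w := by simp [Matrix.single_add, Finset.sum_add_distrib]
  map_smul' c v := by
    simp only [RingHom.id_apply, Pi.smul_apply, ← Matrix.smul_single]
    rw [← Finset.smul_sum, map_smul, LinearMap.smul_apply]

theorem firstColumnMap_injective (f : Matrix (Fin n) (Fin n) D →ₐ[K] Module.End K M) {m : M}
    (hm : f (Matrix.single 0 0 1) m ≠ 0) : Function.Injective (firstColumnMap f m) := by
  refine (injective_iff_map_eq_zero _).2 fun v (hv : f (∑ j, Matrix.single j 0 (v j)) m = 0) => ?_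
  ext i
  by_contra! hi
  have hsingle : (Matrix.single 0 0 1 : Matrix (Fin n) (Fin n) D) =
      Matrix.single 0 i (v i)⁻¹ * ∑ j, Matrix.single j 0 (v j) := by
    rw [Finset.mul_sum, Finset.sum_eq_single i
      (fun j _ hj => Matrix.single_mul_single_of_ne _ _ _ _ hj.symm _) (by simp),
      Matrix.single_mul_single_same, inv_mul_cancel₀ hi]
  exact hm (by rw [hsingle, map_mul, Module.End.mul_apply, hv, map_zero])

theorem mul_finrank_le_of_matrix [FiniteDimensional K D] [FiniteDimensional K M] [Nontrivial M]
    (f : Matrix (Fin n) (Fin n) D →ₐ[K] Module.End K M) : n * finrank K D ≤ finrank K M := by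
  obtain ⟨m, hm⟩ := exists_single_apply_ne_zero f
  simpa [finrank_pi_fintype] using
    LinearMap.finrank_le_finrank_of_injective (firstColumnMap_injective f hm)

end MatrixModule

theorem IsCentralSimple.isCentral_of_matrix {K D ι : Type*} [Field K] [Ring D] [Algebra K D]
    [Fintype ι] [DecidableEq ι] [Nonempty ι] (h : IsCentralSimple K (Matrix ι ι D)) :
    Algebra.IsCentral K D where
  out z hz := by
    have hz' : Matrix.scalar ι z ∈ Subalgebra.center K (Matrix ι ι D) :=
      Subalgebra.mem_center_iff.2 fun M =>
        (Matrix.scalar_commute z (fun r => (Subalgebra.mem_center_iff.1 hz r).symm) M).symm.eq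
    obtain ⟨c, hc⟩ := Algebra.mem_bot.1 (h.isCentral.out hz')
    obtain ⟨i⟩ := ‹Nonempty ι›
    exact Algebra.mem_bot.2 ⟨c, by simpa [Matrix.algebraMap_matrix_apply] using congr($hc i i)⟩

theorem eq_one_or_eq_four_of_sq_eq {N n d : ℕ} (hn : n ≠ 0) (hd : d ≠ 0) (h : N ^ 2 = n ^ 2 * d)
    (hle : n * d ≤ 2 * N) : d = 1 ∨ d = 4 := by
  obtain ⟨k, rfl⟩ := (Nat.pow_dvd_pow_iff two_ne_zero).1 ⟨d, h⟩
  obtain rfl : k ^ 2 = d := Nat.eq_of_mul_eq_mul_left (by positivity) ((mul_pow n k 2).symm.trans h)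
  have hk : k ≤ 2 := by
    have hk0 : 0 < n * k :=
      Nat.pos_of_ne_zero (mul_ne_zero hn (pow_ne_zero_iff two_ne_zero |>.1 hd))
    exact Nat.le_of_mul_le_mul_left (by linarith) hk0
  interval_cases k <;> simp_all

/-- The module `M` bounds the index of `A` by `2`. -/
theorem IsCentralSimple.isSplit_or_exists_brauerEquivalent_quaternionAlgebra {K A M : Type*}
    [Field K] (h2 : (2 : K) ≠ 0) [Ring A] [Algebra K A] (hA : IsCentralSimple K A) {N : ℕ}
    (hN : finrank K A = N ^ 2) [AddCommGroup M] [Module K M] [FiniteDimensional K M] [Nontrivial M]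
    (hM : finrank K M ≤ 2 * N) (f : A →ₐ[K] Module.End K M) :
    IsSplit K A ∨ ∃ a b : K, (QuadraticMap.weightedSumSquares K ![-a, -b, a * b]).Anisotropic ∧
      BrauerEquivalent K A ℍ[K,a,0,b] := by
  have := hA.isSimpleRing
  have := hA.finiteDimensional
  have : IsArtinianRing A := .of_finite K A
  obtain ⟨n, hn, D, _, _, _, ⟨e⟩⟩ := IsSimpleRing.exists_algEquiv_matrix_divisionRing_finite K A
  have : Algebra.IsCentral K D := (hA.of_algEquiv e).isCentral_of_matrix
  have hND : N ^ 2 = n ^ 2 * finrank K D := by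
    rw [← hN, e.toLinearEquiv.finrank_eq, finrank_matrix, Fintype.card_fin, sq]
  have hle := (mul_finrank_le_of_matrix (f.comp e.symm.toAlgHom)).trans hM
  rcases eq_one_or_eq_four_of_sq_eq hn.out finrank_pos.ne' hND hle with h1 | h4
  · obtain ⟨g⟩ := (IsCentralSimple.self K).nonempty_algEquiv (B := D)
      (by rw [h1, finrank_self]) (Algebra.ofId K D)
    exact .inl (.of_algEquiv_matrix (e.trans g.symm.mapMatrix))
  · obtain ⟨a, b, ⟨g⟩⟩ := exists_algEquiv_quaternionAlgebra (D := D) h2 h4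
    have : NoZeroDivisors ℍ[K,a,0,b] := g.symm.injective.noZeroDivisors _ (map_zero _) (map_mul _)
    exact .inr ⟨a, b, anisotropic_neg_neg_mul_of_noZeroDivisors,
      .of_matrix ((Matrix.uniqueAlgEquiv (m := Unit)).trans (e.trans g.mapMatrix))⟩

theorem IsCentralSimple.exists_brauerEquivalent_quaternionAlgebra {K L A : Type*} [Field K]
    [Field L] [Algebra K L] [FiniteDimensional K L] [Ring A] [Algebra K A] (h2 : (2 : K) ≠ 0)
    (hA : IsCentralSimple K A) {N : ℕ} (hN : finrank K A = N ^ 2) (hns : ¬IsSplit K A)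
    (hL : finrank K L ≤ 2) (hsplit : IsSplit L (L ⊗[K] A)) :
    ∃ a b : K, (QuadraticMap.weightedSumSquares K ![-a, -b, a * b]).Anisotropic ∧
      BrauerEquivalent K A ℍ[K,a,0,b] := by
  have := hA.isSimpleRing
  have := hA.finiteDimensional
  have : NeZero N := ⟨by
    rintro rfl
    exact finrank_pos.ne' (hN.trans (zero_pow two_ne_zero))⟩
  obtain ⟨g⟩ := hsplit.nonempty_algEquiv (n := N) (by rw [finrank_baseChange, hN])
  let f : A →ₐ[K] Module.End K (Fin N → L) :=
    (Algebra.lsmul K K (Fin N → L) : Matrix (Fin N) (Fin N) L →ₐ[K] _).comp <|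
      (g.toAlgHom.restrictScalars K).comp Algebra.TensorProduct.includeRight
  have hdim : finrank K (Fin N → L) ≤ 2 * N := by
    rw [finrank_pi_fintype, Finset.sum_const, Finset.card_univ, Fintype.card_fin, smul_eq_mul,
      mul_comm]
    exact Nat.mul_le_mul_right N hL
  exact (hA.isSplit_or_exists_brauerEquivalent_quaternionAlgebra h2 hN hdim f).resolve_left hns

namespace DiagClifford

theorem brauerEquivalent_of_isSquare {K : Type*} [Field K] (h2 : (2 : K) ≠ 0) {n : ℕ}
    {w : Fin (n + 2) → K} (h0 : w 0 ≠ 0) (h1 : w 1 ≠ 0) (hsq : IsSquare (w 1)) :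
    BrauerEquivalent K (DiagClifford w)
      (DiagClifford fun i : Fin n => -(w 0 * w 1) * w i.succ.succ) :=
  have := (IsCentralSimple.quaternionAlgebra h2 h0 h1).isSimpleRing
  (BrauerEquivalent.of_algEquiv (quaternionTensorEquiv w h0 h1)).trans
    (.tensorProduct_of_isSplit (isSplit_quaternionAlgebra_of_isSquare h2 h0 h1 hsq))

theorem isSplit_of_isSquare {K : Type*} [Field K] (h2 : (2 : K) ≠ 0) {n : ℕ}
    {w : Fin (n + 2) → K} (h0 : w 0 ≠ 0) (h1 : w 1 ≠ 0) (hsq : IsSquare (w 1))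
    (h : IsSplit K (DiagClifford fun i : Fin n => -(w 0 * w 1) * w i.succ.succ)) :
    IsSplit K (DiagClifford w) :=
  .of_algEquiv (quaternionTensorEquiv w h0 h1)
    ((isSplit_quaternionAlgebra_of_isSquare h2 h0 h1 hsq).tensorProduct h)

/-- Adjoining `√(w 1)` reduces `C(w)` to the Clifford algebra of a form with two variables fewer.
The first such quadratic extension to split the algebra bounds its index by `2`. -/
theorem exists_brauerEquivalent_quaternionAlgebra {m : ℕ} {K : Type u} [Field K]
    (h2 : (2 : K) ≠ 0) {w : Fin (2 * m) → K} (hw : ∀ i, w i ≠ 0)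
    (hns : ¬IsSplit K (DiagClifford w)) :
    ∃ (L : Type u) (_ : Field L) (_ : Algebra K L) (a b : L),
      (QuadraticMap.weightedSumSquares L ![-a, -b, a * b]).Anisotropic ∧
        BrauerEquivalent L (DiagClifford (algebraMap K L ∘ w)) ℍ[L,a,0,b] := by
  induction m generalizing K with
  | zero =>
    have : IsEmpty (Fin (2 * 0)) := Fin.isEmpty'
    exact absurd (.of_algEquiv (emptyEquiv w) (.self K)) hns
  | succ m ih =>
    obtain ⟨E, _, _, _, hE, hsq⟩ := exists_finrank_le_two_isSquare (w 1)
    have h2E : (2 : E) ≠ 0 := two_ne_zero_of_algebra h2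
    let v : Fin (2 * m + 2) → E := algebraMap K E ∘ w
    have hv : ∀ i, v i ≠ 0 := algebraMap_comp_ne_zero hw
    let t : Fin (2 * m) → E := fun i => -(v 0 * v 1) * v i.succ.succ
    have ht (i) : t i ≠ 0 := mul_ne_zero (neg_ne_zero.2 (mul_ne_zero (hv 0) (hv 1))) (hv _)
    by_cases hsplit : IsSplit E (DiagClifford t)
    · have hsplit : IsSplit E (E ⊗[K] DiagClifford w) :=
        .of_algEquiv (baseChangeEquiv E w) (isSplit_of_isSquare h2E (hv 0) (hv 1) hsq hsplit)
      obtain ⟨a, b, han, hab⟩ :=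
        (isCentralSimple h2 hw).exists_brauerEquivalent_quaternionAlgebra h2
          (N := 2 ^ (m + 1)) (by rw [finrank_eq hw, pow_right_comm]; norm_num) hns hE hsplit
      exact ⟨K, inferInstance, inferInstance, a, b, han, hab⟩
    · obtain ⟨L, _, _, a, b, han, hab⟩ := ih h2E ht hsplit
      let _ : Algebra K L := ((algebraMap E L).comp (algebraMap K E)).toAlgebra
      have h2L : (2 : L) ≠ 0 := two_ne_zero_of_algebra h2E
      have hv' : ∀ i, (algebraMap E L ∘ v) i ≠ 0 := algebraMap_comp_ne_zero hv
      have htail : algebraMap E L ∘ t = fun i =>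
          -(algebraMap E L (v 0) * algebraMap E L (v 1)) * algebraMap E L (v i.succ.succ) :=
        funext fun i => by simp [t]
      rw [htail] at hab
      exact ⟨L, inferInstance, inferInstance, a, b, han,
        (brauerEquivalent_of_isSquare h2L (hv' 0) (hv' 1) (hsq.map (algebraMap E L))).trans hab⟩

end DiagClifford

theorem anisotropic_algebraMap_comp {R K ι : Type*} [CommRing R] [IsDomain R] [Field K]
    [Algebra R K] [IsFractionRing R K] [Fintype ι] {w : ι → R}
    (hw : (QuadraticMap.weightedSumSquares R w).Anisotropic) :
    (QuadraticMap.weightedSumSquares K (algebraMap R K ∘ w)).Anisotropic := by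
  intro v hv
  obtain ⟨⟨b, hb⟩, hint⟩ :=
    IsLocalization.exist_integer_multiples_of_finite (nonZeroDivisors R) v
  choose p hp using hint
  simp only [Algebra.smul_def] at hp
  have hb0 : algebraMap R K b ≠ 0 := IsFractionRing.to_map_ne_zero_of_mem_nonZeroDivisors hb
  have hp0 : p = 0 := hw p <| IsFractionRing.injective R K <| by
    rw [QuadraticMap.weightedSumSquares_apply] at hv ⊢
    simp only [map_sum, map_mul, smul_eq_mul, hp, map_zero]
    rw [← mul_zero (algebraMap R K b ^ 2), ← hv, Finset.mul_sum]
    exact Finset.sum_congr rfl fun i _ => by rw [smul_eq_mul, Function.comp_apply]; ring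
  ext i
  refine (mul_eq_zero.1 ((hp i).symm.trans ?_)).resolve_left hb0
  rw [hp0, Pi.zero_apply, map_zero]

section Polynomial

open Polynomial

variable {F ι κ : Type*} [Field F] [Fintype ι] [Fintype κ] {φ : ι → F} {ψ : κ → F}

theorem exists_eq_X_smul_of_weightedSumSquares_eq_zero
    (hφ : (QuadraticMap.weightedSumSquares F φ).Anisotropic)
    (hψ : (QuadraticMap.weightedSumSquares F ψ).Anisotropic) {p : ι ⊕ κ → F[X]}
    (hp : QuadraticMap.weightedSumSquares F[X] (Sum.elim (C ∘ φ) fun j => X * C (ψ j)) p = 0) :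
    ∃ r, p = (X : F[X]) • r := by
  simp only [QuadraticMap.weightedSumSquares_apply, Fintype.sum_sum_type, Sum.elim_inl,
    Sum.elim_inr, Function.comp_apply, smul_eq_mul] at hp
  have hinl : (fun i => (p (.inl i)).eval 0) = 0 := hφ _ <| by
    simpa [eval_finsetSum, QuadraticMap.weightedSumSquares_apply] using congrArg (eval 0) hp
  choose r hr using fun i => X_dvd_iff.2 ((coeff_zero_eq_eval_zero _).trans (congrFun hinl i))
  have hp' : X * ∑ i, C (φ i) * (r i * r i) + ∑ j, C (ψ j) * (p (.inr j) * p (.inr j)) = 0 := by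
    refine mul_left_cancel₀ (X_ne_zero (R := F)) ?_
    rw [mul_zero, ← hp, mul_add, Finset.mul_sum, Finset.mul_sum, Finset.mul_sum]
    exact congrArg₂ _ (Finset.sum_congr rfl fun i _ => by rw [hr]; ring)
      (Finset.sum_congr rfl fun j _ => by ring)
  have hinr : (fun j => (p (.inr j)).eval 0) = 0 := hψ _ <| by
    simpa [eval_finsetSum, QuadraticMap.weightedSumSquares_apply] using congrArg (eval 0) hp'
  choose s hs using fun j => X_dvd_iff.2 ((coeff_zero_eq_eval_zero _).trans (congrFun hinr j))
  exact ⟨Sum.elim r s, funext <| Sum.rec hr hs⟩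

theorem anisotropic_sumElim_C_X_mul_C (hφ : (QuadraticMap.weightedSumSquares F φ).Anisotropic)
    (hψ : (QuadraticMap.weightedSumSquares F ψ).Anisotropic) :
    (QuadraticMap.weightedSumSquares F[X]
      (Sum.elim (C ∘ φ) fun j => X * C (ψ j))).Anisotropic := by
  have hdvd (n : ℕ) {p : ι ⊕ κ → F[X]} (hp : QuadraticMap.weightedSumSquares F[X]
      (Sum.elim (C ∘ φ) fun j => X * C (ψ j)) p = 0) (i : ι ⊕ κ) : X ^ n ∣ p i := by
    induction n generalizing p with
    | zero => exact one_dvd _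
    | succ n ih =>
      obtain ⟨r, rfl⟩ := exists_eq_X_smul_of_weightedSumSquares_eq_zero hφ hψ hp
      rw [QuadraticMap.map_smul, smul_eq_mul] at hp
      rw [pow_succ']
      exact mul_dvd_mul_left X
        (ih ((mul_eq_zero.1 hp).resolve_left (mul_ne_zero X_ne_zero X_ne_zero)))
  intro p hp
  ext1 i
  by_contra! hi
  have hle := natDegree_le_of_dvd (hdvd ((p i).natDegree + 1) hp i) hi
  rw [natDegree_X_pow] at hle
  omega

theorem anisotropic_sumElim_ratFunc (hφ : (QuadraticMap.weightedSumSquares F φ).Anisotropic)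
    (hψ : (QuadraticMap.weightedSumSquares F ψ).Anisotropic) :
    (QuadraticMap.weightedSumSquares (RatFunc F) (Sum.elim (algebraMap F (RatFunc F) ∘ φ)
      fun j => RatFunc.X * algebraMap F (RatFunc F) (ψ j))).Anisotropic := by
  convert anisotropic_algebraMap_comp (K := RatFunc F) (anisotropic_sumElim_C_X_mul_C hφ hψ)
    using 2
  ext (i | j)
  · simp [RatFunc.algebraMap_eq_C]
  · rw [Function.comp_apply, Sum.elim_inr, Sum.elim_inr, map_mul, RatFunc.algebraMap_X,
      RatFunc.algebraMap_C, RatFunc.algebraMap_eq_C]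

end Polynomial

namespace DiagClifford

variable {K : Type*} [Field K]

theorem brauerEquivalent_quaternionAlgebra_tensorProduct (h2 : (2 : K) ≠ 0) {n : ℕ} {u v p : K}
    (hu : u ≠ 0) (hv : v ≠ 0) (hp : p ≠ 0) (r : Fin n → K) :
    BrauerEquivalent K
      (DiagClifford (Matrix.vecCons u (Matrix.vecCons v
        (Matrix.vecCons p (Matrix.vecCons (-(u * v)) r)))))
      (ℍ[K,u,0,v] ⊗[K] DiagClifford fun i => -p * r i) := by
  have huv : -(u * v) ≠ 0 := neg_ne_zero.2 (mul_ne_zero hu hv)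
  let w : Fin (n + 2) → K := fun i =>
    -(u * v) * Matrix.vecCons p (Matrix.vecCons (-(u * v)) r) i
  have hquat : BrauerEquivalent K _ (ℍ[K,u,0,v] ⊗[K] DiagClifford w) :=
    .of_algEquiv (quaternionTensorEquiv (Matrix.vecCons u (Matrix.vecCons v
        (Matrix.vecCons p (Matrix.vecCons (-(u * v)) r)))) hu hv)
  have htail : BrauerEquivalent K (DiagClifford w) (DiagClifford fun i => -p * r i) :=
    (brauerEquivalent_of_isSquare h2 (mul_ne_zero huv hp) (mul_ne_zero huv huv) ⟨_, rfl⟩).trans <|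
      .of_algEquiv <| equivOfSquares (.refl _) (s := fun _ => (u * v) ^ 2)
        (fun _ => pow_ne_zero 2 (mul_ne_zero hu hv)) fun i => by
          simp only [w, Matrix.cons_val_zero, Matrix.cons_val_one, Matrix.cons_val_succ,
            Equiv.refl_apply]
          ring
  exact hquat.trans ((BrauerEquivalent.of_algEquiv .refl).tensorProduct htail)

end DiagClifford

/-- The coefficients of the generic form `⟨x, y, -xy⟩ ⊥ -⟨a, b, -ab⟩ ⊥ t⟨1, -x, -y, xy⟩`: its
discriminant is trivial and its Clifford algebra is Brauer equivalent to the quaternion algebra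
`(a, b)`. The order of the coefficients allows quaternion algebras to be split off from the left. -/
def genericForm {F : Type*} [CommRing F] (a b x y t : F) : Fin 10 → F :=
  ![x, y, t, -(x * y), -t * x, -t * y, a * b, t * (x * y), -b, -a]

theorem isSquare_signedDisc_genericForm {F : Type*} [CommRing F] (a b x y t : F) :
    IsSquare (signedDisc (genericForm a b x y t)) := by
  refine ⟨(x * y) ^ 2 * (a * b) * t ^ 2, ?_⟩
  simp [signedDisc, genericForm, Fin.prod_univ_succ, show Nat.choose 10 2 = 45 by rfl]
  ring

theorem brauerEquivalent_genericForm {F : Type*} [Field F] (h2 : (2 : F) ≠ 0) {a b x y t : F}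
    (ha : a ≠ 0) (hb : b ≠ 0) (hx : x ≠ 0) (hy : y ≠ 0) (ht : t ≠ 0) :
    BrauerEquivalent F (DiagClifford (genericForm a b x y t)) ℍ[F,a,0,b] := by
  let p : F := -t * (a * b)
  have hp : p ≠ 0 := mul_ne_zero (neg_ne_zero.2 ht) (mul_ne_zero ha hb)
  have hfirst : BrauerEquivalent F (DiagClifford (genericForm a b x y t))
      (ℍ[F,x,0,y] ⊗[F] DiagClifford ![x, y, p, -(x * y), t * b, t * a]) :=
    (DiagClifford.brauerEquivalent_quaternionAlgebra_tensorProduct h2 hx hy ht _).trans <|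
      .of_algEquiv <| Algebra.TensorProduct.congr .refl <|
        DiagClifford.equivOfSquares (.refl _) (s := ![t, t, 1, t, 1, 1])
          (by simp [Fin.forall_fin_succ, ht])
          fun i => by fin_cases i <;> simp [p] <;> ring
  have hsecond : BrauerEquivalent F (DiagClifford ![x, y, p, -(x * y), t * b, t * a])
      (ℍ[F,x,0,y] ⊗[F] ℍ[F,a,0,b]) :=
    (DiagClifford.brauerEquivalent_quaternionAlgebra_tensorProduct h2 hx hy hp _).trans <|
      .of_algEquiv <| Algebra.TensorProduct.congr .refl <|
        (DiagClifford.equivOfSquares (.refl _) (s := ![t * b, t * a])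
          (by simp [Fin.forall_fin_succ, ha, hb, ht])
          fun i => by fin_cases i <;> simp [p] <;> ring).trans (DiagClifford.quaternionEquiv a b)
  have hQ := IsCentralSimple.quaternionAlgebra h2 hx hy
  have := (hQ.tensorProduct hQ).isSimpleRing
  exact hfirst.trans <| ((BrauerEquivalent.of_algEquiv .refl).tensorProduct hsecond).trans <|
    (BrauerEquivalent.of_algEquiv (Algebra.TensorProduct.assoc F F F _ _ _).symm).trans <|
      .tensorProduct_of_isSplit (isSplit_quaternionAlgebra_tensorProduct_self h2 hx hy)

section Anisotropic

variable {F ι κ : Type*} [Field F] [Fintype ι] [Fintype κ]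

theorem anisotropic_comp_injective {w : κ → F}
    (hw : (QuadraticMap.weightedSumSquares F w).Anisotropic) {σ : ι → κ} (hσ : σ.Injective) :
    (QuadraticMap.weightedSumSquares F (w ∘ σ)).Anisotropic := by
  intro v hv
  have hext : Function.extend σ v 0 = 0 := hw _ <| by
    rw [← hv, QuadraticMap.weightedSumSquares_apply, QuadraticMap.weightedSumSquares_apply]
    refine (Fintype.sum_of_injective σ hσ _ _ (fun j hj => ?_) fun i => ?_).symm
    · rw [Function.extend_apply' _ _ _ fun ⟨i, hi⟩ => hj ⟨i, hi⟩, Pi.zero_apply, mul_zero,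
        smul_zero]
    · rw [hσ.extend_apply, Function.comp_apply]
  ext i
  rw [← hσ.extend_apply v 0, hext, Pi.zero_apply, Pi.zero_apply]

theorem ne_zero_of_anisotropic {w : ι → F}
    (hw : (QuadraticMap.weightedSumSquares F w).Anisotropic) (i : ι) : w i ≠ 0 := by
  classical
  intro hi
  have hzero := hw (Pi.single i 1) (by simp [QuadraticMap.weightedSumSquares_apply,
    Pi.single_apply, hi])
  exact one_ne_zero (α := F) (by simpa using congrFun hzero i)

theorem anisotropic_const [Unique ι] {c : F} (hc : c ≠ 0) :
    (QuadraticMap.weightedSumSquares F fun _ : ι => c).Anisotropic := by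
  intro v hv
  ext i
  rw [Unique.eq_default i]
  simpa [hc] using hv

theorem anisotropic_neg {w : ι → F} (hw : (QuadraticMap.weightedSumSquares F w).Anisotropic) :
    (QuadraticMap.weightedSumSquares F (-w)).Anisotropic :=
  fun v hv => hw v <| by simpa using hv

variable (F) in
theorem anisotropic_one_neg_ratFunc_X :
    (QuadraticMap.weightedSumSquares (RatFunc F) ![1, -(RatFunc.X : RatFunc F)]).Anisotropic := by
  have h1 := anisotropic_const (ι := Unit) (one_ne_zero (α := F))
  convert anisotropic_comp_injective (anisotropic_sumElim_ratFunc h1 (anisotropic_neg h1))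
    (σ := ![Sum.inl (), Sum.inr ()]) (by decide) using 2
  ext i
  fin_cases i <;> simp

end Anisotropic

theorem exists_anisotropic_genericForm {L : Type u} [Field L] {a b : L}
    (hab : (QuadraticMap.weightedSumSquares L ![-a, -b, a * b]).Anisotropic) :
    ∃ (F : Type u) (_ : Field F) (_ : Algebra L F) (x y t : F), (QuadraticMap.weightedSumSquares F
      (genericForm (algebraMap L F a) (algebraMap L F b) x y t)).Anisotropic := by
  have halg (c : L) : algebraMap L (RatFunc (RatFunc (RatFunc L))) c = .C (.C (.C c)) := rfl
  have h4 := anisotropic_sumElim_ratFunc hab (anisotropic_const (ι := Unit) (one_ne_zero (α := L)))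
  have hX := anisotropic_one_neg_ratFunc_X L
  have h6 := anisotropic_sumElim_ratFunc h4 hX
  have h10 := anisotropic_sumElim_ratFunc h6 (anisotropic_sumElim_ratFunc hX (anisotropic_neg hX))
  refine ⟨RatFunc (RatFunc (RatFunc L)), inferInstance, inferInstance,
    algebraMap (RatFunc (RatFunc L)) _ (algebraMap (RatFunc L) _ .X),
    algebraMap (RatFunc (RatFunc L)) _ .X, .X, ?_⟩
  convert anisotropic_comp_injective h10 (σ := ![.inl (.inl (.inr ())), .inl (.inr 0),
    .inr (.inl 0), .inl (.inr 1), .inr (.inl 1), .inr (.inr 0), .inl (.inl (.inl 2)),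
    .inr (.inr 1), .inl (.inl (.inl 1)), .inl (.inl (.inl 0))]) (by decide) using 2
  ext i
  fin_cases i <;> simp [genericForm, halg] <;> ring

section GramMatrix

variable {K : Type*} [Field K] {n : ℕ}

theorem gramMatrix_eq_toMatrix' [Invertible (2 : K)] (q : QuadraticForm K (Fin n → K)) :
    gramMatrix q = q.toMatrix' := by
  ext i j
  rw [QuadraticForm.toMatrix', LinearMap.toMatrix₂'_apply, QuadraticMap.associated_apply]
  simp [gramMatrix, QuadraticMap.polar, div_eq_inv_mul]

theorem gramMatrix_weightedSumSquares (h2 : (2 : K) ≠ 0) (w : Fin n → K) :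
    gramMatrix (QuadraticMap.weightedSumSquares K w) = Matrix.diagonal w := by
  ext i j
  rw [gramMatrix, Matrix.of_apply, QuadraticMap.polar, QuadraticMap.weightedSumSquares_apply,
    QuadraticMap.weightedSumSquares_apply, QuadraticMap.weightedSumSquares_apply,
    ← Finset.sum_sub_distrib, ← Finset.sum_sub_distrib, Finset.sum_eq_single i]
  · obtain rfl | hij := eq_or_ne i j
    · simp only [Pi.add_apply, Pi.single_eq_same, smul_eq_mul, Matrix.diagonal_apply_eq]
      field_simp
      ring
    · simp [hij]
  · intro l _ hl
    simp [hl]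
  · simp

theorem det_gramMatrix_weightedSumSquares (h2 : (2 : K) ≠ 0) (w : Fin n → K) :
    (gramMatrix (QuadraticMap.weightedSumSquares K w)).det = ∏ i, w i := by
  rw [gramMatrix_weightedSumSquares h2, Matrix.det_diagonal]

theorem exists_isometryEquiv_weightedSumSquares (h2 : (2 : K) ≠ 0)
    {q : QuadraticForm K (Fin n → K)} (hq : (gramMatrix q).det ≠ 0) :
    ∃ (w : Fin n → K) (s : K), (∀ i, w i ≠ 0) ∧ (gramMatrix q).det = s ^ 2 * ∏ i, w i ∧
      Nonempty (q.IsometryEquiv (QuadraticMap.weightedSumSquares K w)) := by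
  let _ : Invertible (2 : K) := invertibleOfNonzero h2
  obtain ⟨w, ⟨e⟩⟩ : ∃ w : Fin n → K, q.Equivalent (QuadraticMap.weightedSumSquares K w) := by
    have hdiag := QuadraticForm.equivalent_weightedSumSquares q
    rwa [finrank_fin_fun] at hdiag
  have hcomp : q = (QuadraticMap.weightedSumSquares K w).comp e.toLinearEquiv.toLinearMap :=
    QuadraticMap.ext fun v => (e.map_app v).symm
  let s := (LinearMap.toMatrix' e.toLinearEquiv.toLinearMap).det
  have hdet : (gramMatrix q).det = s ^ 2 * ∏ i, w i := by
    rw [← det_gramMatrix_weightedSumSquares h2, gramMatrix_eq_toMatrix', gramMatrix_eq_toMatrix',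
      sq, hcomp]
    exact QuadraticForm.discr'_comp _
  refine ⟨w, s, ?_, hdet, ⟨e⟩⟩
  rw [hdet] at hq
  exact fun i => Finset.prod_ne_zero_iff.1 (right_ne_zero_of_mul hq) i (Finset.mem_univ i)

end GramMatrix

theorem signedDisc_mul_signedDisc {K : Type*} [CommRing K] {n : ℕ} (w v : Fin n → K) :
    signedDisc w * signedDisc v = (∏ i, w i) * ∏ i, v i := by
  rw [signedDisc, signedDisc, mul_mul_mul_comm, ← mul_pow, neg_one_mul, neg_neg, one_pow, one_mul]

/-- The Clifford algebra of a base-changed form, in a diagonalization of the original form. -/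
def cliffordAlgebraBaseChangeEquiv {K : Type*} [Field K] (L : Type*) [Field L] [Algebra K L]
    (h2 : (2 : K) ≠ 0) {V ι : Type*} [AddCommGroup V] [Module K V] [Fintype ι] [DecidableEq ι]
    {q : QuadraticForm K V} {w : ι → K}
    (e : q.IsometryEquiv (QuadraticMap.weightedSumSquares K w)) :
    CliffordAlgebra (qfBaseChange L h2 q) ≃ₐ[L] DiagClifford (algebraMap K L ∘ w) :=
  letI : Invertible (2 : K) := invertibleOfNonzero h2
  have f : CliffordAlgebra (qfBaseChange L h2 q) ≃ₐ[L] L ⊗[K] CliffordAlgebra q :=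
    CliffordAlgebra.equivBaseChange L q
  (f.trans (Algebra.TensorProduct.congr .refl (CliffordAlgebra.equivOfIsometry e))).trans
    (DiagClifford.baseChangeEquiv L w)

theorem DiagClifford.brauerEquivalent_quaternionAlgebra_baseChange {K : Type*} [Field K]
    (L : Type*) [Field L] [Algebra K L] {ι : Type*} [Fintype ι] {w : ι → K}
    {a b : K} (h : BrauerEquivalent K (DiagClifford w) ℍ[K,a,0,b]) :
    BrauerEquivalent L (DiagClifford (algebraMap K L ∘ w))
      ℍ[L,algebraMap K L a,0,algebraMap K L b] := by
  classical exact (BrauerEquivalent.of_algEquiv (baseChangeEquiv L w).symm).trans <|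
    (h.baseChange L).trans <| .of_algEquiv (quaternionBaseChangeEquiv L a b)

theorem exists_anisotropic_of_not_isSplit_evenCore {K : Type u} [Field K] (h2 : (2 : K) ≠ 0)
    {w : Fin 10 → K} (hw : ∀ i, w i ≠ 0) (hsq : IsSquare (signedDisc w))
    (hns : ¬IsSplit K (DiagClifford (evenCore w))) :
    ∃ (F : Type u) (_ : Field F) (_ : Algebra K F) (w' : Fin 10 → F),
      (QuadraticMap.weightedSumSquares F w').Anisotropic ∧ IsSquare (signedDisc w') ∧
        BrauerEquivalent F (DiagClifford w') (DiagClifford (algebraMap K F ∘ w)) := by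
  obtain ⟨L, _, _, a, b, hab, hquat⟩ :=
    DiagClifford.exists_brauerEquivalent_quaternionAlgebra h2 (m := 4) (evenCore_ne_zero hw) hns
  obtain ⟨F, _, _, x, y, t, haniso⟩ := exists_anisotropic_genericForm hab
  have h2L : (2 : L) ≠ 0 := two_ne_zero_of_algebra h2
  have h2F : (2 : F) ≠ 0 := two_ne_zero_of_algebra h2L
  let _ : Algebra K F := ((algebraMap L F).comp (algebraMap K L)).toAlgebra
  have ha : a ≠ 0 := neg_ne_zero.1 (ne_zero_of_anisotropic hab 0)
  have hb : b ≠ 0 := neg_ne_zero.1 (ne_zero_of_anisotropic hab 1)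
  have hgeneric := brauerEquivalent_genericForm h2F ((map_ne_zero (algebraMap L F)).2 ha)
    ((map_ne_zero (algebraMap L F)).2 hb) (ne_zero_of_anisotropic haniso 0)
    (ne_zero_of_anisotropic haniso 1) (ne_zero_of_anisotropic haniso 2)
  have hcore : BrauerEquivalent F (DiagClifford (algebraMap K F ∘ evenCore w))
      ℍ[F,algebraMap L F a,0,algebraMap L F b] :=
    DiagClifford.brauerEquivalent_quaternionAlgebra_baseChange F hquat
  have hsqF : IsSquare (signedDisc (algebraMap K F ∘ w)) :=
    map_signedDisc (algebraMap K F) w ▸ hsq.map (algebraMap K F)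
  have hw_core := DiagClifford.brauerEquivalent_evenCore h2F (m := 4)
    (algebraMap_comp_ne_zero hw) hsqF
  rw [evenCore_map] at hw_core
  exact ⟨F, inferInstance, inferInstance, _, haniso, isSquare_signedDisc_genericForm ..,
    hgeneric.trans (hw_core.trans hcore).symm⟩

theorem exists_anisotropic_of_even_not_split {K : Type u} [Field K] (h2 : (2 : K) ≠ 0)
    {q : QuadraticForm K (Fin 10 → K)} {w : Fin 10 → K} (hw : ∀ i, w i ≠ 0)
    (e : q.IsometryEquiv (QuadraticMap.weightedSumSquares K w))
    (hq : ¬Nonempty (CliffordAlgebra.even q ≃ₐ[Subring.center (CliffordAlgebra.even q)]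
      Matrix (Fin 16) (Fin 16) (Subring.center (CliffordAlgebra.even q)))) :
    ∃ (F : Type u) (_ : Field F) (_ : Algebra K F) (w' : Fin 10 → F),
      (QuadraticMap.weightedSumSquares F w').Anisotropic ∧
        IsSquare (signedDisc w' * signedDisc (algebraMap K F ∘ w)) ∧
        BrauerEquivalent F (DiagClifford w') (DiagClifford (algebraMap K F ∘ w)) := by
  obtain ⟨M, _, _, hsq, hns⟩ :=
    DiagClifford.exists_isSquare_not_isSplit_evenCore (m := 4) hw e hq
  obtain ⟨F, _, _, w', haniso, hsq', hBrauer⟩ := exists_anisotropic_of_not_isSplit_evenCore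
    (two_ne_zero_of_algebra h2) (algebraMap_comp_ne_zero hw) hsq hns
  let _ : Algebra K F := ((algebraMap M F).comp (algebraMap K M)).toAlgebra
  refine ⟨F, inferInstance, inferInstance, w', haniso, hsq'.mul ?_, hBrauer⟩
  exact map_signedDisc (algebraMap M F) (algebraMap K M ∘ w) ▸ hsq.map (algebraMap M F)

end

theorem statement5 {k : Type u} [Field k] (h2 : (2 : k) ≠ 0)
    (q : QuadraticForm k (Fin 10 → k))
    -- `q` is nondegenerate
    (hq : (gramMatrix q).det ≠ 0)
    -- the even Clifford algebra `C₀(q)` is not split over its center `Z`: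
    -- it is not isomorphic over `Z` to the 16×16 matrix algebra `M₁₆(Z)`
    (hC₀ : ¬ Nonempty
      ((↥(CliffordAlgebra.even q)) ≃ₐ[↥(Subring.center ↥(CliffordAlgebra.even q))]
        Matrix (Fin 16) (Fin 16) ↥(Subring.center ↥(CliffordAlgebra.even q)))) :
    ∃ (K : Type u) (_ : Field K) (_ : Algebra k K) (q' : QuadraticForm K (Fin 10 → K)),
      -- `q'` is anisotropic
      q'.Anisotropic ∧
      -- `q'` is nondegenerate
      (gramMatrix q').det ≠ 0 ∧
      -- `q'` has the same discriminant as `q_K`: `det(q')·det(q)` is a square in `K`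
      IsSquare ((gramMatrix q').det * algebraMap k K (gramMatrix q).det) ∧
      -- `q'` has the same Witt invariant as `q_K`: the Clifford algebras `C(q')` and
      -- `C(q_K)` are Brauer equivalent
      ∃ r s : ℕ, 0 < r ∧ 0 < s ∧
        Nonempty (Matrix (Fin r) (Fin r) (CliffordAlgebra q') ≃ₐ[K]
          Matrix (Fin s) (Fin s) (CliffordAlgebra (qfBaseChange K h2 q))) := by
  obtain ⟨w, s, hw, hdet, ⟨e⟩⟩ := exists_isometryEquiv_weightedSumSquares h2 hq
  obtain ⟨K, _, _, w', haniso, hdisc, hWitt⟩ := exists_anisotropic_of_even_not_split h2 hw e hC₀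
  have hdet' := det_gramMatrix_weightedSumSquares (two_ne_zero_of_algebra h2) w'
  refine ⟨K, inferInstance, inferInstance, QuadraticMap.weightedSumSquares K w', haniso, ?_, ?_,
    hWitt.trans (.of_algEquiv (cliffordAlgebraBaseChangeEquiv K h2 e).symm)⟩
  · rw [hdet']
    exact Finset.prod_ne_zero_iff.2 fun i _ => ne_zero_of_anisotropic haniso i
  · rw [hdet', hdet, map_mul, map_pow, map_prod, mul_left_comm]
    exact (IsSquare.sq _).mul (signedDisc_mul_signedDisc w' _ ▸ hdisc)
end
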